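/- Let X be a geodesic metric space with basepoint o, let G be a countable group acting on X by isometries, and let g ∈ G be a WPD contracting isometry. Let μ be a probability measure on G with H(μ) < ∞ such that μ^{*n}(g^m) > 0 for some integers n, m > 0, and let (μ_i)_{i>0} be probability measures on G that converge simply to μ (μ_i(h) → μ(h) for every h ∈ G) and satisfy H(μ_i) → H(μ) (in particular H(μ_i) < ∞ for all large i). Then the asymptotic entropies converge: h(μ_i) → h(μ). -/

import Mathlib

open Filter Topology Pointwise

/-- `f` parametrizes a geodesic from `x` to `y` by arclength on `[0, dist x y]`. -/
def IsGeodesicSegment {X : Type*} [MetricSpace X] (f : ℝ → X) (x y : X) : Prop :=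
  f 0 = x ∧ f (dist x y) = y ∧
    ∀ s ∈ Set.Icc (0 : ℝ) (dist x y), ∀ t ∈ Set.Icc (0 : ℝ) (dist x y),
      dist (f s) (f t) = |s - t|

/-- `X` is a geodesic metric space: any two points are joined by a geodesic. -/
def IsGeodesicSpace (X : Type*) [MetricSpace X] : Prop :=
  ∀ x y : X, ∃ f : ℝ → X, IsGeodesicSegment f x y

/-- Nearest-point projection of `x` to the set `A`. -/
def projSet {X : Type*} [MetricSpace X] (A : Set X) (x : X) : Set X :=
  {a ∈ A | dist x a = Metric.infDist x A}

/-- Nearest-point projection of the set `B` to the set `A`. -/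
def projSetOf {X : Type*} [MetricSpace X] (A B : Set X) : Set X :=
  ⋃ x ∈ B, projSet A x

/-- A `K`-quasigeodesic indexed by `ℤ`. -/
def IsQuasigeodesicZ {X : Type*} [MetricSpace X] (K : ℝ) (γ : ℤ → X) : Prop :=
  ∀ s t : ℤ, |(s : ℝ) - (t : ℝ)| / K - K ≤ dist (γ s) (γ t) ∧
    dist (γ s) (γ t) ≤ K * |(s : ℝ) - (t : ℝ)| + K

/-- A `K`-contracting axis indexed by `ℤ`: a `K`-quasigeodesic such that every geodesic
staying `K`-far from it has nearest-point projection of diameter `< K`. -/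
def IsContractingAxisZ {X : Type*} [MetricSpace X] (K : ℝ) (γ : ℤ → X) : Prop :=
  IsQuasigeodesicZ K γ ∧
    ∀ (f : ℝ → X) (x y : X), IsGeodesicSegment f x y →
      (∀ t ∈ Set.Icc (0 : ℝ) (dist x y), K ≤ Metric.infDist (f t) (Set.range γ)) →
      EMetric.diam (projSetOf (Set.range γ) (f '' Set.Icc (0 : ℝ) (dist x y)))
        < ENNReal.ofReal K

/-- The `ℤ`-orbit of the basepoint `o` under powers of `g`. -/
def zorbit {G X : Type*} [Group G] [MetricSpace X] [MulAction G X] (o : X) (g : G) : Set X :=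
  Set.range fun i : ℤ => g ^ i • o

/-- `g` is a contracting isometry: its orbit map `i ↦ g^i • o` is a `K`-contracting axis
for some `K > 1`. -/
def IsContractingIsom {G X : Type*} [Group G] [MetricSpace X] [MulAction G X]
    (o : X) (g : G) : Prop :=
  ∃ K : ℝ, 1 < K ∧ IsContractingAxisZ K fun i : ℤ => g ^ i • o

/-- `g` is WPD: for each `K ≥ 0` there is `N > 0` so that the coarse stabilizer of
`(o, g^N o)` is finite. -/
def IsWPD {G X : Type*} [Group G] [MetricSpace X] [MulAction G X]
    (o : X) (g : G) : Prop :=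
  ∀ K : ℝ, 0 ≤ K → ∃ N : ℕ, 0 < N ∧
    {h : G | dist o (h • o) ≤ K ∧ dist ((g ^ N) • o) ((h * g ^ N) • o) ≤ K}.Finite

/-- `μ` is a probability measure on the countable group `G`. -/
def IsProbMeasure {G : Type*} (μ : G → ℝ) : Prop :=
  (∀ g, 0 ≤ μ g) ∧ Summable μ ∧ ∑' g, μ g = 1

/-- Convolution of two (signed) measures on `G`. -/
noncomputable def conv {G : Type*} [Group G] (μ ν : G → ℝ) : G → ℝ :=
  fun g => ∑' h : G, μ h * ν (h⁻¹ * g)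

/-- `n`-fold convolution power of `μ`, with `convPow μ 0` the point mass at the identity. -/
noncomputable def convPow {G : Type*} [Group G] (μ : G → ℝ) : ℕ → G → ℝ
  | 0 => ({1} : Set G).indicator fun _ => (1 : ℝ)
  | n + 1 => conv μ (convPow μ n)

/-- Shannon entropy `H(μ) = −∑_g μ(g) log μ(g)`. -/
noncomputable def entropyOf {G : Type*} (μ : G → ℝ) : ℝ :=
  ∑' g : G, -(μ g * Real.log (μ g))

/-- `μ` has finite one-step entropy. -/
def HasFiniteEntropy {G : Type*} (μ : G → ℝ) : Prop :=
  Summable fun g : G => μ g * Real.log (μ g)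

/-- The asymptotic entropy `h(μ) = lim_n H(μ^{*n})/n`; by subadditivity of
`n ↦ H(μ^{*n})` (Fekete), the limit equals the infimum. -/
noncomputable def asympEntropy {G : Type*} [Group G] (μ : G → ℝ) : ℝ :=
  ⨅ n : ℕ, entropyOf (convPow μ (n + 1)) / (n + 1 : ℝ)

/-!
Since `h(μ) = inf H(μ^{*n}) / n` and each `H(μ^{*n})` is continuous, only lower semicontinuity has
to be proved: `h(μᵢ)` must not drop below `H(μᵢ^{*n}) / n - ε` for some `n` and all large `i`.

Replacing `μ` by a convolution power, assume `μ(g ^ m) > 0`. If `μ` is carried by the elementary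
closure of `g`, which is virtually cyclic, then `h(μ) = 0`. Otherwise `μ` charges some `a` outside
the closure, and in a random word one finds, with large probability and within bounded time,
products of `a` and long powers of `g` pointing in many different directions. Such a product, used
as a marker between two independent blocks `u` and `v`, forces by the contracting property every
geodesic from `o` to `u s v o` to pass near it, unless the marker is aligned with `u` or `v`, which
is improbable. Then `‖u s v‖` is `‖u‖ + ‖v‖` up to a constant, and by WPD the element `u s v`, the
marker `s` and the approximate value of `‖u‖` leave only boundedly many possibilities for `u`.
Hence a product of `k` such blocks with an arbitrary independent element determines the blocks up
to a code whose length is a small proportion of the total entropy: the markers, the few letters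
next to badly placed markers and the letters outside a finite set, which are rare uniformly in `i`
because `H(μᵢ) → H(μ)`. The entropy of blocks is therefore additive up to a small error, uniformly
in `i` and in the other factor.
-/

namespace EntropyContinuity

open scoped ENNReal

/-! ### Expectation, entropy and convolution of discrete laws -/

section Laws

variable {α β γ : Type*}

/-- The expectation of `f` under the law `p`. -/
noncomputable def expect (p : PMF α) (f : α → ℝ≥0∞) : ℝ≥0∞ := ∑' x, p x * f x

lemma expect_mono {p : PMF α} {f g : α → ℝ≥0∞} (h : ∀ x, f x ≤ g x) : expect p f ≤ expect p g :=
  ENNReal.tsum_le_tsum fun x => mul_le_mul_right (h x) _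

@[simp]
lemma expect_const (p : PMF α) (c : ℝ≥0∞) : expect p (fun _ => c) = c := by
  rw [expect, ENNReal.tsum_mul_right, p.tsum_coe, one_mul]

lemma expect_add (p : PMF α) (f g : α → ℝ≥0∞) :
    expect p (fun x => f x + g x) = expect p f + expect p g := by
  simp only [expect, mul_add, ENNReal.tsum_add]

lemma expect_const_mul (p : PMF α) (c : ℝ≥0∞) (f : α → ℝ≥0∞) :
    expect p (fun x => c * f x) = c * expect p f := by
  simp only [expect, mul_left_comm _ c, ENNReal.tsum_mul_left]

lemma expect_tsum (p : PMF α) (f : β → α → ℝ≥0∞) :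
    expect p (fun x => ∑' i, f i x) = ∑' i, expect p (f i) := by
  simp only [expect, ← ENNReal.tsum_mul_left]
  exact ENNReal.tsum_comm

lemma expect_finsetSum (p : PMF α) (s : Finset β) (f : β → α → ℝ≥0∞) :
    expect p (fun x => ∑ i ∈ s, f i x) = ∑ i ∈ s, expect p (f i) := by
  simp only [expect, Finset.mul_sum]
  exact Summable.tsum_finsetSum fun _ _ => ENNReal.summable

@[simp]
lemma expect_pure (x : α) (f : α → ℝ≥0∞) : expect (PMF.pure x) f = f x := by
  classical
  rw [expect, tsum_eq_single x fun y hy => by simp [PMF.pure_apply, hy]]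
  simp

@[simp]
lemma expect_bind (p : PMF α) (q : α → PMF β) (f : β → ℝ≥0∞) :
    expect (p.bind q) f = expect p fun x => expect (q x) f := by
  simp only [expect, PMF.bind_apply, ← ENNReal.tsum_mul_right, ← ENNReal.tsum_mul_left, mul_assoc]
  exact ENNReal.tsum_comm

@[simp]
lemma expect_map (g : α → β) (p : PMF α) (f : β → ℝ≥0∞) :
    expect (p.map g) f = expect p fun x => f (g x) := by
  rw [PMF.map, expect_bind]
  simp

lemma expect_indicator (p : PMF α) (s : Set α) :
    expect p (s.indicator 1) = p.toOuterMeasure s := by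
  rw [PMF.toOuterMeasure_apply, expect]
  refine tsum_congr fun x => ?_
  by_cases hx : x ∈ s <;> simp [hx]

lemma toOuterMeasure_le_one (p : PMF α) (s : Set α) : p.toOuterMeasure s ≤ 1 := by
  rw [← expect_indicator, ← expect_const p 1]
  exact expect_mono fun x => Set.indicator_le_self s 1 x

/-- The product law of two independent variables with laws `p` and `q`. -/
noncomputable def prodLaw (p : PMF α) (q : PMF β) : PMF (α × β) := p.bind fun x => q.map (Prod.mk x)

lemma prodLaw_apply (p : PMF α) (q : PMF β) (x : α × β) : prodLaw p q x = p x.1 * q x.2 := by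
  classical
  obtain ⟨a, b⟩ := x
  simp only [prodLaw, PMF.bind_apply, PMF.map_apply, Prod.mk.injEq]
  rw [tsum_eq_single a fun y hy => by simp [hy.symm]]
  simp

lemma expect_prodLaw (p : PMF α) (q : PMF β) (f : α × β → ℝ≥0∞) :
    expect (prodLaw p q) f = expect p fun x => expect q fun y => f (x, y) := by
  simp [prodLaw]

section Surprisal

/-- The surprisal `-log y` of an event of probability `y`; it is `⊤` at `y = 0` and is truncated
to `0` for `1 ≤ y`. -/
noncomputable def surprisal (y : ℝ≥0∞) : ℝ≥0∞ := (-ENNReal.log y).toENNReal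

lemma surprisal_antitone : Antitone surprisal := fun _ _ h =>
  EReal.toENNReal_le_toENNReal (EReal.neg_le_neg_iff.2 (ENNReal.log_monotone h))

lemma continuous_surprisal : Continuous surprisal :=
  EReal.continuous_toENNReal.comp (continuous_neg.comp ENNReal.continuous_log)

@[simp] lemma surprisal_zero : surprisal 0 = ⊤ := by simp [surprisal]

@[simp] lemma surprisal_one : surprisal 1 = 0 := by simp [surprisal]

lemma surprisal_eq_ofReal {y : ℝ≥0∞} (h0 : y ≠ 0) (ht : y ≠ ⊤) :
    surprisal y = ENNReal.ofReal (-Real.log y.toReal) := by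
  rw [surprisal, ENNReal.log_pos_real h0 ht, ← EReal.coe_neg, EReal.toENNReal_of_ne_top (by simp),
    EReal.toReal_coe]

lemma surprisal_ne_top {y : ℝ≥0∞} (h0 : y ≠ 0) : surprisal y ≠ ⊤ := by
  by_cases ht : y = ⊤
  · simp [ht, surprisal]
  · simp [surprisal_eq_ofReal h0 ht]

lemma surprisal_inv_natCast {n : ℕ} (hn : n ≠ 0) :
    surprisal (n : ℝ≥0∞)⁻¹ = ENNReal.ofReal (Real.log n) := by
  rw [surprisal_eq_ofReal (by simp) (by simpa)]
  simp

lemma surprisal_mul {x y : ℝ≥0∞} (hx : x ≤ 1) (hy : y ≤ 1) :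
    surprisal (x * y) = surprisal x + surprisal y := by
  have nonneg_neg_log {z : ℝ≥0∞} (hz : z ≤ 1) : 0 ≤ -ENNReal.log z := by
    simpa [EReal.le_neg] using ENNReal.log_monotone hz
  have log_ne_top {z : ℝ≥0∞} (hz : z ≤ 1) : ENNReal.log z ≠ ⊤ := by
    simpa using ne_top_of_le_ne_top ENNReal.one_ne_top hz
  rw [surprisal, ENNReal.log_mul_add, EReal.neg_add (.inr (log_ne_top hy)) (.inl (log_ne_top hx)),
    sub_eq_add_neg, EReal.toENNReal_add (nonneg_neg_log hx) (nonneg_neg_log hy)]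
  rfl

lemma surprisal_prod {s : Finset α} {f : α → ℝ≥0∞} (hf : ∀ i ∈ s, f i ≤ 1) :
    surprisal (∏ i ∈ s, f i) = ∑ i ∈ s, surprisal (f i) := by
  classical
  induction s using Finset.induction_on with
  | empty => simp
  | insert a s ha ih =>
    have hs : ∀ i ∈ s, f i ≤ 1 := fun i hi => hf i (Finset.mem_insert_of_mem hi)
    rw [Finset.prod_insert ha, Finset.sum_insert ha,
      surprisal_mul (hf a (Finset.mem_insert_self a s)) (Finset.prod_le_one' hs), ih hs]

/-- A rearrangement of `log (y / x) ≤ y / x - 1`. -/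
lemma mul_surprisal_add_self_le {x y : ℝ≥0∞} (hx : x ≤ 1) (hy : y ≤ 1) :
    x * surprisal x + x ≤ x * surprisal y + y := by
  rcases eq_or_ne x 0 with rfl | hx0
  · simp
  rcases eq_or_ne y 0 with rfl | hy0
  · simp [hx0]
  lift x to NNReal using ne_top_of_le_ne_top ENNReal.one_ne_top hx
  lift y to NNReal using ne_top_of_le_ne_top ENNReal.one_ne_top hy
  have hx' : (0 : ℝ) < x := NNReal.coe_pos.2 (pos_iff_ne_zero.2 (by simpa using hx0))
  have hy' : (0 : ℝ) < y := NNReal.coe_pos.2 (pos_iff_ne_zero.2 (by simpa using hy0))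
  have hlx : Real.log x ≤ 0 := Real.log_nonpos hx'.le (by exact_mod_cast hx)
  have hly : Real.log y ≤ 0 := Real.log_nonpos hy'.le (by exact_mod_cast hy)
  have key : (x : ℝ) * -Real.log x + x ≤ x * -Real.log y + y := by
    have := mul_le_mul_of_nonneg_left (Real.log_le_sub_one_of_pos (div_pos hy' hx')) hx'.le
    rw [Real.log_div hy'.ne' hx'.ne', mul_sub, mul_sub, mul_div_cancel₀ _ hx'.ne'] at this
    linarith
  rw [surprisal_eq_ofReal hx0 ENNReal.coe_ne_top, surprisal_eq_ofReal hy0 ENNReal.coe_ne_top]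
  have := ENNReal.ofReal_le_ofReal key
  rwa [ENNReal.ofReal_add (by nlinarith) hx'.le, ENNReal.ofReal_add (by nlinarith) hy'.le,
    ENNReal.ofReal_mul hx'.le, ENNReal.ofReal_mul hx'.le, ENNReal.ofReal_coe_nnreal,
    ENNReal.ofReal_coe_nnreal] at this

end Surprisal

section Entropy

/-- The Shannon entropy of a discrete law, as an extended nonnegative real. -/
noncomputable def entropy (p : PMF α) : ℝ≥0∞ := expect p fun x => surprisal (p x)

@[simp]
lemma entropy_pure (x : α) : entropy (PMF.pure x) = 0 := by simp [entropy]

lemma entropy_le_expect_surprisal (p : PMF α) {q : α → ℝ≥0∞} (hq : ∑' x, q x ≤ 1) :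
    entropy p ≤ expect p fun x => surprisal (q x) := by
  have h : ∑' x, (p x * surprisal (p x) + p x) ≤ ∑' x, (p x * surprisal (q x) + q x) :=
    ENNReal.tsum_le_tsum fun x =>
      mul_surprisal_add_self_le (p.coe_le_one x) ((ENNReal.le_tsum x).trans hq)
  rw [ENNReal.tsum_add, ENNReal.tsum_add, p.tsum_coe] at h
  exact (ENNReal.add_le_add_iff_right ENNReal.one_ne_top).1 (h.trans (add_le_add_right hq _))

lemma entropy_prodLaw (p : PMF α) (q : PMF β) : entropy (prodLaw p q) = entropy p + entropy q := by
  simp only [entropy, expect_prodLaw, prodLaw_apply,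
    surprisal_mul (p.coe_le_one _) (q.coe_le_one _), expect_add, expect_const]

lemma apply_le_map_apply (p : PMF α) (f : α → β) (x : α) : p x ≤ p.map f (f x) := by
  classical
  rw [PMF.map_apply]
  exact (if_pos rfl).ge.trans (ENNReal.le_tsum x)

lemma entropy_map_le (p : PMF α) (f : α → β) : entropy (p.map f) ≤ entropy p := by
  rw [entropy, expect_map]
  exact expect_mono fun x => surprisal_antitone (apply_le_map_apply p f x)

/-- If `x` can be decoded from `f x` together with a word of length `surprisal (κ x)`, the entropy
lost under `f` is at most the mean length of that word. -/
lemma entropy_le_entropy_map_add (p : PMF α) (f : α → β) {κ : α → ℝ≥0∞}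
    (hκ : ∀ y, ∑' x : f ⁻¹' {y}, κ x ≤ 1) :
    entropy p ≤ entropy (p.map f) + expect p fun x => surprisal (κ x) := by
  have hκ_one (x : α) : κ x ≤ 1 :=
    (ENNReal.le_tsum (⟨x, rfl⟩ : f ⁻¹' {f x})).trans (hκ (f x))
  have hsum : ∑' x, p.map f (f x) * κ x ≤ 1 := by
    rw [← ENNReal.tsum_fiberwise _ f, ← (p.map f).tsum_coe]
    refine ENNReal.tsum_le_tsum fun y => ?_
    calc ∑' x : f ⁻¹' {y}, p.map f (f x) * κ x = p.map f y * ∑' x : f ⁻¹' {y}, κ x := by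
          rw [← ENNReal.tsum_mul_left]
          exact tsum_congr fun x => by rw [show f x = y from x.2]
      _ ≤ p.map f y := mul_le_of_le_one_right' (hκ y)
  refine (entropy_le_expect_surprisal p hsum).trans_eq ?_
  simp only [surprisal_mul ((p.map f).coe_le_one _) (hκ_one _), expect_add, entropy, expect_map]

end Entropy

section Convolution

/-- Laws on a monoid form a monoid under convolution: `p * q` is the law of the product of
independent variables with laws `p` and `q`. -/
noncomputable instance convolutionMonoid [Monoid α] : Monoid (PMF α) where
  one := PMF.pure 1
  mul p q := p.bind fun x => q.map (x * ·)
  one_mul p := by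
    change (PMF.pure 1).bind (fun x => p.map (x * ·)) = p
    simp only [PMF.pure_bind, one_mul]
    exact p.map_id
  mul_one p := by
    change p.bind (fun x => (PMF.pure 1).map (x * ·)) = p
    simp only [PMF.pure_map, mul_one, PMF.bind_pure]
  mul_assoc p q r := by
    change (p.bind fun x => q.map (x * ·)).bind (fun y => r.map (y * ·)) =
      p.bind fun x => (q.bind fun y => r.map (y * ·)).map (x * ·)
    simp only [PMF.bind_bind, PMF.bind_map, PMF.map_bind, PMF.map_comp, Function.comp_def,
      mul_assoc]

variable [Monoid α]

lemma one_def : (1 : PMF α) = PMF.pure 1 := rfl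

lemma mul_def (p q : PMF α) : p * q = p.bind fun x => q.map (x * ·) := rfl

lemma mul_eq_map_prodLaw (p q : PMF α) : p * q = (prodLaw p q).map fun x => x.1 * x.2 := by
  simp only [mul_def, prodLaw, PMF.map_bind, PMF.map_comp, Function.comp_def]

lemma expect_mul (p q : PMF α) (f : α → ℝ≥0∞) :
    expect (p * q) f = expect p fun x => expect q fun y => f (x * y) := by
  simp [mul_def]

lemma entropy_mul_le (p q : PMF α) : entropy (p * q) ≤ entropy p + entropy q := by
  rw [mul_eq_map_prodLaw, ← entropy_prodLaw]
  exact entropy_map_le _ _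

lemma entropy_pow_le (p : PMF α) (n : ℕ) : entropy (p ^ n) ≤ n * entropy p := by
  induction n with
  | zero => simp [one_def]
  | succ n ih =>
    calc entropy (p ^ (n + 1)) ≤ entropy (p ^ n) + entropy p := by
          rw [pow_succ]; exact entropy_mul_le _ _
      _ ≤ n * entropy p + entropy p := add_le_add_left ih _
      _ = (n + 1 : ℕ) * entropy p := by push_cast; ring

end Convolution

lemma entropy_add_entropy_le {G : Type*} [Group G] (p q : PMF G) {κ : G → G → ℝ≥0∞}
    (hκ : ∀ w, ∑' u, κ u w ≤ 1) :
    entropy p + entropy q ≤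
      entropy (p * q) + expect p fun u => expect q fun v => surprisal (κ u (u * v)) := by
  rw [← entropy_prodLaw, mul_eq_map_prodLaw,
    ← expect_prodLaw p q fun x => surprisal (κ x.1 (x.1 * x.2))]
  refine entropy_le_entropy_map_add _ _ fun w => ?_
  let e : ((fun x : G × G => x.1 * x.2) ⁻¹' {w}) ≃ G :=
    { toFun x := x.1.1
      invFun u := ⟨(u, u⁻¹ * w), mul_inv_cancel_left u w⟩
      left_inv := fun ⟨⟨u, v⟩, h⟩ => by
        obtain rfl : u * v = w := h
        simp
      right_inv _ := rfl }
  calc ∑' x : (fun x : G × G => x.1 * x.2) ⁻¹' {w}, κ x.1.1 (x.1.1 * x.1.2)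
      = ∑' x, κ (e x) w := tsum_congr fun x => by rw [show x.1.1 * x.1.2 = w from x.2]; rfl
    _ = ∑' u, κ u w := e.tsum_eq fun u => κ u w
    _ ≤ 1 := hκ w

end Laws

/-! ### Simple convergence and continuity of entropy -/

section Liminf

variable {α ι : Type*} {l : Filter ι}

lemma tsum_le_liminf_tsum [l.IsCountablyGenerated] {F : ι → α → ℝ≥0∞} {f : α → ℝ≥0∞}
    (h : ∀ x, f x ≤ liminf (fun i => F i x) l) :
    ∑' x, f x ≤ liminf (fun i => ∑' x, F i x) l := by
  let _ : MeasurableSpace α := ⊤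
  have fatou := MeasureTheory.lintegral_liminf_le (μ := MeasureTheory.Measure.count) (u := l)
    (f := F) fun _ => measurable_from_top
  simp only [MeasureTheory.lintegral_count] at fatou
  exact (ENNReal.tsum_le_tsum h).trans fatou

lemma eventually_le_add_of_le_liminf {a ε : ℝ≥0∞} {f : ι → ℝ≥0∞} (h : a ≤ liminf f l)
    (ha : a ≠ ⊤) (hε : ε ≠ 0) : ∀ᶠ i in l, a ≤ f i + ε := by
  rcases eq_or_ne a 0 with rfl | h0
  · simp
  filter_upwards [eventually_lt_of_lt_liminf ((ENNReal.sub_lt_self ha h0 hε).trans_le h)] with i hi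
  exact tsub_le_iff_right.1 hi.le

/-- If a finite limit splits into two lower semicontinuous parts, each part is continuous. -/
lemma tendsto_of_le_liminf_of_tendsto_add {E C : ι → ℝ≥0∞} {e c : ℝ≥0∞} (hE : e ≤ liminf E l)
    (hC : c ≤ liminf C l) (hadd : Tendsto (fun i => E i + C i) l (𝓝 (e + c)))
    (hfin : e + c ≠ ⊤) : Tendsto E l (𝓝 e) := by
  obtain ⟨he, hc⟩ := ENNReal.add_ne_top.1 hfin
  rw [ENNReal.tendsto_nhds he]
  intro ε hε
  rcases eq_or_ne ε ⊤ with rfl | hεt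
  · simp
  have hε2 : ε / 2 ≠ 0 := by simpa using hε.ne'
  filter_upwards [eventually_le_add_of_le_liminf hE he hε.ne',
    eventually_le_add_of_le_liminf hC hc hε2,
    (ENNReal.tendsto_nhds hfin).1 hadd (ε / 2) (pos_iff_ne_zero.2 hε2)] with i hEi hCi haddi
  have hlt : E i + C i ≠ ⊤ := ne_top_of_le_ne_top
    (ENNReal.add_ne_top.2 ⟨hfin, ENNReal.div_ne_top hεt two_ne_zero⟩) haddi.2
  refine ⟨tsub_le_iff_right.2 hEi, (ENNReal.add_le_add_iff_right
    (ENNReal.add_ne_top.1 hlt).2).1 ?_⟩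
  calc E i + C i ≤ e + c + ε / 2 := haddi.2
    _ ≤ e + (C i + ε / 2) + ε / 2 := by gcongr
    _ = e + (ε / 2 + ε / 2) + C i := by ring
    _ = e + ε + C i := by rw [ENNReal.add_halves]

lemma mul_surprisal_div_le_liminf {a b : ι → ℝ≥0∞} {a₀ b₀ : ℝ≥0∞} (ha : Tendsto a l (𝓝 a₀))
    (hb : Tendsto b l (𝓝 b₀)) (hat : a₀ ≠ ⊤) (hbt : b₀ ≠ ⊤) :
    a₀ * surprisal (a₀ / b₀) ≤ liminf (fun i => a i * surprisal (a i / b i)) l := by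
  rcases eq_or_ne a₀ 0 with rfl | h0
  · simp
  rcases l.eq_or_neBot with rfl | _
  · simp
  refine (Tendsto.liminf_eq ?_).ge
  exact ENNReal.Tendsto.mul ha (.inl h0)
    ((continuous_surprisal.tendsto _).comp (ENNReal.Tendsto.div ha (.inl h0) hb (.inl hbt)))
    (.inr hat)

end Liminf

section SimpleConvergence

variable {α β ι : Type*} {l : Filter ι} {p : ι → PMF α} {q : PMF α} {p' : ι → PMF β} {q' : PMF β}

/-- Simple (pointwise) convergence of the laws `p i` to the law `q` along the filter `l`. -/
def TendstoSimply (p : ι → PMF α) (l : Filter ι) (q : PMF α) : Prop :=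
  ∀ x, Tendsto (fun i => p i x) l (𝓝 (q x))

lemma tendstoSimply_const (q : PMF α) : TendstoSimply (fun _ => q) l q := fun _ =>
  tendsto_const_nhds

lemma tendstoSimply_of_le_liminf [l.IsCountablyGenerated]
    (h : ∀ x, q x ≤ liminf (fun i => p i x) l) : TendstoSimply p l q := by
  classical
  intro x
  have split_at (r : PMF α) : r x + ∑' y, (if y = x then 0 else r y) = 1 := by
    rw [← ENNReal.tsum_eq_add_tsum_ite x, r.tsum_coe]
  refine tendsto_of_le_liminf_of_tendsto_add (C := fun i => ∑' y, if y = x then 0 else p i y)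
    (c := ∑' y, if y = x then 0 else q y) (h x) (tsum_le_liminf_tsum fun y => ?_) ?_ ?_
  · by_cases hy : y = x
    · simp [hy]
    · simpa [hy] using h y
  · simp only [split_at]
    exact tendsto_const_nhds
  · simp [split_at]

lemma TendstoSimply.map [l.IsCountablyGenerated] (h : TendstoSimply p l q) (f : α → β) :
    TendstoSimply (fun i => (p i).map f) l (q.map f) := by
  classical
  rcases l.eq_or_neBot with rfl | _
  · exact fun _ => tendsto_bot
  refine tendstoSimply_of_le_liminf fun y => ?_
  simp only [PMF.map_apply]
  refine tsum_le_liminf_tsum fun x => ?_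
  by_cases hy : y = f x
  · simpa [hy] using (h x).liminf_eq.ge
  · simp [hy]

lemma TendstoSimply.prodLaw (h : TendstoSimply p l q) (h' : TendstoSimply p' l q') :
    TendstoSimply (fun i => EntropyContinuity.prodLaw (p i) (p' i)) l
      (EntropyContinuity.prodLaw q q') := by
  intro x
  simp only [prodLaw_apply]
  exact ENNReal.Tendsto.mul (h _) (.inr (q'.apply_ne_top _)) (h' _) (.inr (q.apply_ne_top _))

lemma TendstoSimply.eventually_expect_le [l.IsCountablyGenerated] (h : TendstoSimply p l q)
    {ε : ℝ≥0∞} (hε : ε ≠ 0) :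
    ∀ᶠ i in l, ∀ f : α → ℝ≥0∞, (∀ x, f x ≤ 1) → expect (p i) f ≤ expect q f + ε := by
  rcases l.eq_or_neBot with rfl | _
  · simp
  have overlap : 1 ≤ liminf (fun i => ∑' x, min (p i x) (q x)) l := by
    rw [← q.tsum_coe]
    refine tsum_le_liminf_tsum fun x => ?_
    simpa using ((h x).min (tendsto_const_nhds (x := q x))).liminf_eq.ge
  filter_upwards [eventually_le_add_of_le_liminf overlap ENNReal.one_ne_top hε] with i hi f hf
  have split_min (x : α) : min (p i x) (q x) + (p i x - min (p i x) (q x)) = p i x :=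
    add_tsub_cancel_of_le (min_le_left _ _)
  have hfin : ∑' x, min (p i x) (q x) ≠ ⊤ := ne_top_of_le_ne_top (p i).tsum_coe_ne_top
    (ENNReal.tsum_le_tsum fun x => min_le_left _ _)
  have excess : ∑' x, (p i x - min (p i x) (q x)) ≤ ε := by
    rwa [← (p i).tsum_coe, ← tsum_congr split_min, ENNReal.tsum_add,
      ENNReal.add_le_add_iff_left hfin] at hi
  calc expect (p i) f
      = ∑' x, (min (p i x) (q x) * f x + (p i x - min (p i x) (q x)) * f x) :=
        tsum_congr fun x => by rw [← add_mul, split_min]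
    _ ≤ ∑' x, (q x * f x + (p i x - min (p i x) (q x))) := by
        gcongr with x
        · exact min_le_right _ _
        · exact mul_le_of_le_one_right' (hf x)
    _ ≤ expect q f + ε := by rw [ENNReal.tsum_add]; exact add_le_add_right excess _

lemma TendstoSimply.expect_indicator_surprisal_le_liminf [l.IsCountablyGenerated]
    (h : TendstoSimply p l q) (s : Set α) :
    expect q (s.indicator fun x => surprisal (q x)) ≤
      liminf (fun i => expect (p i) (s.indicator fun x => surprisal (p i x))) l := by
  refine tsum_le_liminf_tsum fun x => ?_
  by_cases hx : x ∈ s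
  · simpa [hx] using mul_surprisal_div_le_liminf (h x) (tendsto_const_nhds (x := (1 : ℝ≥0∞)))
      (q.apply_ne_top x) ENNReal.one_ne_top
  · simp [hx]

lemma expect_indicator_surprisal_add_compl (r : PMF α) (s : Set α) :
    expect r (s.indicator fun x => surprisal (r x)) +
      expect r (sᶜ.indicator fun x => surprisal (r x)) = entropy r := by
  simp only [← expect_add, Set.indicator_self_add_compl_apply, entropy]

lemma exists_finite_expect_compl_surprisal_lt (hfin : entropy q ≠ ⊤) {ε : ℝ≥0∞} (hε : ε ≠ 0) :
    ∃ F : Set α, F.Finite ∧ expect q (Fᶜ.indicator fun x => surprisal (q x)) < ε := by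
  obtain ⟨F, hF⟩ := ((ENNReal.tendsto_tsum_compl_atTop_zero hfin).eventually_lt_const
    (pos_iff_ne_zero.2 hε)).exists
  refine ⟨F, F.finite_toSet, lt_of_eq_of_lt ?_ hF⟩
  rw [show (∑' x : {x // x ∉ F}, q x * surprisal (q x)) = _ from
    tsum_subtype (F : Set α)ᶜ fun x => q x * surprisal (q x)]
  exact tsum_congr fun x => (Set.indicator_mul_right _ _ _).symm

lemma TendstoSimply.exists_finite_eventually_expect_compl_surprisal_le [l.IsCountablyGenerated]
    (h : TendstoSimply p l q) (hE : Tendsto (fun i => entropy (p i)) l (𝓝 (entropy q)))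
    (hfin : entropy q ≠ ⊤) {ε : ℝ≥0∞} (hε : ε ≠ 0) :
    ∃ F : Set α, F.Finite ∧
      ∀ᶠ i in l, expect (p i) (Fᶜ.indicator fun x => surprisal (p i x)) ≤ ε := by
  obtain ⟨F, hF, hlt⟩ := exists_finite_expect_compl_surprisal_lt hfin hε
  refine ⟨F, hF, (Tendsto.eventually_lt_const hlt ?_).mono fun _ => le_of_lt⟩
  refine tendsto_of_le_liminf_of_tendsto_add (h.expect_indicator_surprisal_le_liminf Fᶜ)
    (h.expect_indicator_surprisal_le_liminf F) ?_ ?_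
  · simpa only [add_comm (expect _ (Fᶜ.indicator _)), expect_indicator_surprisal_add_compl] using hE
  · rwa [add_comm, expect_indicator_surprisal_add_compl]

lemma entropy_eq_entropy_map_add (r : PMF α) (f : α → β) :
    entropy r = entropy (r.map f) + expect r fun x => surprisal (r x / r.map f (f x)) := by
  rw [entropy, entropy, expect_map, ← expect_add]
  refine tsum_congr fun x => ?_
  beta_reduce
  rcases eq_or_ne (r x) 0 with h0 | h0
  · simp [h0]
  have hle : r x ≤ r.map f (f x) := apply_le_map_apply r f x
  have hpos : r.map f (f x) ≠ 0 := fun h => h0 (le_zero_iff.1 (hle.trans_eq h))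
  rw [← surprisal_mul ((r.map f).coe_le_one _) (ENNReal.div_le_of_le_mul (by rwa [one_mul])),
    ENNReal.mul_div_cancel hpos ((r.map f).apply_ne_top _)]

/-- Both summands of the chain rule `entropy_eq_entropy_map_add` are lower semicontinuous. -/
lemma TendstoSimply.tendsto_entropy_map [l.IsCountablyGenerated] (h : TendstoSimply p l q)
    (hE : Tendsto (fun i => entropy (p i)) l (𝓝 (entropy q))) (hfin : entropy q ≠ ⊤) (f : α → β) :
    Tendsto (fun i => entropy ((p i).map f)) l (𝓝 (entropy (q.map f))) := by
  refine tendsto_of_le_liminf_of_tendsto_add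
    (c := expect q fun x => surprisal (q x / q.map f (f x)))
    (C := fun i => expect (p i) fun x => surprisal (p i x / (p i).map f (f x))) ?_ ?_ ?_ ?_
  · simpa only [Set.indicator_univ, entropy] using
      (h.map f).expect_indicator_surprisal_le_liminf Set.univ
  · exact tsum_le_liminf_tsum fun x => mul_surprisal_div_le_liminf (h x) (h.map f (f x))
      (q.apply_ne_top x) ((q.map f).apply_ne_top _)
  · simpa only [← entropy_eq_entropy_map_add] using hE
  · rwa [← entropy_eq_entropy_map_add]

end SimpleConvergence

section Convolution

variable {G ι : Type*} [Monoid G] {l : Filter ι} [l.IsCountablyGenerated]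
  {p p' : ι → PMF G} {q q' : PMF G}

lemma TendstoSimply.mul (h : TendstoSimply p l q) (h' : TendstoSimply p' l q') :
    TendstoSimply (fun i => p i * p' i) l (q * q') := by
  simpa only [mul_eq_map_prodLaw] using (h.prodLaw h').map _

lemma TendstoSimply.pow (h : TendstoSimply p l q) (n : ℕ) :
    TendstoSimply (fun i => p i ^ n) l (q ^ n) := by
  induction n with
  | zero => simpa only [pow_zero] using tendstoSimply_const 1
  | succ n ih => simpa only [pow_succ] using ih.mul h

lemma entropy_pow_ne_top (hfin : entropy q ≠ ⊤) (n : ℕ) : entropy (q ^ n) ≠ ⊤ :=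
  ne_top_of_le_ne_top (ENNReal.mul_ne_top (ENNReal.natCast_ne_top n) hfin) (entropy_pow_le q n)

lemma TendstoSimply.tendsto_entropy_mul (h : TendstoSimply p l q) (h' : TendstoSimply p' l q')
    (hE : Tendsto (fun i => entropy (p i)) l (𝓝 (entropy q))) (hfin : entropy q ≠ ⊤)
    (hE' : Tendsto (fun i => entropy (p' i)) l (𝓝 (entropy q'))) (hfin' : entropy q' ≠ ⊤) :
    Tendsto (fun i => entropy (p i * p' i)) l (𝓝 (entropy (q * q'))) := by
  simp only [mul_eq_map_prodLaw]
  refine (h.prodLaw h').tendsto_entropy_map ?_ ?_ _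
  · simpa only [entropy_prodLaw] using hE.add hE'
  · rw [entropy_prodLaw]
    exact ENNReal.add_ne_top.2 ⟨hfin, hfin'⟩

lemma TendstoSimply.tendsto_entropy_pow (h : TendstoSimply p l q)
    (hE : Tendsto (fun i => entropy (p i)) l (𝓝 (entropy q))) (hfin : entropy q ≠ ⊤) (n : ℕ) :
    Tendsto (fun i => entropy (p i ^ n)) l (𝓝 (entropy (q ^ n))) := by
  induction n with
  | zero => simpa only [pow_zero] using tendsto_const_nhds
  | succ n ih =>
    simpa only [pow_succ] using
      (h.pow n).tendsto_entropy_mul h ih (entropy_pow_ne_top hfin n) hE hfin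

end Convolution

/-! ### Runs of rare events in independent sequences -/

section IidSequences

variable {α : Type*} {p : PMF α} {x₀ : ℕ → α} {k : ℕ}

lemma expect_mono_of_support {p : PMF α} {f g : α → ℝ≥0∞} (h : ∀ x ∈ p.support, f x ≤ g x) :
    expect p f ≤ expect p g :=
  ENNReal.tsum_le_tsum fun x => by
    by_cases hx : x ∈ p.support
    · exact mul_le_mul_right (h x hx) _
    · simp [(p.apply_eq_zero_iff x).2 hx]

/-- The law of the sequence `x` after its `j`-th term has been redrawn from `p`. -/
noncomputable def resample (p : PMF α) (j : ℕ) (x : ℕ → α) : PMF (ℕ → α) :=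
  p.map (Function.update x j)

/-- The law of the sequence obtained from `x₀` by drawing the first `k` terms independently from
`p`. The fixed tail keeps the law discrete while avoiding sequences of variable length. -/
noncomputable def iidSeq (p : PMF α) (x₀ : ℕ → α) : ℕ → PMF (ℕ → α)
  | 0 => PMF.pure x₀
  | k + 1 => (iidSeq p x₀ k).bind (resample p k)

lemma iidSeq_bind_resample {j : ℕ} (hj : j < k) :
    (iidSeq p x₀ k).bind (resample p j) = iidSeq p x₀ k := by
  induction k with
  | zero => omega
  | succ k ih =>
    rw [iidSeq, PMF.bind_bind]
    rcases Nat.lt_succ_iff_lt_or_eq.1 hj with hj | rfl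
    · nth_rewrite 2 [← ih hj]
      rw [PMF.bind_bind]
      congr 1
      ext1 x
      simp only [resample, PMF.map, PMF.bind_bind, PMF.pure_bind, Function.comp_def]
      rw [PMF.bind_comm]
      simp only [Function.update_comm hj.ne]
    · congr 1
      ext1 x
      have hupd (a : α) : Function.update (Function.update x j a) j = Function.update x j :=
        funext fun _ => Function.update_idem _ _ _
      simp [resample, PMF.bind_map, Function.comp_def, hupd]

lemma expect_iidSeq_resample {j : ℕ} (hj : j < k) (f : (ℕ → α) → ℝ≥0∞) :
    expect (iidSeq p x₀ k) f = expect (iidSeq p x₀ k) fun x => expect (resample p j x) f := by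
  rw [← expect_bind, iidSeq_bind_resample hj]

lemma expect_iidSeq_apply {j : ℕ} (hj : j < k) (f : α → ℝ≥0∞) :
    expect (iidSeq p x₀ k) (fun x => f (x j)) = expect p f := by
  rw [expect_iidSeq_resample hj]
  simp [resample]

lemma eq_of_mem_support_iidSeq {x : ℕ → α} (hx : x ∈ (iidSeq p x₀ k).support) {j : ℕ}
    (hj : k ≤ j) : x j = x₀ j := by
  induction k generalizing x with
  | zero => rw [(PMF.mem_support_pure_iff _ _).1 hx]
  | succ k ih =>
    obtain ⟨y, hy, hxy⟩ := (PMF.mem_support_bind_iff _ _ _).1 hx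
    obtain ⟨a, -, rfl⟩ := (PMF.mem_support_map_iff _ _ _).1 hxy
    rw [Function.update_of_ne (by omega)]
    exact ih hy (by omega)

lemma prod_le_iidSeq_apply {x : ℕ → α} (hx : ∀ j, k ≤ j → x j = x₀ j) :
    ∏ j ∈ Finset.range k, p (x j) ≤ iidSeq p x₀ k x := by
  induction k generalizing x with
  | zero =>
    obtain rfl : x = x₀ := funext fun j => hx j (Nat.zero_le j)
    simp [iidSeq]
  | succ k ih =>
    have hprod : ∏ j ∈ Finset.range k, p (Function.update x k (x₀ k) j) =
        ∏ j ∈ Finset.range k, p (x j) :=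
      Finset.prod_congr rfl fun j hj => by
        rw [Function.update_of_ne (Finset.mem_range.1 hj).ne]
    have htail (j : ℕ) (hj : k ≤ j) : Function.update x k (x₀ k) j = x₀ j := by
      rcases hj.eq_or_lt with rfl | hj
      · simp
      · rw [Function.update_of_ne hj.ne', hx j hj]
    have hlast : p (x k) ≤ resample p k (Function.update x k (x₀ k)) x := by
      simpa [resample] using
        apply_le_map_apply p (Function.update (Function.update x k (x₀ k)) k) (x k)
    rw [Finset.prod_range_succ, ← hprod, iidSeq, PMF.bind_apply]
    exact (mul_le_mul' (ih htail) hlast).trans (ENNReal.le_tsum _)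

/-- The factors are integrated out in the order of the list: those still to come must not depend
on the coordinate being integrated. -/
lemma expect_iidSeq_prod_le {c : ℝ≥0∞} {f : ℕ → (ℕ → α) → ℝ≥0∞} {l : List ℕ}
    (hl : ∀ j ∈ l, j < k)
    (hf : l.Pairwise fun j i => ∀ x a, f i (Function.update x j a) = f i x)
    (hc : ∀ j ∈ l, ∀ x, expect (resample p j x) (f j) ≤ c) :
    expect (iidSeq p x₀ k) (fun x => (l.map fun i => f i x).prod) ≤ c ^ l.length := by
  induction l with
  | nil => simp
  | cons j l ih =>
    obtain ⟨hfj, hf⟩ := List.pairwise_cons.1 hf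
    rw [expect_iidSeq_resample (hl j List.mem_cons_self)]
    have integrate_head (x : ℕ → α) :
        expect (resample p j x) (fun x => ((j :: l).map fun i => f i x).prod) ≤
          c * (l.map fun i => f i x).prod := by
      have hconst (a : α) : (l.map fun i => f i (Function.update x j a)).prod =
          (l.map fun i => f i x).prod := by
        rw [List.map_congr_left fun i hi => hfj i hi x a]
      have := hc j List.mem_cons_self x
      rw [resample, expect_map] at this ⊢
      simp only [List.map_cons, List.prod_cons, hconst, mul_comm _ (l.map fun i => f i x).prod,
        expect_const_mul]
      exact mul_le_mul_right this _
    refine (expect_mono integrate_head).trans ?_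
    rw [expect_const_mul, List.length_cons, pow_succ']
    exact mul_le_mul_right (ih (fun i hi => hl i (List.mem_cons_of_mem j hi)) hf
      fun i hi => hc i (List.mem_cons_of_mem j hi)) c

end IidSequences

section Runs

variable {α : Type*} {p : PMF α} {x₀ : ℕ → α} {k : ℕ} {θ : ℝ≥0∞}

/-- The indicator of `s`, tilted so that its mean is at most `2 * θ` when `s` has probability at
most `θ ^ 2`, while the product of two tilted indicators is at least `1` on the union. -/
noncomputable def tiltedIndicator (θ : ℝ≥0∞) (s : Set α) (x : α) : ℝ≥0∞ :=
  θ + θ⁻¹ * s.indicator 1 x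

lemma expect_tiltedIndicator_le (hθ : θ ≠ 0) (hθt : θ ≠ ⊤) {p : PMF α} {s : Set α}
    (hs : p.toOuterMeasure s ≤ θ ^ 2) : expect p (tiltedIndicator θ s) ≤ 2 * θ :=
  calc expect p (tiltedIndicator θ s) = θ + θ⁻¹ * p.toOuterMeasure s := by
        rw [← expect_indicator, ← expect_const_mul, ← expect_const p θ, ← expect_add, expect_const]
        rfl
    _ ≤ θ + θ⁻¹ * (θ * θ) := by rw [← pow_two]; gcongr
    _ = 2 * θ := by rw [← mul_assoc, ENNReal.inv_mul_cancel hθ hθt, one_mul, two_mul]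

lemma one_le_tiltedIndicator_mul (hθ : θ ≠ 0) (hθt : θ ≠ ⊤) {s t : Set α} {x : α}
    (hx : x ∈ s ∪ t) : 1 ≤ tiltedIndicator θ s x * tiltedIndicator θ t x := by
  have hle {s : Set α} (hs : x ∈ s) : θ⁻¹ ≤ tiltedIndicator θ s x := by
    simp [tiltedIndicator, hs]
  have hθle (s : Set α) : θ ≤ tiltedIndicator θ s x := le_self_add
  rcases hx with hx | hx
  · exact (ENNReal.inv_mul_cancel hθ hθt).ge.trans (mul_le_mul' (hle hx) (hθle t))
  · exact (ENNReal.mul_inv_cancel hθ hθt).ge.trans (mul_le_mul' (hθle s) (hle hx))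

/-- The events `L i` are determined by the past of `i` and the events `R i` by its future, so the
tilted indicators of the `L i` are integrated from the top and those of the `R i` from the
bottom. -/
lemma iidSeq_toOuterMeasure_forall_le (hθ : θ ≠ 0) (hθt : θ ≠ ⊤) {L R : ℕ → Set (ℕ → α)}
    {l : List ℕ} (hl : l.Pairwise (· < ·)) (hlk : ∀ j ∈ l, j < k)
    (hL : ∀ i ∈ l, ∀ j, i < j → ∀ x a, Function.update x j a ∈ L i ↔ x ∈ L i)
    (hR : ∀ i ∈ l, ∀ j, j < i → ∀ x a, Function.update x j a ∈ R i ↔ x ∈ R i)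
    (hLp : ∀ j ∈ l, ∀ x, (resample p j x).toOuterMeasure (L j) ≤ θ ^ 2)
    (hRp : ∀ j ∈ l, ∀ x, (resample p j x).toOuterMeasure (R j) ≤ θ ^ 2) :
    (iidSeq p x₀ k).toOuterMeasure {x | ∀ i ∈ l, x ∈ L i ∪ R i} ≤ 2 * (2 * θ) ^ l.length := by
  set f : ℕ → (ℕ → α) → ℝ≥0∞ := fun i => tiltedIndicator θ (L i) with hf
  set g : ℕ → (ℕ → α) → ℝ≥0∞ := fun i => tiltedIndicator θ (R i) with hg
  have indicator_le (x : ℕ → α) : {x | ∀ i ∈ l, x ∈ L i ∪ R i}.indicator 1 x ≤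
      (l.reverse.map fun i => f i x).prod + (l.map fun i => g i x).prod := by
    refine Set.indicator_apply_le' (fun hx => ?_) fun _ => zero_le
    have hone : 1 ≤ (l.map fun i => f i x).prod * (l.map fun i => g i x).prod := by
      rw [← List.prod_map_mul]
      refine List.one_le_prod_of_one_le fun y hy => ?_
      obtain ⟨i, hi, rfl⟩ := List.mem_map.1 hy
      exact one_le_tiltedIndicator_mul hθ hθt (hx i hi)
    rw [List.map_reverse, List.prod_reverse]
    by_contra! hlt
    have hgle : (l.map fun i => g i x).prod ≤ 1 := le_add_self.trans hlt.le
    have hflt : (l.map fun i => f i x).prod < 1 := le_self_add.trans_lt hlt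
    exact ((mul_le_of_le_one_right' hgle).trans_lt hflt).not_ge hone
  have hup : expect (iidSeq p x₀ k) (fun x => (l.reverse.map fun i => f i x).prod) ≤
      (2 * θ) ^ l.length := by
    rw [← List.length_reverse]
    refine expect_iidSeq_prod_le (fun j hj => hlk j (List.mem_reverse.1 hj)) ?_ fun j hj x =>
      expect_tiltedIndicator_le hθ hθt (hLp j (List.mem_reverse.1 hj) x)
    refine List.pairwise_reverse.2 (hl.imp_of_mem fun {i j} hi _ hij x a => ?_)
    classical simp only [hf, tiltedIndicator, Set.indicator_apply, hL i hi j hij x a, Pi.one_apply]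
  have hdown : expect (iidSeq p x₀ k) (fun x => (l.map fun i => g i x).prod) ≤
      (2 * θ) ^ l.length := by
    refine expect_iidSeq_prod_le hlk ?_ fun j hj x =>
      expect_tiltedIndicator_le hθ hθt (hRp j hj x)
    refine hl.imp_of_mem fun {j i} _ hi hji x a => ?_
    classical simp only [hg, tiltedIndicator, Set.indicator_apply, hR i hi j hji x a, Pi.one_apply]
  rw [← expect_indicator, two_mul ((2 * θ) ^ l.length)]
  refine (expect_mono indicator_le).trans ?_
  rw [expect_add]
  exact add_le_add hup hdown

lemma sum_range_pow_sub_le {r : ℝ≥0∞} (hr : r ≤ 2⁻¹) (b : ℕ) :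
    ∑ a ∈ Finset.range b, r ^ (b - a) ≤ 2 * r :=
  calc ∑ a ∈ Finset.range b, r ^ (b - a) = ∑ a ∈ Finset.range b, r ^ (a + 1) := by
        rw [← Finset.sum_range_reflect]
        refine Finset.sum_congr rfl fun a ha => ?_
        have := Finset.mem_range.1 ha
        congr 1
        omega
    _ ≤ ∑' a, r ^ (a + 1) := ENNReal.sum_le_tsum _
    _ = (1 - r)⁻¹ * r := by
        simp only [pow_succ, ENNReal.tsum_mul_right, ENNReal.tsum_geometric]
    _ ≤ 2 * r := by
        gcongr
        rw [ENNReal.inv_le_iff_inv_le, ← ENNReal.one_sub_inv_two]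
        exact tsub_le_tsub_left hr 1

end Runs

/-! ### Decoding a word from its markers -/

/-- A family of group elements `val s`, the markers, to be inserted between the letters of a random
word. The sets `badAfter u` and `badBefore v` collect the markers that are not aligned with `u` on
their left, respectively with `v` on their right. -/
structure Markers (G S : Type*) where
  val : S → G
  badAfter : G → Set S
  badBefore : G → Set S

namespace Markers

variable {G S : Type*} [Group G] (M : Markers G S) {z z' : ℕ → G} {s : ℕ → S} {w : G} {a b j k : ℕ}

section Words

/-- The product `z 0 * val (s 0) * ⋯ * z (j - 1) * val (s (j - 1))`. -/
def pathProd (z : ℕ → G) (s : ℕ → S) : ℕ → G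
  | 0 => 1
  | j + 1 => pathProd z s j * z j * M.val (s j)

/-- The part of the path between the position `a` and the marker `s j`, excluding that marker. -/
def segment (z : ℕ → G) (s : ℕ → S) (a j : ℕ) : G :=
  (M.pathProd z s a)⁻¹ * M.pathProd z s j * z j

lemma segment_mul_val_mul (z : ℕ → G) (s : ℕ → S) (w : G) (a j : ℕ) :
    M.segment z s a j * M.val (s j) * ((M.pathProd z s (j + 1))⁻¹ * w) =
      (M.pathProd z s a)⁻¹ * w := by
  simp only [segment, pathProd]
  group

lemma segment_zero_mul_val (z : ℕ → G) (s : ℕ → S) (j : ℕ) :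
    M.segment z s 0 j * M.val (s j) = M.pathProd z s (j + 1) := by
  simp [segment, pathProd]

lemma segment_self (z : ℕ → G) (s : ℕ → S) (j : ℕ) : M.segment z s j j = z j := by
  simp [segment]

lemma inv_pathProd_mul_pathProd_succ (z : ℕ → G) (s : ℕ → S) (a j : ℕ) :
    (M.pathProd z s a)⁻¹ * M.pathProd z s (j + 1) = M.segment z s a j * M.val (s j) := by
  simp only [segment, pathProd, mul_assoc]

lemma inv_pathProd_mul_pathProd_congr (hab : a ≤ b) (h : ∀ i, a ≤ i → i < b → z i = z' i) :
    (M.pathProd z s a)⁻¹ * M.pathProd z s b = (M.pathProd z' s a)⁻¹ * M.pathProd z' s b := by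
  induction b, hab using Nat.le_induction with
  | base => simp
  | succ b hab ih =>
    rw [inv_pathProd_mul_pathProd_succ, inv_pathProd_mul_pathProd_succ, segment, segment,
      ih fun i hai hib => h i hai (by omega), h b hab (by omega)]

lemma segment_congr (haj : a ≤ j) (h : ∀ i, a ≤ i → i ≤ j → z i = z' i) :
    M.segment z s a j = M.segment z' s a j := by
  rw [segment, segment, M.inv_pathProd_mul_pathProd_congr haj fun i hai hij => h i hai hij.le,
    h j haj le_rfl]

end Words

section Runs

/-- The marker `s j` is not aligned with the part of the path following position `a`, or with
what remains to be travelled to reach `w`. -/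
def Fails (z : ℕ → G) (s : ℕ → S) (w : G) (a j : ℕ) : Prop :=
  s j ∈ M.badAfter (M.segment z s a j) ∨ s j ∈ M.badBefore ((M.pathProd z s (j + 1))⁻¹ * w)

/-- All markers at positions in `[a, b)` fail, relative to the starting point `a`. -/
def FailsOn (z : ℕ → G) (s : ℕ → S) (w : G) (a b : ℕ) : Prop :=
  ∀ i, a ≤ i → i < b → M.Fails z s w a i

/-- The last marker is useless, relative to the start of the path or to the last run. -/
def IsDegenerate (k : ℕ) (z : ℕ → G) (s : ℕ → S) (w : G) : Prop :=
  M.Fails z s w 0 (k - 1) ∨ ∃ a < k, M.FailsOn z s w a k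

/-- The letters in these positions have to be recorded, because the markers next to them do not
allow to recover the path up to bounded error. -/
def IsRevealed (k : ℕ) (z : ℕ → G) (s : ℕ → S) (w : G) (b : ℕ) : Prop :=
  M.IsDegenerate k z s w ∨ M.Fails z s w b b ∨ ∃ a < b, M.FailsOn z s w a b

open Classical in
/-- The letters recorded in the code of a path: those outside `F` and those in revealed
positions. -/
noncomputable def revealedLetters (F : Set G) (k : ℕ) (z : ℕ → G) (s : ℕ → S) (w : G) (b : ℕ) :
    Option G :=
  if b < k ∧ (z b ∉ F ∨ M.IsRevealed k z s w b) then some (z b) else none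

/-- The possible endpoints, when aiming at `w`, of a path whose markers are `s` and whose revealed
letters are `m`. -/
def candidates (F : Set G) (k : ℕ) (w : G) (s : ℕ → S) (m : ℕ → Option G) : Set G :=
  {u | ∃ z, M.pathProd z s k = u ∧ M.revealedLetters F k z s w = m}

open Classical in
/-- The starting point of the current run of failures at position `j`. -/
noncomputable def runStart (z : ℕ → G) (s : ℕ → S) (w : G) : ℕ → ℕ
  | 0 => 0
  | j + 1 => if M.Fails z s w (runStart z s w j) j then runStart z s w j else j + 1

/-- The marker `s j` prolongs the current run of failures. -/
def RunContinues (z : ℕ → G) (s : ℕ → S) (w : G) (j : ℕ) : Prop :=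
  M.Fails z s w (M.runStart z s w j) j

variable {M}

lemma runStart_succ_of_runContinues (h : M.RunContinues z s w j) :
    M.runStart z s w (j + 1) = M.runStart z s w j :=
  if_pos h

lemma runStart_succ_of_not_runContinues (h : ¬ M.RunContinues z s w j) :
    M.runStart z s w (j + 1) = j + 1 :=
  if_neg h

lemma runStart_le (z : ℕ → G) (s : ℕ → S) (w : G) (j : ℕ) : M.runStart z s w j ≤ j := by
  induction j with
  | zero => exact le_rfl
  | succ j ih =>
    by_cases h : M.RunContinues z s w j
    · rw [runStart_succ_of_runContinues h]
      exact ih.trans j.le_succ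
    · rw [runStart_succ_of_not_runContinues h]

lemma failsOn_runStart (z : ℕ → G) (s : ℕ → S) (w : G) (j : ℕ) :
    M.FailsOn z s w (M.runStart z s w j) j := by
  induction j with
  | zero => exact fun i _ hi => absurd hi i.not_lt_zero
  | succ j ih =>
    intro i hi hij
    by_cases h : M.RunContinues z s w j
    · rw [runStart_succ_of_runContinues h] at hi ⊢
      rcases Nat.lt_succ_iff_lt_or_eq.1 hij with hij | rfl
      · exact ih i hi hij
      · exact h
    · rw [runStart_succ_of_not_runContinues h] at hi
      omega

lemma runStart_eq_of_not_isDegenerate (h : ¬ M.IsDegenerate k z s w) :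
    M.runStart z s w k = k := by
  by_contra hne
  exact h (.inr ⟨_, (runStart_le z s w k).lt_of_ne hne, failsOn_runStart z s w k⟩)

variable {F : Set G}

lemma eq_of_isRevealed (h : M.revealedLetters F k z s w = M.revealedLetters F k z' s w)
    (hb : b < k) (hr : M.IsRevealed k z s w b) : z b = z' b := by
  have hb' := congrFun h b
  rw [revealedLetters, if_pos ⟨hb, .inr hr⟩, revealedLetters] at hb'
  split_ifs at hb'
  exact Option.some_injective _ hb'

lemma eq_or_mem_of_revealedLetters_eq
    (h : M.revealedLetters F k z s w = M.revealedLetters F k z' s w) (hb : b < k) :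
    z b = z' b ∨ z b ∈ F ∧ z' b ∈ F := by
  have hb' := congrFun h b
  simp only [revealedLetters] at hb'
  split_ifs at hb' with hz hz' hz'
  · exact .inl (Option.some_injective _ hb')
  · push Not at hz hz'
    exact .inr ⟨(hz hb).1, (hz' hb).1⟩

lemma eq_of_mem_run (h : M.revealedLetters F k z s w = M.revealedLetters F k z' s w)
    (hj : j < k) (hlt : M.runStart z s w j < j) {i : ℕ} (hi : M.runStart z s w j ≤ i)
    (hij : i ≤ j) : z i = z' i := by
  have hrun := failsOn_runStart (M := M) z s w j
  refine eq_of_isRevealed h (by omega) ?_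
  rcases hi.eq_or_lt with rfl | hi
  · exact .inr (.inl (hrun _ le_rfl hlt))
  · exact .inr (.inr ⟨_, hi, fun b hb hbi => hrun b hb (by omega)⟩)

end Runs

/-- Aligned triples are almost additive for the norm `N`, and a product of an aligned triple
whose marker and rough left norm are known determines its left part up to `A'` choices. -/
structure IsSeparating (N : G → ℝ) (A A' : ℕ) : Prop where
  abs_sub_le : ∀ ⦃u v s⦄, s ∉ M.badAfter u → s ∉ M.badBefore v →
    |N (u * M.val s * v) - N u - N v| ≤ A
  encard_le : ∀ w s (D : ℝ), {u | ∃ v, u * M.val s * v = w ∧ s ∉ M.badAfter u ∧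
    s ∉ M.badBefore v ∧ D ≤ N u ∧ N u ≤ D + 1}.encard ≤ A'

section Decoding

variable {M} {N : G → ℝ} {A A' L : ℕ} {F : Set G}

lemma IsSeparating.abs_norm_sub_le (hM : M.IsSeparating N A A') (h : ¬ M.Fails z s w a j) :
    |N ((M.pathProd z s a)⁻¹ * w) - N (M.segment z s a j) -
      N ((M.pathProd z s (j + 1))⁻¹ * w)| ≤ A := by
  rw [← segment_mul_val_mul]
  exact hM.abs_sub_le (fun hj => h (.inl hj)) fun hj => h (.inr hj)

lemma abs_norm_segment_runStart_sub_le (hF : ∀ x ∈ F, 0 ≤ N x ∧ N x ≤ L)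
    (h : M.revealedLetters F k z s w = M.revealedLetters F k z' s w) (hj : j < k) :
    |N (M.segment z s (M.runStart z s w j) j) - N (M.segment z' s (M.runStart z s w j) j)| ≤ L := by
  rcases (runStart_le z s w j).lt_or_eq with hlt | heq
  · rw [M.segment_congr hlt.le fun i hi hij => eq_of_mem_run h hj hlt hi hij]
    simp
  · rw [heq, segment_self, segment_self]
    rcases eq_or_mem_of_revealedLetters_eq h hj with hz | ⟨hz, hz'⟩
    · simp [hz]
    · obtain ⟨h0, hL⟩ := hF _ hz
      obtain ⟨h0', hL'⟩ := hF _ hz'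
      rw [abs_le]
      constructor <;> linarith

/-- Every aligned marker synchronizes the two paths: the remaining distances to `w` drift apart
by a bounded amount at each step. -/
lemma runStart_eq_and_abs_norm_sub_le (hM : M.IsSeparating N A A')
    (hF : ∀ x ∈ F, 0 ≤ N x ∧ N x ≤ L)
    (h : M.revealedLetters F k z s w = M.revealedLetters F k z' s w)
    (hrun : ∀ j < k, M.RunContinues z s w j ↔ M.RunContinues z' s w j) (hj : j ≤ k) :
    M.runStart z s w j = M.runStart z' s w j ∧
      |N ((M.pathProd z s (M.runStart z s w j))⁻¹ * w) -
        N ((M.pathProd z' s (M.runStart z s w j))⁻¹ * w)| ≤ j * (2 * A + L) := by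
  induction j with
  | zero => simp [runStart, pathProd]
  | succ j ih =>
    obtain ⟨hstart, hdrift⟩ := ih (by omega)
    have hstep : (j : ℝ) * (2 * A + L) ≤ (j + 1 : ℕ) * (2 * A + L) := by
      gcongr
      exact j.le_succ
    by_cases hz : M.RunContinues z s w j
    · rw [runStart_succ_of_runContinues hz, runStart_succ_of_runContinues ((hrun j hj).1 hz)]
      exact ⟨hstart, hdrift.trans hstep⟩
    · have hz' : ¬ M.RunContinues z' s w j := fun hz' => hz ((hrun j hj).2 hz')
      rw [runStart_succ_of_not_runContinues hz, runStart_succ_of_not_runContinues hz']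
      refine ⟨rfl, ?_⟩
      rw [RunContinues, ← hstart] at hz'
      have hadd := hM.abs_norm_sub_le hz
      have hadd' := hM.abs_norm_sub_le hz'
      have hseg := abs_norm_segment_runStart_sub_le hF h hj
      push_cast
      rw [abs_le] at *
      constructor <;> linarith

lemma abs_norm_segment_zero_sub_le (hM : M.IsSeparating N A A')
    (hF : ∀ x ∈ F, 0 ≤ N x ∧ N x ≤ L) (hk : 0 < k)
    (h : M.revealedLetters F k z s w = M.revealedLetters F k z' s w)
    (hrun : ∀ j < k, M.RunContinues z s w j ↔ M.RunContinues z' s w j)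
    (hz : ¬ M.IsDegenerate k z s w) (hz' : ¬ M.IsDegenerate k z' s w) :
    |N (M.segment z s 0 (k - 1)) - N (M.segment z' s 0 (k - 1))| ≤
      (k * (2 * A + L) + 2 * A : ℕ) := by
  have last {y : ℕ → G} (hy : ¬ M.IsDegenerate k y s w) :
      |N w - N (M.segment y s 0 (k - 1)) - N ((M.pathProd y s k)⁻¹ * w)| ≤ A := by
    have hlast := hM.abs_norm_sub_le (a := 0) (j := k - 1) fun hj => hy (.inl hj)
    rwa [Nat.sub_add_cancel hk, pathProd, inv_one, one_mul] at hlast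
  have hdrift := (runStart_eq_and_abs_norm_sub_le hM hF h hrun le_rfl).2
  rw [runStart_eq_of_not_isDegenerate hz] at hdrift
  have hlast := last hz
  have hlast' := last hz'
  push_cast
  rw [abs_le] at *
  constructor <;> linarith

lemma encard_degenerate_candidates_le_one (F : Set G) (k : ℕ) (w : G) (s : ℕ → S)
    (m : ℕ → Option G) :
    {u | ∃ z, M.pathProd z s k = u ∧ M.revealedLetters F k z s w = m ∧
      M.IsDegenerate k z s w}.encard ≤ 1 := by
  rw [Set.encard_le_one_iff]
  rintro _ _ ⟨z, rfl, hm, hz⟩ ⟨z', rfl, hm', -⟩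
  simpa [pathProd] using M.inv_pathProd_mul_pathProd_congr (s := s) k.zero_le
    fun i _ hik => eq_of_isRevealed (hm.trans hm'.symm) hik (.inl hz)

lemma IsSeparating.encard_norm_le (hM : M.IsSeparating N A A') (w : G) (s : S) (D : ℝ) (W : ℕ) :
    {u | ∃ v, u * M.val s * v = w ∧ s ∉ M.badAfter u ∧ s ∉ M.badBefore v ∧
      |N u - D| ≤ W}.encard ≤ ((2 * W + 1) * A' : ℕ) := by
  have hsub : {u | ∃ v, u * M.val s * v = w ∧ s ∉ M.badAfter u ∧ s ∉ M.badBefore v ∧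
      |N u - D| ≤ W} ⊆ ⋃ i ∈ Finset.range (2 * W + 1),
        {u | ∃ v, u * M.val s * v = w ∧ s ∉ M.badAfter u ∧ s ∉ M.badBefore v ∧
          D - W + i ≤ N u ∧ N u ≤ D - W + i + 1} := by
    rintro u ⟨v, huv, hu, hv, hN⟩
    rw [abs_le] at hN
    have hnn : 0 ≤ N u - D + W := by linarith
    have hfloor : ((⌊N u - D + W⌋₊ : ℕ) : ℝ) ≤ (2 * W : ℕ) := by
      refine (Nat.floor_le hnn).trans ?_
      push_cast
      linarith
    refine Set.mem_iUnion₂.2 ⟨⌊N u - D + W⌋₊, Finset.mem_range.2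
      (Nat.lt_succ_of_le (by exact_mod_cast hfloor)), v, huv, hu, hv, ?_, ?_⟩
    · linarith [Nat.floor_le hnn]
    · linarith [Nat.lt_floor_add_one (N u - D + W)]
  refine (Set.encard_le_encard hsub).trans ((Finset.set_encard_biUnion_le _ _).trans ?_)
  refine (Finset.sum_le_sum fun i _ => hM.encard_le w s _).trans ?_
  simp

lemma encard_candidates_of_runContinues_le (hM : M.IsSeparating N A A')
    (hF : ∀ x ∈ F, 0 ≤ N x ∧ N x ≤ L) (hk : 0 < k) (w : G) (s : ℕ → S) (m : ℕ → Option G)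
    (e : Fin k → Prop) :
    {u | ∃ z, M.pathProd z s k = u ∧ M.revealedLetters F k z s w = m ∧
      ¬ M.IsDegenerate k z s w ∧ ∀ j : Fin k, M.RunContinues z s w j ↔ e j}.encard ≤
      ((2 * (k * (2 * A + L) + 2 * A) + 1) * A' : ℕ) := by
  rcases Set.eq_empty_or_nonempty {u | ∃ z, M.pathProd z s k = u ∧
    M.revealedLetters F k z s w = m ∧ ¬ M.IsDegenerate k z s w ∧
      ∀ j : Fin k, M.RunContinues z s w j ↔ e j} with hempty | ⟨-, y, -, hym, hy, hye⟩
  · simp [hempty]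
  refine le_trans (Set.encard_le_encard ?_) ((Set.encard_image_le (· * M.val (s (k - 1))) _).trans
    (hM.encard_norm_le w (s (k - 1)) (N (M.segment y s 0 (k - 1))) _))
  rintro _ ⟨z, rfl, hm, hz, he⟩
  have hlast : ¬ M.Fails z s w 0 (k - 1) := fun hj => hz (.inl hj)
  refine ⟨M.segment z s 0 (k - 1), ⟨_, (M.segment_mul_val_mul z s w 0 (k - 1)).trans ?_,
    fun hj => hlast (.inl hj), fun hj => hlast (.inr hj), ?_⟩, ?_⟩
  · simp [pathProd]
  · exact abs_norm_segment_zero_sub_le hM hF hk (hm.trans hym.symm)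
      (fun j hj => (he ⟨j, hj⟩).trans (hye ⟨j, hj⟩).symm) hz hy
  · simp only [segment_zero_mul_val, Nat.sub_add_cancel hk]

lemma encard_candidates_le (hM : M.IsSeparating N A A') (hF : ∀ x ∈ F, 0 ≤ N x ∧ N x ≤ L)
    (hk : 0 < k) (w : G) (s : ℕ → S) (m : ℕ → Option G) :
    (M.candidates F k w s m).encard ≤
      (1 + 2 ^ k * ((2 * (k * (2 * A + L) + 2 * A) + 1) * A') : ℕ) := by
  classical
  have hsub : M.candidates F k w s m ⊆
      {u | ∃ z, M.pathProd z s k = u ∧ M.revealedLetters F k z s w = m ∧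
        M.IsDegenerate k z s w} ∪
      ⋃ e ∈ (Finset.univ : Finset (Fin k → Prop)), {u | ∃ z, M.pathProd z s k = u ∧
        M.revealedLetters F k z s w = m ∧ ¬ M.IsDegenerate k z s w ∧
          ∀ j : Fin k, M.RunContinues z s w j ↔ e j} := by
    rintro u ⟨z, hu, hm⟩
    by_cases hz : M.IsDegenerate k z s w
    · exact .inl ⟨z, hu, hm, hz⟩
    · exact .inr (Set.mem_iUnion₂.2 ⟨fun j => M.RunContinues z s w j, Finset.mem_univ _,
        z, hu, hm, hz, fun j => Iff.rfl⟩)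
  refine (Set.encard_le_encard hsub).trans ((Set.encard_union_le _ _).trans ?_)
  rw [Nat.cast_add, Nat.cast_one]
  refine add_le_add (encard_degenerate_candidates_le_one F k w s m)
    ((Finset.set_encard_biUnion_le _ _).trans ?_)
  refine (Finset.sum_le_sum fun e _ =>
    encard_candidates_of_runContinues_le hM hF hk w s m e).trans ?_
  simp

end Decoding

end Markers

/-! ### Entropy bounds from codes -/

section Code

lemma expect_comm {α β : Type*} (p : PMF α) (q : PMF β) (f : α → β → ℝ≥0∞) :
    (expect p fun x => expect q fun y => f x y) = expect q fun y => expect p fun x => f x y := by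
  simp only [expect, ← ENNReal.tsum_mul_left]
  rw [ENNReal.tsum_comm]
  simp only [mul_left_comm]

lemma tsum_toOuterMeasure_setOf_mem_le {α M : Type*} (r : PMF M) {C : M → Set α} {N : ℕ}
    (hC : ∀ m, (C m).encard ≤ N) : ∑' u, r.toOuterMeasure {m | u ∈ C m} ≤ N := by
  have encard_eq (m : M) : ∑' u, {m | u ∈ C m}.indicator (1 : M → ℝ≥0∞) m = (C m).encard := by
    rw [← ENNReal.tsum_set_one, tsum_subtype (C m) fun _ => (1 : ℝ≥0∞)]
    rfl
  simp only [← expect_indicator]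
  rw [← expect_tsum]
  simp only [encard_eq]
  exact (expect_mono fun m => by exact_mod_cast hC m).trans_eq (expect_const r (N : ℝ≥0∞))

lemma inv_natCast_mul_le_one {N : ℕ} (hN : N ≠ 0) {x : ℝ≥0∞} (hx : x ≤ N) :
    (N : ℝ≥0∞)⁻¹ * x ≤ 1 :=
  (mul_le_mul_right hx _).trans_eq
    (ENNReal.inv_mul_cancel (by exact_mod_cast hN) (ENNReal.natCast_ne_top N))

lemma surprisal_inv_natCast_mul {N : ℕ} (hN : N ≠ 0) {x : ℝ≥0∞} (hx : x ≤ 1) :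
    surprisal ((N : ℝ≥0∞)⁻¹ * x) = surprisal (N : ℝ≥0∞)⁻¹ + surprisal x := by
  refine surprisal_mul ?_ hx
  rw [ENNReal.inv_le_one]
  exact_mod_cast Nat.one_le_iff_ne_zero.2 hN

lemma entropy_le_of_code {α M : Type*} (p : PMF α) (r : PMF M) {C : M → Set α} {N : ℕ}
    (hN : N ≠ 0) (hC : ∀ m, (C m).encard ≤ N) :
    entropy p ≤ surprisal (N : ℝ≥0∞)⁻¹ +
      expect p fun u => surprisal (r.toOuterMeasure {m | u ∈ C m}) := by
  refine (entropy_le_expect_surprisal p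
    (q := fun u => (N : ℝ≥0∞)⁻¹ * r.toOuterMeasure {m | u ∈ C m}) ?_).trans_eq ?_
  · rw [ENNReal.tsum_mul_left]
    exact inv_natCast_mul_le_one hN (tsum_toOuterMeasure_setOf_mem_le r hC)
  · simp only [surprisal_inv_natCast_mul hN (toOuterMeasure_le_one r _), expect_add, expect_const]

lemma entropy_add_entropy_le_of_code {G M : Type*} [Group G] (p q : PMF G) (r : PMF M)
    {C : G → M → Set G} {N : ℕ} (hN : N ≠ 0) (hC : ∀ w m, (C w m).encard ≤ N) :
    entropy p + entropy q ≤ entropy (p * q) + (surprisal (N : ℝ≥0∞)⁻¹ +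
      expect p fun u => expect q fun v =>
        surprisal (r.toOuterMeasure {m | u ∈ C (u * v) m})) := by
  refine (entropy_add_entropy_le p q
    (κ := fun u w => (N : ℝ≥0∞)⁻¹ * r.toOuterMeasure {m | u ∈ C w m}) fun w => ?_).trans_eq ?_
  · rw [ENNReal.tsum_mul_left]
    exact inv_natCast_mul_le_one hN (tsum_toOuterMeasure_setOf_mem_le r (hC w))
  · simp only [surprisal_inv_natCast_mul hN (toOuterMeasure_le_one r _), expect_add, expect_const]

lemma surprisal_iidSeq_le {α : Type*} {p : PMF α} {x₀ x : ℕ → α} {k : ℕ}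
    (hx : ∀ j, k ≤ j → x j = x₀ j) :
    surprisal (iidSeq p x₀ k x) ≤ ∑ j ∈ Finset.range k, surprisal (p (x j)) :=
  (surprisal_antitone (prod_le_iidSeq_apply hx)).trans_eq
    (surprisal_prod fun j _ => p.coe_le_one (x j))

lemma surprisal_prodLaw {α β : Type*} (p : PMF α) (q : PMF β) (x : α × β) :
    surprisal (prodLaw p q x) = surprisal (p x.1) + surprisal (q x.2) := by
  rw [prodLaw_apply, surprisal_mul (p.coe_le_one _) (q.coe_le_one _)]

/-- The law of the record of a letter: nothing or a letter of law `p`, with probability `1/2`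
each. -/
noncomputable def optionLaw {α : Type*} (p : PMF α) : PMF (Option α) :=
  (PMF.uniformOfFintype Bool).bind fun b => bif b then p.map some else PMF.pure none

lemma surprisal_optionLaw_none_le {α : Type*} (p : PMF α) :
    surprisal (optionLaw p none) ≤ surprisal 2⁻¹ := by
  refine surprisal_antitone ?_
  simp [optionLaw, PMF.bind_apply, tsum_fintype]

lemma surprisal_optionLaw_some_le {α : Type*} (p : PMF α) (x : α) :
    surprisal (optionLaw p (some x)) ≤ surprisal 2⁻¹ + surprisal (p x) := by
  rw [← surprisal_mul (by simp) (p.coe_le_one x)]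
  refine surprisal_antitone ?_
  simpa [optionLaw, PMF.bind_apply, tsum_fintype] using
    mul_le_mul_right (apply_le_map_apply p some x) 2⁻¹

end Code

namespace Markers

variable {G S : Type*} [Group G] (M : Markers G S) {z z₀ : ℕ → G} {s s₀ : ℕ → S} {v w : G}
  {a b c j k : ℕ} {σ : PMF S} {ζ : PMF G} {θ : ℝ≥0∞}

section Resampling

lemma pathProd_update (haj : a ≤ j) (t : S) :
    M.pathProd z (Function.update s j t) a = M.pathProd z s a := by
  induction a with
  | zero => rfl
  | succ a ih => rw [pathProd, pathProd, ih (by omega), Function.update_of_ne (by omega)]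

lemma pathProd_update_letter (haj : a ≤ j) (x : G) :
    M.pathProd (Function.update z j x) s a = M.pathProd z s a := by
  induction a with
  | zero => rfl
  | succ a ih => rw [pathProd, pathProd, ih (by omega), Function.update_of_ne (by omega)]

lemma segment_update (hab : a ≤ b) (hbj : b ≤ j) (t : S) :
    M.segment z (Function.update s j t) a b = M.segment z s a b := by
  rw [segment, segment, pathProd_update M hbj, pathProd_update M (hab.trans hbj)]

lemma inv_pathProd_mul_pathProd_update (hja : j < a) (hab : a ≤ b) (t : S) :
    (M.pathProd z (Function.update s j t) a)⁻¹ * M.pathProd z (Function.update s j t) b =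
      (M.pathProd z s a)⁻¹ * M.pathProd z s b := by
  induction b, hab using Nat.le_induction with
  | base => simp
  | succ b hab ih =>
    rw [inv_pathProd_mul_pathProd_succ, inv_pathProd_mul_pathProd_succ, segment, segment, ih,
      Function.update_of_ne (by omega)]

lemma expect_pow_pathProd (k : ℕ) (f : G → ℝ≥0∞) :
    expect ((ζ * σ.map M.val) ^ k) f =
      expect (iidSeq ζ z₀ k) fun z => expect (iidSeq σ s₀ k) fun s => f (M.pathProd z s k) := by
  induction k generalizing f with
  | zero => simp [one_def, iidSeq, pathProd]
  | succ k ih =>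
    simp only [pow_succ, expect_mul, expect_map, ih, iidSeq, expect_bind, resample, pathProd,
      pathProd_update M le_rfl, pathProd_update_letter M le_rfl, Function.update_self, mul_assoc]
    exact congrArg _ (funext fun z => expect_comm _ _ _)

end Resampling

section Failures

variable {M} (hafter : ∀ u, σ.toOuterMeasure (M.badAfter u) ≤ θ ^ 2)
  (hbefore : ∀ v, σ.toOuterMeasure (M.badBefore v) ≤ θ ^ 2)
include hafter hbefore

lemma toOuterMeasure_forall_fails_le (hθ : θ ≠ 0) (hθt : θ ≠ ⊤) (hab : a ≤ b) (hck : c ≤ k) :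
    (iidSeq σ s₀ k).toOuterMeasure
      {s | ∀ i, b ≤ i → i < c → M.Fails z s (M.pathProd z s k * v) a i} ≤
      2 * (2 * θ) ^ (c - b) := by
  have hmem {i : ℕ} : i ∈ List.range' b (c - b) ↔ b ≤ i ∧ i < c := by
    rw [List.mem_range'_1]
    omega
  have h := iidSeq_toOuterMeasure_forall_le (x₀ := s₀) (k := k) hθ hθt
    (L := fun i => {s | s i ∈ M.badAfter (M.segment z s a i)})
    (R := fun i => {s | s i ∈ M.badBefore ((M.pathProd z s (i + 1))⁻¹ * M.pathProd z s k * v)})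
    (l := List.range' b (c - b)) List.pairwise_lt_range' (p := σ)
    (fun i hi => (hmem.1 hi).2.trans_le hck)
    (fun i hi j hij s t => by
      obtain ⟨hbi, -⟩ := hmem.1 hi
      simp only [Set.mem_ofPred_eq, M.segment_update (hab.trans hbi) hij.le,
        Function.update_of_ne hij.ne])
    (fun i hi j hji s t => by
      obtain ⟨-, hic⟩ := hmem.1 hi
      simp only [Set.mem_ofPred_eq, M.inv_pathProd_mul_pathProd_update (show j < i + 1 by omega)
        (show i + 1 ≤ k by omega), Function.update_of_ne hji.ne'])
    (fun i hi s => by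
      obtain ⟨hbi, -⟩ := hmem.1 hi
      rw [resample, PMF.toOuterMeasure_map_apply]
      simpa only [Set.preimage_ofPred_eq, Set.ofPred_mem_eq, Function.update_self,
        M.segment_update (hab.trans hbi) le_rfl] using hafter (M.segment z s a i))
    (fun i hi s => by
      obtain ⟨-, hic⟩ := hmem.1 hi
      rw [resample, PMF.toOuterMeasure_map_apply]
      simpa only [Set.preimage_ofPred_eq, Set.ofPred_mem_eq, Function.update_self,
        M.inv_pathProd_mul_pathProd_update (Nat.lt_add_one i) (show i + 1 ≤ k by omega)] using
        hbefore ((M.pathProd z s (i + 1))⁻¹ * M.pathProd z s k * v))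
  rw [List.length_range'] at h
  refine (MeasureTheory.measure_mono fun s hs i hi => ?_).trans h
  obtain ⟨hbi, hic⟩ := hmem.1 hi
  simpa only [Fails, Set.mem_union, Set.mem_ofPred_eq, mul_assoc] using hs i hbi hic

lemma toOuterMeasure_fails_le (hθ : θ ≠ 0) (hθt : θ ≠ ⊤) (hab : a ≤ b) (hbk : b < k) :
    (iidSeq σ s₀ k).toOuterMeasure {s | M.Fails z s (M.pathProd z s k * v) a b} ≤ 4 * θ := by
  have h := toOuterMeasure_forall_fails_le hafter hbefore (s₀ := s₀) (z := z) (v := v) hθ hθt hab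
    (Nat.succ_le_of_lt hbk)
  rw [Nat.succ_sub le_rfl, Nat.sub_self, pow_one, ← mul_assoc] at h
  refine (MeasureTheory.measure_mono fun s hs i hbi hib => ?_).trans (h.trans_eq (by norm_num))
  obtain rfl : i = b := by omega
  exact hs

lemma toOuterMeasure_exists_failsOn_le (hθ : θ ≠ 0) (hθ4 : 2 * θ ≤ 2⁻¹) (hbk : b ≤ k) :
    (iidSeq σ s₀ k).toOuterMeasure
      {s | ∃ a < b, M.FailsOn z s (M.pathProd z s k * v) a b} ≤ 8 * θ := by
  have hθt : θ ≠ ⊤ := by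
    rintro rfl
    simp at hθ4
  have hunion : {s | ∃ a < b, M.FailsOn z s (M.pathProd z s k * v) a b} =
      ⋃ a ∈ Finset.range b, {s | M.FailsOn z s (M.pathProd z s k * v) a b} := by
    ext s
    simp
  rw [hunion]
  calc _ ≤ ∑ a ∈ Finset.range b, _ := MeasureTheory.measure_biUnion_finset_le _ _
    _ ≤ ∑ a ∈ Finset.range b, 2 * (2 * θ) ^ (b - a) := Finset.sum_le_sum fun a _ =>
        toOuterMeasure_forall_fails_le hafter hbefore hθ hθt le_rfl hbk
    _ ≤ 2 * (2 * (2 * θ)) := by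
        rw [← Finset.mul_sum]
        gcongr
        exact sum_range_pow_sub_le hθ4 b
    _ = 8 * θ := by ring

lemma toOuterMeasure_isRevealed_le (hθ : θ ≠ 0) (hθ4 : 2 * θ ≤ 2⁻¹) (hbk : b < k) :
    (iidSeq σ s₀ k).toOuterMeasure {s | M.IsRevealed k z s (M.pathProd z s k * v) b} ≤
      24 * θ := by
  have hθt : θ ≠ ⊤ := by
    rintro rfl
    simp at hθ4
  calc _ ≤ _ := (MeasureTheory.measure_union_le _ _).trans
        (add_le_add (MeasureTheory.measure_union_le _ _)
          ((MeasureTheory.measure_union_le _ _)))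
    _ ≤ (4 * θ + 8 * θ) + (4 * θ + 8 * θ) := add_le_add
        (add_le_add (toOuterMeasure_fails_le hafter hbefore hθ hθt (Nat.zero_le _) (by omega))
          (toOuterMeasure_exists_failsOn_le hafter hbefore hθ hθ4 le_rfl))
        (add_le_add (toOuterMeasure_fails_le hafter hbefore hθ hθt le_rfl hbk)
          (toOuterMeasure_exists_failsOn_le hafter hbefore hθ hθ4 hbk.le))
    _ = 24 * θ := by ring

end Failures

section Coding

variable {M} {N : G → ℝ} {A A' L : ℕ} {F : Set G}

lemma surprisal_optionLaw_revealedLetters_le :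
    surprisal (optionLaw ζ (M.revealedLetters F k z s w b)) ≤
      surprisal 2⁻¹ + Fᶜ.indicator (fun x => surprisal (ζ x)) (z b) +
        surprisal (ζ (z b)) * {s | M.IsRevealed k z s w b}.indicator 1 s := by
  rw [revealedLetters]
  split_ifs with h
  · refine (surprisal_optionLaw_some_le ζ (z b)).trans ?_
    rw [add_assoc]
    gcongr
    rcases h.2 with hF | hr
    · rw [Set.indicator_of_mem (show z b ∈ Fᶜ from hF)]
      exact le_self_add
    · rw [Set.indicator_of_mem (show s ∈ {s | M.IsRevealed k z s w b} from hr), Pi.one_apply,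
        mul_one]
      exact le_add_self
  · rw [add_assoc]
    exact (surprisal_optionLaw_none_le ζ).trans le_self_add

lemma surprisal_toOuterMeasure_candidates_le (hs : ∀ j, k ≤ j → s j = s₀ j) :
    surprisal ((prodLaw (iidSeq σ s₀ k) (iidSeq (optionLaw ζ) (fun _ => none) k)).toOuterMeasure
      {m | M.pathProd z s k ∈ M.candidates F k w m.1 m.2}) ≤
    ∑ b ∈ Finset.range k, surprisal (σ (s b)) + ∑ b ∈ Finset.range k,
      (surprisal 2⁻¹ + Fᶜ.indicator (fun x => surprisal (ζ x)) (z b) +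
        surprisal (ζ (z b)) * {s | M.IsRevealed k z s w b}.indicator 1 s) := by
  have hmem : (s, M.revealedLetters F k z s w) ∈
      {m : (ℕ → S) × (ℕ → Option G) | M.pathProd z s k ∈ M.candidates F k w m.1 m.2} :=
    ⟨z, rfl, rfl⟩
  refine (surprisal_antitone (MeasureTheory.measure_mono
    (Set.singleton_subset_iff.2 hmem))).trans ?_
  rw [PMF.toOuterMeasure_apply_singleton, surprisal_prodLaw]
  refine add_le_add (surprisal_iidSeq_le hs) ((surprisal_iidSeq_le fun j hj => ?_).trans
    (Finset.sum_le_sum fun b _ => surprisal_optionLaw_revealedLetters_le))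
  exact if_neg fun h => hj.not_gt h.1

variable (hafter : ∀ u, σ.toOuterMeasure (M.badAfter u) ≤ θ ^ 2)
  (hbefore : ∀ v, σ.toOuterMeasure (M.badBefore v) ≤ θ ^ 2)
include hafter hbefore

lemma expect_surprisal_candidates_le (hθ : θ ≠ 0) (hθ4 : 2 * θ ≤ 2⁻¹) (F : Set G) (k : ℕ)
    (z : ℕ → G) (v : G) :
    (expect (iidSeq σ s₀ k) fun s =>
      surprisal ((prodLaw (iidSeq σ s₀ k) (iidSeq (optionLaw ζ) (fun _ => none) k)).toOuterMeasure
        {m | M.pathProd z s k ∈ M.candidates F k (M.pathProd z s k * v) m.1 m.2})) ≤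
    k * entropy σ + ∑ b ∈ Finset.range k,
      (surprisal 2⁻¹ + Fᶜ.indicator (fun x => surprisal (ζ x)) (z b) +
        24 * θ * surprisal (ζ (z b))) := by
  refine (expect_mono_of_support fun s hs => surprisal_toOuterMeasure_candidates_le
    fun j hj => eq_of_mem_support_iidSeq hs hj).trans ?_
  rw [expect_add, expect_finsetSum, expect_finsetSum]
  refine add_le_add (Eq.le ?_) (Finset.sum_le_sum fun b hb => ?_)
  · rw [Finset.sum_congr rfl fun b hb =>
      expect_iidSeq_apply (Finset.mem_range.1 hb) fun t => surprisal (σ t)]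
    simp [entropy]
  · rw [expect_add, expect_const, expect_const_mul, mul_comm (24 * θ)]
    gcongr
    have hrev := toOuterMeasure_isRevealed_le hafter hbefore (s₀ := s₀) (z := z) (v := v) hθ hθ4
      (Finset.mem_range.1 hb)
    rwa [← expect_indicator] at hrev

/-- A prefix of the random path is recovered from its product with `q`, the markers, the revealed
letters, and one of boundedly many candidates. -/
theorem IsSeparating.entropy_pow_add_entropy_le (hM : M.IsSeparating N A A')
    (hF : ∀ x ∈ F, 0 ≤ N x ∧ N x ≤ L) (hθ : θ ≠ 0) (hθ4 : 2 * θ ≤ 2⁻¹) (hk : 0 < k)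
    (q : PMF G) :
    entropy ((ζ * σ.map M.val) ^ k) + entropy q ≤ entropy ((ζ * σ.map M.val) ^ k * q) +
      (surprisal ((1 + 2 ^ k * ((2 * (k * (2 * A + L) + 2 * A) + 1) * A') : ℕ) : ℝ≥0∞)⁻¹ +
      (k * entropy σ + k * (surprisal 2⁻¹ +
        expect ζ (Fᶜ.indicator fun x => surprisal (ζ x)) + 24 * θ * entropy ζ))) := by
  obtain ⟨s₀, -⟩ := σ.support_nonempty
  refine (entropy_add_entropy_le_of_code _ q
    (prodLaw (iidSeq σ (fun _ => s₀) k) (iidSeq (optionLaw ζ) (fun _ => none) k))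
    (C := fun w m => M.candidates F k w m.1 m.2) (by omega)
    fun w m => encard_candidates_le hM hF hk w m.1 m.2).trans ?_
  gcongr
  rw [expect_pow_pathProd M (z₀ := fun _ => 1) (s₀ := fun _ => s₀)]
  calc _ ≤ expect (iidSeq ζ (fun _ => 1) k) fun z => expect q fun _ =>
        k * entropy σ + ∑ b ∈ Finset.range k,
          (surprisal 2⁻¹ + Fᶜ.indicator (fun x => surprisal (ζ x)) (z b) +
            24 * θ * surprisal (ζ (z b))) :=
        expect_mono fun z => (expect_comm _ q _).trans_le <| expect_mono fun v =>
          expect_surprisal_candidates_le hafter hbefore hθ hθ4 F k z v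
    _ = k * entropy σ + ∑ b ∈ Finset.range k, (surprisal 2⁻¹ +
          expect ζ (Fᶜ.indicator fun x => surprisal (ζ x)) + 24 * θ * entropy ζ) := by
        simp only [expect_const, expect_add, expect_finsetSum]
        refine congrArg _ (Finset.sum_congr rfl fun b hb => ?_)
        have hb := Finset.mem_range.1 hb
        rw [expect_iidSeq_apply hb (Fᶜ.indicator fun x => surprisal (ζ x)), expect_const_mul,
          expect_iidSeq_apply hb fun x => surprisal (ζ x)]
        rfl
    _ = _ := by rw [Finset.sum_const, Finset.card_range, nsmul_eq_mul]

end Coding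

end Markers

/-! ### Geodesics near a contracting axis -/

section RealLine

lemma exists_first_hit {φ : ℝ → ℝ} {a b R : ℝ} (hab : a ≤ b) (hφ : ContinuousOn φ (Set.Icc a b))
    (ha : R ≤ φ a) (hb : φ b ≤ R) :
    ∃ s ∈ Set.Icc a b, φ s = R ∧ ∀ u ∈ Set.Icc a s, R ≤ φ u := by
  have hcompact : IsCompact (Set.Icc a b ∩ φ ⁻¹' Set.Iic R) :=
    isCompact_Icc.of_isClosed_subset (hφ.preimage_isClosed_of_isClosed isClosed_Icc isClosed_Iic)
      Set.inter_subset_left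
  obtain ⟨s, ⟨hs, hsR⟩, hmin⟩ := hcompact.exists_isLeast ⟨b, ⟨hab, le_rfl⟩, hb⟩
  obtain ⟨x, hx, hxR⟩ := intermediate_value_Icc' hs.1 (hφ.mono (Set.Icc_subset_Icc_right hs.2))
    ⟨hsR, ha⟩
  obtain rfl : x = s := le_antisymm hx.2 (hmin ⟨⟨hx.1, hx.2.trans hs.2⟩, hxR.le⟩)
  refine ⟨x, hs, hxR, fun u hu => ?_⟩
  by_contra! hlt
  obtain rfl : u = x := le_antisymm hu.2 (hmin ⟨⟨hu.1, hu.2.trans hs.2⟩, hlt.le⟩)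
  exact hlt.ne hxR

lemma exists_dist_le_of_forall_or {P Q : ℝ → Prop} {l ε : ℝ} (hl : 0 ≤ l) (hε : 0 < ε)
    (hP : P 0) (hQ : Q l) (h : ∀ u ∈ Set.Icc 0 l, P u ∨ Q u) :
    ∃ u ∈ Set.Icc 0 l, ∃ v ∈ Set.Icc 0 l, |u - v| ≤ ε ∧ P u ∧ Q v := by
  set S : Set ℝ := {u ∈ Set.Icc 0 l | P u}
  have hS0 : (0 : ℝ) ∈ S := ⟨⟨le_rfl, hl⟩, hP⟩
  have hbdd : BddAbove S := ⟨l, fun v hv => hv.1.2⟩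
  obtain ⟨u, hu, hlt⟩ := exists_lt_of_lt_csSup ⟨0, hS0⟩ (sub_lt_self (sSup S) (half_pos hε))
  have hle : u ≤ sSup S := le_csSup hbdd hu
  have hsup0 : 0 ≤ sSup S := le_csSup hbdd hS0
  rcases le_or_gt l (sSup S + ε / 2) with hend | hend
  · exact ⟨u, hu.1, l, ⟨hl, le_rfl⟩, abs_le.2 ⟨by linarith, by linarith [hu.1.2]⟩, hu.2, hQ⟩
  · have hv : sSup S + ε / 2 ∈ Set.Icc 0 l := ⟨by linarith, hend.le⟩
    refine ⟨u, hu.1, _, hv, abs_le.2 ⟨by linarith, by linarith⟩, hu.2, (h _ hv).resolve_left ?_⟩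
    exact fun hPv => absurd (le_csSup hbdd ⟨hv, hPv⟩) (by linarith)

end RealLine

section UnitSpeed

variable {X : Type*} [MetricSpace X]

/-- `f` is a geodesic parametrised by arclength on `[0, l]`. Unlike `IsGeodesicSegment`, this does
not name the endpoints, which makes it convenient to restrict and to reverse. -/
structure IsUnitSpeedOn (f : ℝ → X) (l : ℝ) : Prop where
  nonneg : 0 ≤ l
  dist_eq : ∀ s ∈ Set.Icc 0 l, ∀ t ∈ Set.Icc 0 l, dist (f s) (f t) = |s - t|

lemma _root_.IsGeodesicSegment.isUnitSpeedOn {f : ℝ → X} {x y : X} (h : IsGeodesicSegment f x y) :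
    IsUnitSpeedOn f (dist x y) :=
  ⟨dist_nonneg, h.2.2⟩

namespace IsUnitSpeedOn

variable {f : ℝ → X} {l : ℝ}

lemma restrict (h : IsUnitSpeedOn f l) {s t : ℝ} (hs : 0 ≤ s) (hst : s ≤ t) (ht : t ≤ l) :
    IsUnitSpeedOn (fun u => f (s + u)) (t - s) := by
  refine ⟨by linarith, fun a ha b hb => ?_⟩
  rw [h.dist_eq _ ⟨by linarith [ha.1], by linarith [ha.2]⟩ _
    ⟨by linarith [hb.1], by linarith [hb.2]⟩, add_sub_add_left_eq_sub]

lemma reverse (h : IsUnitSpeedOn f l) : IsUnitSpeedOn (fun u => f (l - u)) l := by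
  refine ⟨h.nonneg, fun a ha b hb => ?_⟩
  rw [h.dist_eq _ ⟨by linarith [ha.2], by linarith [ha.1]⟩ _
    ⟨by linarith [hb.2], by linarith [hb.1]⟩, sub_sub_sub_cancel_left, abs_sub_comm]

lemma dist_endpoints (h : IsUnitSpeedOn f l) : dist (f 0) (f l) = l := by
  rw [h.dist_eq 0 ⟨le_rfl, h.nonneg⟩ l ⟨h.nonneg, le_rfl⟩, zero_sub, abs_neg,
    abs_of_nonneg h.nonneg]

lemma isGeodesicSegment (h : IsUnitSpeedOn f l) : IsGeodesicSegment f (f 0) (f l) := by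
  refine ⟨rfl, ?_, ?_⟩ <;> rw [h.dist_endpoints]
  exact h.dist_eq

lemma infDist_le (h : IsUnitSpeedOn f l) (B : Set X) {s t : ℝ} (hs : s ∈ Set.Icc 0 l)
    (ht : t ∈ Set.Icc 0 l) : Metric.infDist (f s) B ≤ Metric.infDist (f t) B + |s - t| := by
  rw [← h.dist_eq s hs t ht]
  exact Metric.infDist_le_infDist_add_dist

lemma continuousOn_infDist (h : IsUnitSpeedOn f l) (B : Set X) :
    ContinuousOn (fun u => Metric.infDist (f u) B) (Set.Icc 0 l) := by
  refine (Metric.continuous_infDist_pt B).comp_continuousOn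
    (LipschitzOnWith.of_dist_le_mul (K := 1) fun s hs t ht => ?_).continuousOn
  rw [h.dist_eq s hs t ht, Real.dist_eq, NNReal.coe_one, one_mul]

lemma exists_last_hit (h : IsUnitSpeedOn f l) {R : ℝ} {B : Set X}
    (h0 : Metric.infDist (f 0) B ≤ R) {u : ℝ} (hu : u ∈ Set.Icc 0 l)
    (hfar : R ≤ Metric.infDist (f u) B) :
    ∃ s ∈ Set.Icc 0 u, Metric.infDist (f s) B = R ∧
      ∀ v ∈ Set.Icc s u, R ≤ Metric.infDist (f v) B := by
  have hcont : ContinuousOn (fun v => Metric.infDist (f (u - v)) B) (Set.Icc 0 u) :=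
    ((h.continuousOn_infDist B).mono (Set.Icc_subset_Icc_right hu.2)).comp (by fun_prop)
      fun v hv => ⟨by linarith [hv.2], by linarith [hv.1]⟩
  obtain ⟨r, hr, hrR, hge⟩ := exists_first_hit hu.1 hcont (by simpa using hfar) (by simpa using h0)
  refine ⟨u - r, ⟨by linarith [hr.2], by linarith [hr.1]⟩, hrR, fun v hv => ?_⟩
  simpa using hge (u - v) ⟨by linarith [hv.2], by linarith [hv.1]⟩

end IsUnitSpeedOn

end UnitSpeed

section ContractingAxis

variable {X : Type*} [MetricSpace X]

/-- A `K`-contracting axis whose constant satisfies the standing normalisation `1 < K`. -/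
structure IsContracting (K : ℝ) (γ : ℤ → X) : Prop where
  one_lt : 1 < K
  isContractingAxis : IsContractingAxisZ K γ

/-- The point `γ i` is a nearest-point projection of `x` to the axis `γ`. Working with the index
`i` instead of the point keeps track of the position along the axis. -/
def IsNearestIndex (γ : ℤ → X) (x : X) (i : ℤ) : Prop :=
  ∀ j, dist x (γ i) ≤ dist x (γ j)

variable {γ : ℤ → X} {K : ℝ} {f : ℝ → X} {l : ℝ} {i j n : ℤ}

lemma IsNearestIndex.infDist_eq {x : X} (h : IsNearestIndex γ x i) :
    Metric.infDist x (Set.range γ) = dist x (γ i) := by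
  refine le_antisymm (Metric.infDist_le_dist_of_mem (Set.mem_range_self i))
    ((Metric.le_infDist (Set.range_nonempty γ)).2 ?_)
  rintro _ ⟨j, rfl⟩
  exact h j

namespace IsContracting

lemma pos (h : IsContracting K γ) : 0 < K := zero_lt_one.trans h.one_lt

lemma abs_sub_le (h : IsContracting K γ) (i j : ℤ) :
    |(i : ℝ) - j| ≤ K * (dist (γ i) (γ j) + K) := by
  have := (h.isContractingAxis.1 i j).1
  rw [← div_le_iff₀' h.pos]
  linarith

lemma le_dist_of_lt_abs_sub (h : IsContracting K γ) (hij : 2 * K ^ 2 < |(i : ℝ) - j|) :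
    K ≤ dist (γ i) (γ j) := by
  by_contra! hlt
  have := mul_lt_mul_of_pos_left hlt h.pos
  nlinarith [h.abs_sub_le i j]

lemma exists_isNearestIndex (h : IsContracting K γ) (x : X) : ∃ i, IsNearestIndex γ x i := by
  set B : ℝ := K * (2 * dist x (γ 0) + K)
  obtain ⟨i, -, hmin⟩ := (Finset.Icc (-(⌈B⌉₊ : ℤ)) ⌈B⌉₊).exists_min_image (fun j => dist x (γ j))
    ⟨0, by simp⟩
  refine ⟨i, fun j => ?_⟩
  by_cases hj : j ∈ Finset.Icc (-(⌈B⌉₊ : ℤ)) ⌈B⌉₊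
  · exact hmin j hj
  refine (hmin 0 (by simp)).trans ?_
  by_contra! hlt
  refine hj (Finset.mem_Icc.2 (abs_le.1 ?_))
  have hdist : dist (γ j) (γ 0) + K ≤ 2 * dist x (γ 0) + K := by
    linarith [dist_triangle_left (γ j) (γ 0) x]
  have hB : |(j : ℝ)| ≤ B := by
    simpa using (h.abs_sub_le j 0).trans (mul_le_mul_of_nonneg_left hdist h.pos.le)
  exact_mod_cast hB.trans (Nat.le_ceil B)

lemma dist_lt_of_forall_le_infDist (h : IsContracting K γ) (hf : IsUnitSpeedOn f l) {s t : ℝ}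
    (hs : 0 ≤ s) (hst : s ≤ t) (ht : t ≤ l)
    (hfar : ∀ u ∈ Set.Icc s t, K ≤ Metric.infDist (f u) (Set.range γ))
    (hi : IsNearestIndex γ (f s) i) (hj : IsNearestIndex γ (f t) j) : dist (γ i) (γ j) < K := by
  have hres := hf.restrict hs hst ht
  have hdiam := h.isContractingAxis.2 _ _ _ hres.isGeodesicSegment <| by
    rw [hres.dist_endpoints]
    exact fun u hu => hfar _ ⟨by linarith [hu.1], by linarith [hu.2]⟩
  rw [hres.dist_endpoints] at hdiam
  have hmem : ∀ u ∈ Set.Icc s t, ∀ k, IsNearestIndex γ (f u) k →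
      γ k ∈ projSetOf (Set.range γ) ((fun u => f (s + u)) '' Set.Icc 0 (t - s)) :=
    fun u hu k hk => Set.mem_iUnion₂.2
      ⟨f u, ⟨u - s, ⟨by linarith [hu.1], by linarith [hu.2]⟩, by simp⟩, ⟨k, rfl⟩,
        hk.infDist_eq.symm⟩
  have hlt := (Metric.edist_le_ediam_of_mem (hmem s ⟨le_rfl, hst⟩ i hi)
    (hmem t ⟨hst, le_rfl⟩ j hj)).trans_lt hdiam
  rwa [edist_dist, ENNReal.ofReal_lt_ofReal_iff h.pos] at hlt

lemma exists_dist_le_of_infDist_le (h : IsContracting K γ) (hf : IsUnitSpeedOn f l)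
    (hi : IsNearestIndex γ (f 0) i) {c : ℝ} (hc : c ∈ Set.Icc 0 l)
    (hcK : Metric.infDist (f c) (Set.range γ) ≤ K) :
    ∃ s ∈ Set.Icc 0 c, dist (f s) (γ i) ≤ 2 * K := by
  rcases le_total (Metric.infDist (f 0) (Set.range γ)) K with h0 | h0
  · exact ⟨0, ⟨le_rfl, hc.1⟩, by linarith [hi.infDist_eq, h.pos]⟩
  obtain ⟨s, hs, hsK, hfar⟩ := exists_first_hit hc.1
    ((hf.continuousOn_infDist _).mono (Set.Icc_subset_Icc_right hc.2)) h0 hcK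
  obtain ⟨k, hk⟩ := h.exists_isNearestIndex (f s)
  have hik := h.dist_lt_of_forall_le_infDist hf le_rfl hs.1 (hs.2.trans hc.2) hfar hi hk
  exact ⟨s, hs, by linarith [dist_triangle_right (f s) (γ i) (γ k), hk.infDist_eq]⟩

lemma exists_dist_le_of_le_dist (h : IsContracting K γ) (hf : IsUnitSpeedOn f l)
    (hi : IsNearestIndex γ (f 0) i) (hj : IsNearestIndex γ (f l) j) (hij : K ≤ dist (γ i) (γ j)) :
    ∃ s t, 0 ≤ s ∧ s ≤ t ∧ t ≤ l ∧ dist (f s) (γ i) ≤ 2 * K ∧ dist (f t) (γ j) ≤ 2 * K := by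
  obtain ⟨c, hc, hcK⟩ : ∃ c ∈ Set.Icc 0 l, Metric.infDist (f c) (Set.range γ) ≤ K := by
    by_contra! hfar
    exact hij.not_gt (h.dist_lt_of_forall_le_infDist hf le_rfl hf.nonneg le_rfl
      (fun u hu => (hfar u hu).le) hi hj)
  obtain ⟨s, hs, hsd⟩ := h.exists_dist_le_of_infDist_le hf hi hc hcK
  obtain ⟨t, ht, htd⟩ := h.exists_dist_le_of_infDist_le hf.reverse (i := j) (by simpa using hj)
    (c := l - c) ⟨by linarith [hc.2], by linarith [hc.1]⟩ (by simpa using hcK)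
  exact ⟨s, l - t, hs.1, by linarith [hs.2, ht.2], by linarith [ht.1], hsd, htd⟩

lemma infDist_le_of_infDist_endpoints_le (h : IsContracting K γ) (hf : IsUnitSpeedOn f l) {R : ℝ}
    (hR : K ≤ R) (h0 : Metric.infDist (f 0) (Set.range γ) ≤ R)
    (hl : Metric.infDist (f l) (Set.range γ) ≤ R) {u : ℝ} (hu : u ∈ Set.Icc 0 l) :
    Metric.infDist (f u) (Set.range γ) ≤ 3 * R := by
  rcases le_total (Metric.infDist (f u) (Set.range γ)) R with hle | hfar
  · linarith [h.pos]
  obtain ⟨s, hs, hsR, hgeL⟩ := hf.exists_last_hit h0 hu hfar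
  obtain ⟨t, ht, htR, hgeR⟩ := exists_first_hit hu.2
    ((hf.continuousOn_infDist (Set.range γ)).mono (Set.Icc_subset_Icc_left hu.1)) hfar hl
  have hsI : s ∈ Set.Icc 0 l := ⟨hs.1, hs.2.trans hu.2⟩
  have htI : t ∈ Set.Icc 0 l := ⟨hu.1.trans ht.1, ht.2⟩
  obtain ⟨i, hi⟩ := h.exists_isNearestIndex (f s)
  obtain ⟨j, hj⟩ := h.exists_isNearestIndex (f t)
  have hij : dist (γ i) (γ j) < K :=
    h.dist_lt_of_forall_le_infDist hf hs.1 (hs.2.trans ht.1) ht.2 (fun v hv =>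
      hR.trans <| (le_total v u).elim (fun hvu => hgeL v ⟨hv.1, hvu⟩)
        fun huv => hgeR v ⟨huv, hv.2⟩) hi hj
  have hst : t - s ≤ 3 * R := by
    have hdist := hf.dist_eq t htI s hsI
    rw [abs_of_nonneg (by linarith [hs.2, ht.1]), dist_comm] at hdist
    linarith [dist_triangle4_right (f s) (f t) (γ i) (γ j), hi.infDist_eq, hj.infDist_eq]
  have hus := hf.infDist_le (Set.range γ) hu hsI
  have hut := hf.infDist_le (Set.range γ) hu htI
  rw [abs_of_nonneg (by linarith [hs.2])] at hus
  rw [abs_of_nonpos (by linarith [ht.1])] at hut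
  linarith

end IsContracting

/-- The distance within which a geodesic fellow-travels a `K`-contracting axis between its entry
and exit points. -/
noncomputable def fellowDist (K : ℝ) : ℝ := 6 * K + (K * (K * (13 * K + 2)) + K)

namespace IsContracting

lemma exists_dist_le_fellowDist_of_endpoints (h : IsContracting K γ) (hf : IsUnitSpeedOn f l)
    (hi : dist (f 0) (γ i) ≤ 2 * K) (hj : dist (f l) (γ j) ≤ 2 * K) (hin : i ≤ n) (hnj : n ≤ j) :
    ∃ u ∈ Set.Icc 0 l, dist (f u) (γ n) ≤ fellowDist K := by
  have hK := h.pos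
  have hnear : ∀ u ∈ Set.Icc 0 l, ∃ m, dist (f u) (γ m) ≤ 6 * K := by
    intro u hu
    obtain ⟨m, hm⟩ := h.exists_isNearestIndex (f u)
    have := h.infDist_le_of_infDist_endpoints_le hf (R := 2 * K) (by linarith)
      ((Metric.infDist_le_dist_of_mem (Set.mem_range_self i)).trans hi)
      ((Metric.infDist_le_dist_of_mem (Set.mem_range_self j)).trans hj) hu
    exact ⟨m, by linarith [hm.infDist_eq]⟩
  obtain ⟨u, hu, v, hv, huv, ⟨m, hmn, hum⟩, m', hnm', hvm'⟩ :=
    exists_dist_le_of_forall_or (P := fun u => ∃ m ≤ n, dist (f u) (γ m) ≤ 6 * K)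
      (Q := fun u => ∃ m, n ≤ m ∧ dist (f u) (γ m) ≤ 6 * K)
      hf.nonneg two_pos ⟨i, hin, by linarith⟩ ⟨j, hnj, by linarith⟩
      fun u hu => (hnear u hu).elim fun m hm =>
        (le_total m n).imp (fun hmn => ⟨m, hmn, hm⟩) fun hnm => ⟨m, hnm, hm⟩
  have hmm' : dist (γ m) (γ m') ≤ 12 * K + 2 := by
    have := hf.dist_eq u hu v hv
    linarith [dist_triangle_left (γ m) (γ m') (f u), dist_triangle (f u) (f v) (γ m')]
  have hmn' : |(m : ℝ) - n| ≤ K * (13 * K + 2) := by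
    have hmn : (m : ℝ) ≤ n := by exact_mod_cast hmn
    have hnm' : (n : ℝ) ≤ m' := by exact_mod_cast hnm'
    calc |(m : ℝ) - n| ≤ |(m : ℝ) - m'| := by
          rw [abs_of_nonpos (by linarith), abs_of_nonpos (by linarith)]; linarith
      _ ≤ K * (dist (γ m) (γ m') + K) := h.abs_sub_le m m'
      _ ≤ K * (13 * K + 2) := mul_le_mul_of_nonneg_left (by linarith) hK.le
  refine ⟨u, hu, ?_⟩
  calc dist (f u) (γ n) ≤ dist (f u) (γ m) + dist (γ m) (γ n) := dist_triangle ..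
    _ ≤ 6 * K + (K * |(m : ℝ) - n| + K) := add_le_add hum (h.isContractingAxis.1 m n).2
    _ ≤ fellowDist K := by unfold fellowDist; gcongr

lemma exists_dist_le_fellowDist_of_le (h : IsContracting K γ) (hf : IsUnitSpeedOn f l)
    (hi : IsNearestIndex γ (f 0) i) (hj : IsNearestIndex γ (f l) j)
    (hij : 2 * K ^ 2 < |(i : ℝ) - j|) (hin : i ≤ n) (hnj : n ≤ j) :
    ∃ u ∈ Set.Icc 0 l, dist (f u) (γ n) ≤ fellowDist K := by
  obtain ⟨s, t, hs, hst, ht, hsd, htd⟩ :=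
    h.exists_dist_le_of_le_dist hf hi hj (h.le_dist_of_lt_abs_sub hij)
  obtain ⟨u, hu, hud⟩ := h.exists_dist_le_fellowDist_of_endpoints (hf.restrict hs hst ht)
    (i := i) (j := j) (by simpa using hsd) (by simpa using htd) hin hnj
  exact ⟨s + u, ⟨by linarith [hu.1], by linarith [hu.2]⟩, hud⟩

lemma exists_dist_le_fellowDist (h : IsContracting K γ) (hf : IsUnitSpeedOn f l)
    (hi : IsNearestIndex γ (f 0) i) (hj : IsNearestIndex γ (f l) j)
    (hij : 2 * K ^ 2 < |(i : ℝ) - j|) (hn : n ∈ Set.uIcc i j) :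
    ∃ u ∈ Set.Icc 0 l, dist (f u) (γ n) ≤ fellowDist K := by
  rcases Set.mem_uIcc.1 hn with ⟨hin, hnj⟩ | ⟨hjn, hni⟩
  · exact h.exists_dist_le_fellowDist_of_le hf hi hj hij hin hnj
  · obtain ⟨u, hu, hud⟩ := h.exists_dist_le_fellowDist_of_le hf.reverse (i := j) (j := i)
      (by simpa using hj) (by simpa using hi) (by rwa [abs_sub_comm]) hjn hni
    exact ⟨l - u, ⟨by linarith [hu.2], by linarith [hu.1]⟩, hud⟩

end IsContracting

end ContractingAxis

/-! ### The elementary closure of a contracting WPD element -/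

section OrbitMap

variable {G X : Type*} [Group G] [MulAction G X] {o : X} {g : G}

/-- The orbit map `i ↦ gⁱ • o`, viewed as a parametrised axis of `g`. -/
def orbitMap (o : X) (g : G) : ℤ → X := fun i => g ^ i • o

lemma orbitMap_zero : orbitMap o g 0 = o := by simp [orbitMap]

lemma orbitMap_add (i j : ℤ) : orbitMap o g (i + j) = g ^ i • orbitMap o g j := by
  simp [orbitMap, zpow_add, mul_smul]

lemma orbitMap_natCast (n : ℕ) : orbitMap o g n = g ^ n • o := by simp [orbitMap]

end OrbitMap

section Axis

variable {G X : Type*} [Group G] [MetricSpace X] [MulAction G X] {o : X} {g : G}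

/-- Every nearest-point projection of `x` to the axis of `g` lies among the `gⁱ • o` with
`|i| ≤ C`. -/
def ProjectsWithin (o : X) (g : G) (C : ℕ) (x : X) : Prop :=
  ∀ i, IsNearestIndex (orbitMap o g) x i → |i| ≤ C

/-- The coarse stabiliser of the pair formed by `o` and `g ^ N • o`, except that the point sent near
`g ^ N • o` may be any point of the axis. -/
def coarseStabilizer (o : X) (g : G) (D : ℝ) (N : ℕ) : Set G :=
  {k | dist o (k • o) ≤ D ∧ ∃ e, dist (k • orbitMap o g e) (orbitMap o g N) ≤ D}

/-- The indices at which the axis of `g` is `D`-close to its translate by `a`. -/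
def sharedIndices (o : X) (g a : G) (D : ℝ) : Set ℤ :=
  {l | ∃ m, dist (orbitMap o g l) (a • orbitMap o g m) ≤ D}

lemma ProjectsWithin.mono {C C' : ℕ} {x : X} (h : ProjectsWithin o g C x) (hC : C ≤ C') :
    ProjectsWithin o g C' x :=
  fun i hi => (h i hi).trans (by exact_mod_cast hC)

/-- No point is thrown far along the axis of `g` by two different members of the family. -/
def IsSchottkyFamily {ι : Type*} (o : X) (g : G) (C : ℕ) (b : ι → G) : Prop :=
  Pairwise fun r s => ∀ x, ProjectsWithin o g C (b r • x) ∨ ProjectsWithin o g C (b s • x)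

lemma IsSchottkyFamily.mono {ι : Type*} {C C' : ℕ} {b : ι → G} (h : IsSchottkyFamily o g C b)
    (hC : C ≤ C') : IsSchottkyFamily o g C' b :=
  fun _ _ hrs x => (h hrs x).imp (·.mono hC) (·.mono hC)

lemma IsSchottkyFamily.eq_of_not_projectsWithin {ι : Type*} {C : ℕ} {b : ι → G}
    (h : IsSchottkyFamily o g C b) {r s : ι} {x : X} (hr : ¬ ProjectsWithin o g C (b r • x))
    (hs : ¬ ProjectsWithin o g C (b s • x)) : r = s :=
  by_contra fun hrs => (h hrs x).elim hr hs

lemma exists_isUnitSpeedOn (hgeo : IsGeodesicSpace X) (x y : X) :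
    ∃ f : ℝ → X, IsUnitSpeedOn f (dist x y) ∧ f 0 = x ∧ f (dist x y) = y :=
  (hgeo x y).imp fun _ hf => ⟨hf.isUnitSpeedOn, hf.1, hf.2.1⟩

lemma IsContracting.zpow_injective {K : ℝ} (hc : IsContracting K (orbitMap o g)) :
    Function.Injective fun i : ℤ => g ^ i := by
  rw [injective_zpow_iff_not_isOfFinOrder, isOfFinOrder_iff_pow_eq_one]
  rintro ⟨n, hn, hgn⟩
  obtain ⟨k, hk⟩ := exists_nat_gt (K * K)
  have hfix : orbitMap o g (n * k : ℕ) = o := by rw [orbitMap_natCast, pow_mul, hgn]; simp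
  have habs := hc.abs_sub_le (n * k : ℕ) 0
  rw [hfix, orbitMap_zero, dist_self, zero_add, Int.cast_zero, sub_zero, Int.cast_natCast,
    Nat.abs_cast] at habs
  have : (k : ℝ) ≤ (n * k : ℕ) := by exact_mod_cast Nat.le_mul_of_pos_left k hn
  linarith

end Axis

section IsometricAction

variable {G X : Type*} [Group G] [MetricSpace X] [MulAction G X] [IsIsometricSMul G X]
  {o : X} {g : G} {K D : ℝ} {i j l n : ℤ} {N : ℕ}

lemma dist_inv_smul_left (a : G) (x y : X) : dist (a⁻¹ • x) y = dist x (a • y) := by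
  rw [← dist_smul a, smul_inv_smul]

lemma IsUnitSpeedOn.smul {f : ℝ → X} {L : ℝ} (h : IsUnitSpeedOn f L) (a : G) :
    IsUnitSpeedOn (fun u => a • f u) L :=
  ⟨h.nonneg, fun s hs t ht => by rw [dist_smul, h.dist_eq s hs t ht]⟩

lemma IsNearestIndex.zpow_smul {x : X} (h : IsNearestIndex (orbitMap o g) x i) (n : ℤ) :
    IsNearestIndex (orbitMap o g) (g ^ n • x) (n + i) := by
  intro j
  obtain ⟨k, rfl⟩ : ∃ k, j = n + k := ⟨j - n, by ring⟩
  simpa only [orbitMap_add, dist_smul] using h k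

lemma encard_le_encard_of_dist_smul_le {S : Set G} {x y : X} {R : ℝ}
    (hx : ∀ a ∈ S, ∀ b ∈ S, dist (a • x) (b • x) ≤ R)
    (hy : ∀ a ∈ S, ∀ b ∈ S, dist (a • y) (b • y) ≤ R) :
    S.encard ≤ {h : G | dist x (h • x) ≤ R ∧ dist y (h • y) ≤ R}.encard := by
  rcases S.eq_empty_or_nonempty with rfl | ⟨a, ha⟩
  · simp
  refine Set.encard_le_encard_of_injOn (f := (a⁻¹ * ·)) (fun b hb => ?_)
    (mul_right_injective a⁻¹).injOn
  have hmove : ∀ z : X, dist z ((a⁻¹ * b) • z) = dist (b • z) (a • z) := fun z => by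
    rw [mul_smul, dist_comm, dist_inv_smul_left]
  exact ⟨(hmove x).trans_le (hx b hb a ha), (hmove y).trans_le (hy b hb a ha)⟩

lemma finite_setOf_dist_smul_le {x y x' y' : X}
    (h : {a : G | dist x (a • x) ≤ 2 * D ∧ dist y (a • y) ≤ 2 * D}.Finite) :
    {a : G | dist x (a • x') ≤ D ∧ dist (a • y') y ≤ D}.Finite := by
  rw [← Set.finite_inv, ← Set.encard_lt_top_iff]
  refine (encard_le_encard_of_dist_smul_le (x := x) (y := y) (R := 2 * D) ?_ ?_).trans_lt
    (Set.encard_lt_top_iff.2 h) <;> rintro a ⟨hax, hay⟩ b ⟨hbx, hby⟩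
  · have ha : dist (a • x) x' ≤ D := by rwa [← inv_inv a, dist_inv_smul_left]
    have hb : dist (b • x) x' ≤ D := by rwa [← inv_inv b, dist_inv_smul_left]
    linarith [dist_triangle_right (a • x) (b • x) x']
  · rw [dist_inv_smul_left] at hay hby
    linarith [dist_triangle_left (a • y) (b • y) y']

lemma exists_mul_zpow_mem_coarseStabilizer {a : G} (h₀ : l ∈ sharedIndices o g a D)
    (hN : l + N ∈ sharedIndices o g a D) :
    ∃ m : ℤ, g ^ (-l) * a * g ^ m ∈ coarseStabilizer o g D N := by
  obtain ⟨m, hm⟩ := h₀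
  obtain ⟨m', hm'⟩ := hN
  refine ⟨m, ?_, m' - m, ?_⟩
  · rw [mul_smul, mul_smul, zpow_neg, dist_comm, dist_inv_smul_left, dist_comm]
    exact hm
  · rwa [mul_smul, mul_smul, zpow_neg, dist_inv_smul_left, ← orbitMap_add, ← orbitMap_add,
      add_sub_cancel, dist_comm]

lemma IsContracting.exists_finite_coarseStabilizer (hc : IsContracting K (orbitMap o g))
    (hwpd : IsWPD o g) (hD : 0 ≤ D) :
    ∃ N, (coarseStabilizer o g D N).Finite := by
  obtain ⟨N, -, hfin⟩ := hwpd (2 * D) (by linarith)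
  simp only [mul_smul, ← orbitMap_natCast] at hfin
  set n : ℕ := ⌈K * (D + dist o (orbitMap o g N) + D + K)⌉₊
  refine ⟨N, ((Finset.Icc (-(n : ℤ)) n).finite_toSet.biUnion fun e _ =>
    finite_setOf_dist_smul_le (x' := o) (y' := orbitMap o g e) hfin).subset ?_⟩
  rintro k ⟨hko, e, hke⟩
  refine Set.mem_biUnion (Finset.mem_coe.2 (Finset.mem_Icc.2 (abs_le.1 ?_))) ⟨hko, hke⟩
  have hdist : dist (orbitMap o g e) (orbitMap o g 0) ≤ D + dist o (orbitMap o g N) + D := by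
    rw [← dist_smul k, orbitMap_zero, dist_comm o (orbitMap o g N)]
    exact (dist_triangle4 _ (orbitMap o g N) o _).trans (by gcongr)
  have he : |(e : ℝ)| ≤ K * (D + dist o (orbitMap o g N) + D + K) := by
    simpa using (hc.abs_sub_le e 0).trans
      (mul_le_mul_of_nonneg_left (add_le_add_left hdist K) hc.pos.le)
  exact_mod_cast he.trans (Nat.le_ceil _)

end IsometricAction

section ElementaryClosure

variable {G : Type*} [Group G] {g a : G}

/-- The elementary closure of `g`: the elements that conjugate some nontrivial power of `g` to a
nontrivial power of `g`. -/
def elementaryClosure (g : G) : Subgroup G where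
  carrier := {h | ∃ p q : ℤ, p ≠ 0 ∧ q ≠ 0 ∧ h * g ^ p * h⁻¹ = g ^ q}
  one_mem' := ⟨1, 1, one_ne_zero, one_ne_zero, by simp⟩
  mul_mem' := by
    rintro a b ⟨p, q, hp, hq, ha⟩ ⟨p', q', hp', hq', hb⟩
    refine ⟨p' * p, q * q', mul_ne_zero hp' hp, mul_ne_zero hq hq', ?_⟩
    calc a * b * g ^ (p' * p) * (a * b)⁻¹ = a * (b * g ^ p' * b⁻¹) ^ p * a⁻¹ := by
          rw [conj_zpow, zpow_mul]; group
      _ = (a * g ^ p * a⁻¹) ^ q' := by rw [hb, conj_zpow, ← zpow_mul, ← zpow_mul, mul_comm]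
      _ = g ^ (q * q') := by rw [ha, zpow_mul]
  inv_mem' := by
    rintro a ⟨p, q, hp, hq, h⟩
    exact ⟨q, p, hq, hp, by rw [← h]; group⟩

lemma zpow_mem_elementaryClosure (i : ℤ) : g ^ i ∈ elementaryClosure g :=
  zpow_mem (show g ∈ elementaryClosure g from ⟨1, 1, one_ne_zero, one_ne_zero, by simp⟩) i

lemma mem_elementaryClosure_of_mul_zpow_eq (hg : Function.Injective fun i : ℤ => g ^ i)
    {l l' m m' : ℤ} (hne : l ≠ l') (h : g ^ l * a * g ^ m = g ^ l' * a * g ^ m') :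
    a ∈ elementaryClosure g := by
  have hconj : a * g ^ (m - m') * a⁻¹ = g ^ (l' - l) :=
    calc a * g ^ (m - m') * a⁻¹ = g ^ (-l) * (g ^ l * a * g ^ m) * g ^ (-m') * a⁻¹ := by group
      _ = g ^ (l' - l) := by rw [h]; group
  refine ⟨m - m', l' - l, fun h0 => hne (hg ?_), sub_ne_zero.2 hne.symm, hconj⟩
  rw [h0, zpow_zero, mul_one, mul_inv_cancel, zpow_sub, eq_comm, mul_inv_eq_one] at hconj
  exact hconj.symm

end ElementaryClosure

section SchottkyWord

/-- The words `tˡ a t^(J - l)`, `l ≤ J`: for `t` a power of `g` and `a` outside the elementary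
closure of `g`, any two of them (and of their inverses) are in general position with respect to the
axis of `g`. -/
def schottkyWord {M : Type*} [Monoid M] (t a : M) {J : ℕ} (l : Fin (J + 1)) : M :=
  t ^ (l : ℕ) * a * t ^ (J - l)

lemma map_schottkyWord {M N : Type*} [Monoid M] [Monoid N] (f : M →* N) (t a : M) {J : ℕ}
    (l : Fin (J + 1)) : f (schottkyWord t a l) = schottkyWord (f t) (f a) l := by
  simp only [schottkyWord, map_mul, map_pow]

variable {G : Type*} [Group G] (t a : G) {J : ℕ} (r s : Fin (J + 1))

lemma schottkyWord_eq : schottkyWord t a r = t ^ (r : ℤ) * a * t ^ ((J : ℤ) - r) := by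
  rw [schottkyWord, ← zpow_natCast, ← zpow_natCast, Nat.cast_sub (Nat.lt_succ_iff.1 r.2)]

lemma schottkyWord_mul_inv : schottkyWord t a r * (schottkyWord t a s)⁻¹ =
    t ^ (r : ℤ) * (a * t ^ ((s : ℤ) - r) * a⁻¹) * t ^ (-(s : ℤ)) := by
  rw [schottkyWord_eq, schottkyWord_eq]; group

lemma schottkyWord_inv_mul : (schottkyWord t a r)⁻¹ * schottkyWord t a s =
    t ^ ((r : ℤ) - J) * (a⁻¹ * t ^ ((s : ℤ) - r) * a) * t ^ ((J : ℤ) - s) := by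
  rw [schottkyWord_eq, schottkyWord_eq]; group

end SchottkyWord

/-- The distance within which a translate of a `K`-contracting axis shadows the axis itself, when
both are fellow-travelled by a common geodesic. -/
noncomputable def shadowDist (K : ℝ) : ℝ := fellowDist K + 6 * K

lemma fellowDist_nonneg {K : ℝ} (hK : 0 ≤ K) : 0 ≤ fellowDist K := by
  unfold fellowDist; positivity

lemma shadowDist_nonneg {K : ℝ} (hK : 0 ≤ K) : 0 ≤ shadowDist K := by
  have := fellowDist_nonneg hK
  unfold shadowDist; positivity

namespace IsContracting

variable {G X : Type*} [Group G] [MetricSpace X] [MulAction G X] [IsIsometricSMul G X]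
  {o : X} {g a : G} {K D : ℝ} {i i₀ j l n : ℤ} {N : ℕ}

lemma mem_elementaryClosure_of_infinite (hc : IsContracting K (orbitMap o g))
    (hfin : (coarseStabilizer o g D N).Finite)
    (hinf : {l : ℤ | l ∈ sharedIndices o g a D ∧ l + N ∈ sharedIndices o g a D}.Infinite) :
    a ∈ elementaryClosure g := by
  choose! m hm using fun l (hl : l ∈ sharedIndices o g a D ∧ l + N ∈ sharedIndices o g a D) =>
    exists_mul_zpow_mem_coarseStabilizer hl.1 hl.2
  obtain ⟨l, -, l', -, hne, heq⟩ := hinf.exists_ne_map_eq_of_mapsTo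
    (f := fun l => g ^ (-l) * a * g ^ m l) (fun l hl => hm l hl) hfin
  exact mem_elementaryClosure_of_mul_zpow_eq hc.zpow_injective (neg_injective.ne hne) heq

lemma mem_sharedIndices (hc : IsContracting K (orbitMap o g)) {x : X}
    (hl : dist x (orbitMap o g l) ≤ fellowDist K)
    (hx : Metric.infDist (a⁻¹ • x) (Set.range (orbitMap o g)) ≤ 6 * K) :
    l ∈ sharedIndices o g a (shadowDist K) := by
  obtain ⟨m, hm⟩ := hc.exists_isNearestIndex (a⁻¹ • x)
  rw [hm.infDist_eq, dist_inv_smul_left] at hx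
  exact ⟨m, (dist_triangle_left _ _ x).trans (add_le_add hl hx)⟩

lemma infDist_le_of_lt_abs_sub {γ : ℤ → X} (hc : IsContracting K γ) {f : ℝ → X} {L U : ℝ}
    (hf : IsUnitSpeedOn f L) (hi : f 0 = γ i) (hj : IsNearestIndex γ (f L) j) (hU : 0 ≤ U)
    (hij : 2 * K ^ 2 + K * (U + 3 * K) < |(i : ℝ) - j|) {u : ℝ} (hu : u ∈ Set.Icc 0 L)
    (huU : u ≤ U) : Metric.infDist (f u) (Set.range γ) ≤ 6 * K := by
  have hK := hc.pos
  have hKU : 0 ≤ K * (U + 3 * K) := by positivity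
  have hi' : IsNearestIndex γ (f 0) i := fun k => by simp [hi]
  obtain ⟨s, t, hs, hst, ht, -, htj⟩ :=
    hc.exists_dist_le_of_le_dist hf hi' hj (hc.le_dist_of_lt_abs_sub (by linarith))
  have hUt : U ≤ t := by
    have hlow : U + 3 * K ≤ dist (γ i) (γ j) + K :=
      le_of_mul_le_mul_left (by nlinarith [hc.abs_sub_le i j]) hK
    have hdist := hf.dist_eq 0 ⟨le_rfl, hf.nonneg⟩ t ⟨hs.trans hst, ht⟩
    rw [hi, zero_sub, abs_neg, abs_of_nonneg (hs.trans hst)] at hdist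
    linarith [dist_triangle (γ i) (f t) (γ j)]
  have hmid := hc.infDist_le_of_infDist_endpoints_le (R := 2 * K)
    (hf.restrict le_rfl (hs.trans hst) ht) (by linarith)
    (by rw [add_zero, hi, Metric.infDist_zero_of_mem (Set.mem_range_self i)]; positivity)
    (by simpa using (Metric.infDist_le_dist_of_mem (Set.mem_range_self j)).trans htj)
    (u := u) ⟨hu.1, by linarith⟩
  rw [zero_add] at hmid
  linarith

lemma mem_sharedIndices_of_mem_uIcc (hc : IsContracting K (orbitMap o g)) (hgeo : IsGeodesicSpace X)
    {x : X} (hi₀ : IsNearestIndex (orbitMap o g) (a • o) i₀)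
    (hi : IsNearestIndex (orbitMap o g) x i) (hj : IsNearestIndex (orbitMap o g) (a⁻¹ • x) j)
    (hfar : 2 * K ^ 2 < |(i₀ : ℝ) - i|) (hl : l ∈ Set.uIcc i₀ i) {U : ℝ}
    (hU : dist (a • o) (orbitMap o g i₀) + (K * |(i₀ : ℝ) - l| + K) + fellowDist K ≤ U)
    (hjU : 2 * K ^ 2 + K * (U + 3 * K) < |(j : ℝ)|) :
    l ∈ sharedIndices o g a (shadowDist K) := by
  obtain ⟨f, hf, hf0, hfL⟩ := exists_isUnitSpeedOn hgeo (a • o) x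
  rw [← hf0] at hi₀
  rw [← hfL] at hi hj
  obtain ⟨u, hu, hul⟩ := hc.exists_dist_le_fellowDist hf hi₀ hi hfar hl
  have huU : u ≤ U := by
    have hdist := hf.dist_eq 0 ⟨le_rfl, hf.nonneg⟩ u hu
    rw [hf0, zero_sub, abs_neg, abs_of_nonneg hu.1] at hdist
    rw [dist_comm] at hul
    linarith [dist_triangle4 (a • o) (orbitMap o g i₀) (orbitMap o g l) (f u),
      (hc.isContractingAxis.1 i₀ l).2]
  refine hc.mem_sharedIndices hul (hc.infDist_le_of_lt_abs_sub (hf.smul a⁻¹) (i := 0) ?_ hj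
    (hu.1.trans huU) (by simpa using hjU) hu huU)
  rw [hf0, inv_smul_smul, orbitMap_zero]

lemma exists_uIcc_subset_sharedIndices (hc : IsContracting K (orbitMap o g))
    (hgeo : IsGeodesicSpace X) (hi₀ : IsNearestIndex (orbitMap o g) (a • o) i₀)
    (hfar : ∀ C, ∃ x, ¬ProjectsWithin o g C x ∧ ¬ProjectsWithin o g C (a⁻¹ • x)) (n : ℕ) :
    ∃ i, n < |i - i₀| ∧
      ∀ l ∈ Set.uIcc i₀ i, |l - i₀| ≤ n → l ∈ sharedIndices o g a (shadowDist K) := by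
  have hK := hc.pos
  set U : ℝ := dist (a • o) (orbitMap o g i₀) + (K * n + K) + fellowDist K with hU
  have hU0 : 0 ≤ U := by have := fellowDist_nonneg hK.le; positivity
  obtain ⟨C, hC⟩ := exists_nat_gt (|(i₀ : ℝ)| + n + 2 * K ^ 2 + K * (U + 3 * K))
  obtain ⟨x, hx, hax⟩ := hfar C
  simp only [ProjectsWithin, not_forall, not_le] at hx hax
  obtain ⟨i, hi, hCi⟩ := hx
  obtain ⟨j, hj, hCj⟩ := hax
  have hCi : (C : ℝ) < |(i : ℝ)| := by exact_mod_cast hCi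
  have hCj : (C : ℝ) < |(j : ℝ)| := by exact_mod_cast hCj
  have hK2 : 0 ≤ 2 * K ^ 2 := by positivity
  have hKU : 0 ≤ K * (U + 3 * K) := by positivity
  have hn : (n : ℝ) + 2 * K ^ 2 < |(i : ℝ) - i₀| := by
    linarith [abs_sub_abs_le_abs_sub (i : ℝ) i₀]
  refine ⟨i, ?_, fun l hl hln =>
    hc.mem_sharedIndices_of_mem_uIcc hgeo hi₀ hi hj ?_ hl (U := U) ?_ ?_⟩
  · have : (n : ℝ) < |(i : ℝ) - i₀| := by linarith
    exact_mod_cast this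
  · rw [abs_sub_comm]; linarith [n.cast_nonneg (α := ℝ)]
  · have hln : |(i₀ : ℝ) - l| ≤ n := by rw [abs_sub_comm]; exact_mod_cast hln
    rw [hU]; gcongr
  · linarith [abs_nonneg (i₀ : ℝ), n.cast_nonneg (α := ℝ)]

lemma exists_ray_subset_sharedIndices (hc : IsContracting K (orbitMap o g))
    (hgeo : IsGeodesicSpace X)
    (hfar : ∀ C, ∃ x, ¬ProjectsWithin o g C x ∧ ¬ProjectsWithin o g C (a⁻¹ • x)) :
    ∃ i₀, Set.Ici i₀ ⊆ sharedIndices o g a (shadowDist K) ∨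
      Set.Iic i₀ ⊆ sharedIndices o g a (shadowDist K) := by
  obtain ⟨i₀, hi₀⟩ := hc.exists_isNearestIndex (a • o)
  refine ⟨i₀, ?_⟩
  by_contra! hno
  obtain ⟨⟨r, hr, hr'⟩, ⟨s, hs, hs'⟩⟩ := hno.imp Set.not_subset.1 Set.not_subset.1
  rw [Set.mem_Ici] at hr
  rw [Set.mem_Iic] at hs
  obtain ⟨i, hi, hsub⟩ := hc.exists_uIcc_subset_sharedIndices hgeo hi₀ hfar (r - s).toNat
  rw [Int.toNat_of_nonneg (by omega)] at hi hsub
  rcases le_total i₀ i with h | h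
  · rw [abs_of_nonneg (by omega)] at hi
    exact hr' (hsub r (Set.mem_uIcc.2 (by omega)) (by rw [abs_of_nonneg] <;> omega))
  · rw [abs_of_nonpos (by omega)] at hi
    exact hs' (hsub s (Set.mem_uIcc.2 (by omega)) (by rw [abs_of_nonpos] <;> omega))

lemma exists_projectsWithin_or (hc : IsContracting K (orbitMap o g)) (hgeo : IsGeodesicSpace X)
    (hwpd : IsWPD o g) (ha : a ∉ elementaryClosure g) :
    ∃ C, ∀ x, ProjectsWithin o g C x ∨ ProjectsWithin o g C (a⁻¹ • x) := by
  obtain ⟨N, hfin⟩ := hc.exists_finite_coarseStabilizer hwpd (shadowDist_nonneg hc.pos.le)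
  by_contra! hfar
  refine ha (hc.mem_elementaryClosure_of_infinite hfin ?_)
  obtain ⟨i₀, hray | hray⟩ := hc.exists_ray_subset_sharedIndices hgeo hfar
  · exact (Set.Ici_infinite i₀).mono fun l (hl : i₀ ≤ l) =>
      ⟨hray hl, hray (show i₀ ≤ l + N by omega)⟩
  · exact (Set.Iic_infinite (i₀ - N)).mono fun l (hl : l ≤ i₀ - N) =>
      ⟨hray (show l ≤ i₀ by omega), hray (show l + N ≤ i₀ by omega)⟩

lemma mem_sharedIndices_of_mem_uIcc_of_isNearestIndex (hc : IsContracting K (orbitMap o g))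
    (hgeo : IsGeodesicSpace X) {m m' : ℤ}
    (hi : IsNearestIndex (orbitMap o g) (a • orbitMap o g m) i)
    (hj : IsNearestIndex (orbitMap o g) (a • orbitMap o g m') j)
    (hij : 2 * K ^ 2 < |(i : ℝ) - j|) (hl : l ∈ Set.uIcc i j) :
    l ∈ sharedIndices o g a (shadowDist K) := by
  obtain ⟨f, hf, hf0, hfL⟩ := exists_isUnitSpeedOn hgeo (a • orbitMap o g m) (a • orbitMap o g m')
  obtain ⟨u, hu, hul⟩ :=
    hc.exists_dist_le_fellowDist hf (by rwa [hf0]) (by rwa [hfL]) hij hl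
  have hend (k : ℤ) : Metric.infDist (a⁻¹ • a • orbitMap o g k) (Set.range (orbitMap o g)) ≤ K := by
    rw [inv_smul_smul, Metric.infDist_zero_of_mem (Set.mem_range_self k)]
    exact hc.pos.le
  have hmid := hc.infDist_le_of_infDist_endpoints_le (hf.smul a⁻¹) le_rfl
    (by rw [hf0]; exact hend m) (by rw [hfL]; exact hend m') hu
  exact hc.mem_sharedIndices hul (hmid.trans (by linarith [hc.pos]))

lemma sharedIndices_eq_univ (hc : IsContracting K (orbitMap o g)) (hgeo : IsGeodesicSpace X)
    (ha : a ∈ elementaryClosure g) : sharedIndices o g a (shadowDist K) = Set.univ := by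
  obtain ⟨p, q, -, hq, hpq⟩ := ha
  refine Set.eq_univ_of_forall fun l => ?_
  obtain ⟨i₀, hi₀⟩ := hc.exists_isNearestIndex (a • o)
  have hnear (n : ℤ) : IsNearestIndex (orbitMap o g) (a • orbitMap o g (p * n)) (q * n + i₀) := by
    have hconj : a • orbitMap o g (p * n) = g ^ (q * n) • a • o := by
      rw [zpow_mul, ← hpq, conj_zpow, ← zpow_mul]
      simp only [orbitMap, mul_smul, inv_smul_smul]
    rw [hconj]
    exact hi₀.zpow_smul _
  obtain ⟨n, hn⟩ := exists_nat_gt (|((l - i₀ : ℤ) : ℝ)| + 2 * K ^ 2)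
  have hqn : (n : ℝ) ≤ |((q * n : ℤ) : ℝ)| := by
    rw [Int.cast_mul, abs_mul, Int.cast_natCast, Nat.abs_cast]
    exact le_mul_of_one_le_left n.cast_nonneg (by exact_mod_cast Int.one_le_abs hq)
  have hlq : |l - i₀| ≤ |q * n| := by
    have : |((l - i₀ : ℤ) : ℝ)| ≤ |((q * n : ℤ) : ℝ)| := by linarith [sq_nonneg K]
    exact_mod_cast this
  refine hc.mem_sharedIndices_of_mem_uIcc_of_isNearestIndex hgeo (hnear (-n)) (hnear n) ?_ ?_
  · have hdiff : ((q * -n + i₀ : ℤ) : ℝ) - (q * n + i₀ : ℤ) = -(2 * (q * n : ℤ)) := by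
      push_cast; ring
    rw [hdiff, abs_neg, abs_mul, abs_two]
    linarith [abs_nonneg ((l - i₀ : ℤ) : ℝ), sq_nonneg K]
  · rw [Set.mem_uIcc, mul_neg]
    rcases abs_cases (l - i₀) with h | h <;> rcases abs_cases (q * (n : ℤ)) with h' | h' <;> omega

lemma exists_finite_forall_mul_zpow_mem (hc : IsContracting K (orbitMap o g))
    (hgeo : IsGeodesicSpace X) (hwpd : IsWPD o g) :
    ∃ Y : Set G, Y.Finite ∧ ∀ a ∈ elementaryClosure g, ∃ m : ℤ, a * g ^ m ∈ Y := by
  obtain ⟨N, hfin⟩ := hc.exists_finite_coarseStabilizer hwpd (shadowDist_nonneg hc.pos.le)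
  refine ⟨_, hfin, fun a ha => ?_⟩
  have hmem (l : ℤ) : l ∈ sharedIndices o g a (shadowDist K) := by
    rw [hc.sharedIndices_eq_univ hgeo ha]; trivial
  simpa only [neg_zero, zpow_zero, one_mul] using
    exists_mul_zpow_mem_coarseStabilizer (hmem 0) (hmem (0 + N))

lemma mem_elementaryClosure_of_conj_mem (hc : IsContracting K (orbitMap o g))
    (hgeo : IsGeodesicSpace X) (hwpd : IsWPD o g) {e : ℤ} (he : e ≠ 0)
    (ha : a * g ^ e * a⁻¹ ∈ elementaryClosure g) : a ∈ elementaryClosure g := by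
  obtain ⟨Y, hY, hYmem⟩ := hc.exists_finite_forall_mul_zpow_mem hgeo hwpd
  have hpow (n : ℕ) : a * g ^ (e * n) * a⁻¹ ∈ elementaryClosure g := by
    rw [zpow_mul, ← conj_zpow]
    exact zpow_mem ha n
  choose m hm using fun n => hYmem _ (hpow n)
  obtain ⟨n, -, n', -, hne, heq⟩ := Set.infinite_univ.exists_ne_map_eq_of_mapsTo
    (f := fun n : ℕ => a * g ^ (e * n) * a⁻¹ * g ^ m n) (fun n _ => hm n) hY
  refine inv_mem_iff.1 (mem_elementaryClosure_of_mul_zpow_eq hc.zpow_injective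
    (l := e * n) (l' := e * n') (m := m n) (m' := m n') ?_ ?_)
  · exact fun h => hne (by exact_mod_cast mul_left_cancel₀ he h)
  · simpa only [mul_assoc, mul_right_inj] using heq

lemma exists_isSchottkyFamily (hc : IsContracting K (orbitMap o g))
    (hgeo : IsGeodesicSpace X) (hwpd : IsWPD o g) {ι : Type*} [Finite ι] {b : ι → G}
    (hb : Pairwise fun r s => b r * (b s)⁻¹ ∉ elementaryClosure g) :
    ∃ C, IsSchottkyFamily o g C b := by
  cases nonempty_fintype ι
  choose! C hC using fun r s (hrs : r ≠ s) => hc.exists_projectsWithin_or hgeo hwpd (hb hrs)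
  refine ⟨∑ r, ∑ s, C r s, fun r s hrs x => ?_⟩
  have hle : C r s ≤ ∑ r, ∑ s, C r s :=
    (Finset.single_le_sum (f := C r) (fun _ _ => Nat.zero_le _) (Finset.mem_univ s)).trans
      (Finset.single_le_sum (f := fun r => ∑ s, C r s) (fun _ _ => Nat.zero_le _)
        (Finset.mem_univ r))
  refine (hC r s hrs (b r • x)).imp (·.mono hle) fun h => ?_
  simpa [mul_smul] using h.mono hle

lemma exists_isSchottkyFamily_schottkyWord (hc : IsContracting K (orbitMap o g))
    (hgeo : IsGeodesicSpace X) (hwpd : IsWPD o g) (ha : a ∉ elementaryClosure g) {m : ℕ}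
    (hm : 0 < m) (J : ℕ) :
    ∃ C, IsSchottkyFamily o g C (fun l : Fin (J + 1) => (schottkyWord (g ^ m) a l)⁻¹) ∧
      IsSchottkyFamily o g C fun l : Fin (J + 1) => schottkyWord (g ^ m) a l := by
  have hpow (i : ℤ) : (g ^ m) ^ i ∈ elementaryClosure g :=
    zpow_mem (by simpa using zpow_mem_elementaryClosure (g := g) m) i
  have hne {i : ℤ} (hi : i ≠ 0) : (m : ℤ) * i ≠ 0 := mul_ne_zero (by exact_mod_cast hm.ne') hi
  obtain ⟨C, hC⟩ := hc.exists_isSchottkyFamily hgeo hwpd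
    (b := fun r : Fin (J + 1) => (schottkyWord (g ^ m) a r)⁻¹) fun r s hrs hmem => ha <| by
      rw [inv_inv, schottkyWord_inv_mul, mul_mem_cancel_right (hpow _),
        mul_mem_cancel_left (hpow _), ← zpow_natCast, ← zpow_mul] at hmem
      refine inv_mem_iff.1 (hc.mem_elementaryClosure_of_conj_mem hgeo hwpd
        (hne (i := (s : ℤ) - r) (by omega)) (by simpa only [inv_inv] using hmem))
  obtain ⟨C', hC'⟩ := hc.exists_isSchottkyFamily hgeo hwpd
    (b := fun r : Fin (J + 1) => schottkyWord (g ^ m) a r) fun r s hrs hmem => ha <| by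
      rw [schottkyWord_mul_inv, mul_mem_cancel_right (hpow _), mul_mem_cancel_left (hpow _),
        ← zpow_natCast, ← zpow_mul] at hmem
      exact hc.mem_elementaryClosure_of_conj_mem hgeo hwpd
        (hne (i := (s : ℤ) - r) (by omega)) hmem
  exact ⟨max C C', hC.mono (le_max_left _ _), hC'.mono (le_max_right _ _)⟩

end IsContracting

/-! ### Inserting a long power of the contracting element -/

lemma IsUnitSpeedOn.abs_dist_sub_le {X : Type*} [MetricSpace X] {f : ℝ → X} {l R : ℝ}
    (h : IsUnitSpeedOn f l) {u : ℝ} (hu : u ∈ Set.Icc 0 l) {z : X} (hz : dist (f u) z ≤ R) :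
    |dist (f 0) (f l) - dist (f 0) z - dist z (f l)| ≤ 2 * R := by
  have h₁ := h.dist_eq 0 ⟨le_rfl, h.nonneg⟩ u hu
  have h₂ := h.dist_eq u hu l ⟨h.nonneg, le_rfl⟩
  have h₃ := h.dist_eq 0 ⟨le_rfl, h.nonneg⟩ l ⟨h.nonneg, le_rfl⟩
  rw [zero_sub, abs_neg, abs_of_nonneg hu.1] at h₁
  rw [abs_sub_comm, abs_of_nonneg (sub_nonneg.2 hu.2)] at h₂
  rw [zero_sub, abs_neg, abs_of_nonneg h.nonneg] at h₃
  have h₄ := dist_triangle (f 0) (f u) z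
  have h₅ := dist_triangle_left z (f l) (f u)
  have h₆ := dist_triangle (f 0) z (f l)
  rw [abs_le]
  constructor <;> linarith [dist_nonneg.trans hz]

section Displacement

variable {G X : Type*} [Group G] [MetricSpace X] [MulAction G X] {o : X}

/-- The displacement `‖x‖ = d(o, x • o)` of the basepoint. -/
noncomputable def displacement (o : X) (x : G) : ℝ := dist o (x • o)

lemma displacement_nonneg (x : G) : 0 ≤ displacement o x := dist_nonneg

variable [IsIsometricSMul G X]

lemma displacement_inv_mul (x y : G) : displacement o (x⁻¹ * y) = dist (x • o) (y • o) := by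
  rw [displacement, mul_smul, dist_comm, dist_inv_smul_left, dist_comm]

lemma abs_displacement_mul_sub_left_le (x y : G) :
    |displacement o (x * y) - displacement o x| ≤ displacement o y := by
  have := abs_dist_sub_le ((x * y) • o) (x • o) o
  rwa [dist_comm _ o, dist_comm _ o, mul_smul, dist_smul, dist_comm (y • o), ← mul_smul] at this

lemma abs_displacement_mul_sub_right_le (x y : G) :
    |displacement o (x * y) - displacement o y| ≤ displacement o x := by
  have := abs_dist_sub_le (x⁻¹ • o) o (y • o)
  rwa [dist_inv_smul_left, dist_inv_smul_left, ← mul_smul] at this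

variable {g : G} {K : ℝ} {C I N : ℕ}

lemma IsContracting.exists_dist_zpow_smul_le (hc : IsContracting K (orbitMap o g))
    (hI : 2 * C + 2 * K ^ 2 + N < I) {x y : G} (hx : ProjectsWithin o g C (x⁻¹ • o))
    (hy : ProjectsWithin o g C (y • o)) {f : ℝ → X} {L : ℝ} (hf : IsUnitSpeedOn f L) (hf0 : f 0 = o)
    (hfL : f L = (x * g ^ I * y) • o) {n : ℕ} (hCn : C ≤ n) (hnN : n ≤ C + N) :
    ∃ u ∈ Set.Icc 0 L, dist (f u) ((x * g ^ n) • o) ≤ fellowDist K := by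
  obtain ⟨i, hi⟩ := hc.exists_isNearestIndex (x⁻¹ • o)
  obtain ⟨j, hj⟩ := hc.exists_isNearestIndex (y • o)
  have hiC : |(i : ℝ)| ≤ C := by exact_mod_cast hx i hi
  have hjC : |(j : ℝ)| ≤ C := by exact_mod_cast hy j hj
  rw [abs_le] at hiC hjC
  have hi0 : IsNearestIndex (orbitMap o g) (x⁻¹ • f 0) i := by rwa [hf0]
  have hjL : IsNearestIndex (orbitMap o g) (x⁻¹ • f L) (I + j) := by
    have hyL : x⁻¹ • f L = g ^ (I : ℤ) • y • o := by
      rw [hfL, mul_assoc, mul_smul, inv_smul_smul, mul_smul, zpow_natCast]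
    rw [hyL]
    exact hj.zpow_smul I
  have hn : (C : ℝ) ≤ n ∧ (n : ℝ) ≤ C + N := ⟨by exact_mod_cast hCn, by exact_mod_cast hnN⟩
  have hmem : (n : ℤ) ∈ Set.uIcc i (I + j) := by
    have hlo : (i : ℝ) ≤ n := by linarith
    have hhi : (n : ℝ) ≤ I + j := by nlinarith
    exact Set.mem_uIcc.2 (Or.inl ⟨by exact_mod_cast hlo, by exact_mod_cast hhi⟩)
  obtain ⟨u, hu, hud⟩ := hc.exists_dist_le_fellowDist (hf.smul x⁻¹) hi0 hjL (by
    push_cast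
    rw [abs_sub_comm]
    exact lt_of_lt_of_le (by linarith [N.cast_nonneg (α := ℝ)]) (le_abs_self _)) hmem
  refine ⟨u, hu, ?_⟩
  rwa [dist_inv_smul_left, orbitMap_natCast, ← mul_smul] at hud

lemma IsContracting.abs_displacement_sub_le (hc : IsContracting K (orbitMap o g))
    (hgeo : IsGeodesicSpace X) (hI : 2 * C + 2 * K ^ 2 < I) {P Q u v : G}
    (hu : ProjectsWithin o g C ((u * P)⁻¹ • o)) (hv : ProjectsWithin o g C ((Q * v) • o)) :
    |displacement o (u * (P * g ^ I * Q) * v) - displacement o u - displacement o v| ≤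
      2 * fellowDist K + displacement o (P * g ^ C) +
        displacement o ((g ^ C)⁻¹ * g ^ I * Q) := by
  obtain ⟨f, hf, hf0, hfL⟩ := exists_isUnitSpeedOn hgeo o ((u * (P * g ^ I * Q) * v) • o)
  obtain ⟨s, hs, hsd⟩ := hc.exists_dist_zpow_smul_le (N := 0) (n := C) (by simpa using hI) hu hv hf
    hf0 (by rw [hfL]; simp only [mul_assoc]) le_rfl le_rfl
  have hmid := hf.abs_dist_sub_le hs hsd
  rw [hf0, hfL, ← displacement_inv_mul] at hmid
  have hleft := abs_displacement_mul_sub_left_le (o := o) u (P * g ^ C)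
  have hright := abs_displacement_mul_sub_right_le (o := o) ((g ^ C)⁻¹ * g ^ I * Q) v
  have hsplit : (u * P * g ^ C)⁻¹ * (u * (P * g ^ I * Q) * v) = (g ^ C)⁻¹ * g ^ I * Q * v := by
    group
  rw [hsplit] at hmid
  rw [← mul_assoc] at hleft
  unfold displacement at *
  rw [abs_le] at *
  constructor <;> linarith

lemma encard_le_mul_of_forall_exists_dist_le {f : ℝ → X} {L R T : ℝ} (hf : IsUnitSpeedOn f L)
    {S : Set G} {x y : X} {B : ℕ}
    (hx : ∀ a ∈ S, ∃ u ∈ Set.Icc 0 L, |u - T| ≤ B ∧ dist (f u) (a • x) ≤ R)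
    (hy : ∀ a ∈ S, ∃ u ∈ Set.Icc 0 L, |u - T| ≤ B ∧ dist (f u) (a • y) ≤ R) :
    S.encard ≤ (Finset.Icc (-(B : ℤ)) B ×ˢ Finset.Icc (-(B : ℤ)) B).card *
      {h : G | dist x (h • x) ≤ 2 * R + 1 ∧ dist y (h • y) ≤ 2 * R + 1}.encard := by
  choose! s hsL hsT hsd using hx
  choose! t htL htT htd using hy
  have hfloor {u : ℝ} (hu : |u - T| ≤ B) : ⌊u - T⌋ ∈ Finset.Icc (-(B : ℤ)) B := by
    rw [abs_le] at hu
    refine Finset.mem_Icc.2 ⟨Int.le_floor.2 (by push_cast; exact hu.1), ?_⟩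
    exact_mod_cast (Int.floor_le (u - T)).trans hu.2
  have hnear {z : X} {u u' : ℝ} {a a' : G} (hu : u ∈ Set.Icc 0 L) (hu' : u' ∈ Set.Icc 0 L)
      (hd : dist (f u) (a • z) ≤ R) (hd' : dist (f u') (a' • z) ≤ R)
      (huu' : ⌊u - T⌋ = ⌊u' - T⌋) : dist (a • z) (a' • z) ≤ 2 * R + 1 := by
    have hle : dist (f u) (f u') ≤ 1 := by
      rw [hf.dist_eq u hu u' hu', ← sub_sub_sub_cancel_right u u' T]
      exact (Int.abs_sub_lt_one_of_floor_eq_floor huu').le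
    rw [dist_comm] at hd
    linarith [dist_triangle4 (a • z) (f u) (f u') (a' • z)]
  let bucket (b : ℤ × ℤ) : Set G := {a ∈ S | ⌊s a - T⌋ = b.1 ∧ ⌊t a - T⌋ = b.2}
  have hcover : S ⊆ ⋃ b ∈ Finset.Icc (-(B : ℤ)) B ×ˢ Finset.Icc (-(B : ℤ)) B, bucket b :=
    fun a ha => Set.mem_biUnion (x := (⌊s a - T⌋, ⌊t a - T⌋))
      (Finset.mem_coe.2 (Finset.mk_mem_product (hfloor (hsT a ha)) (hfloor (htT a ha))))
      ⟨ha, rfl, rfl⟩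
  refine (Set.encard_le_encard hcover).trans ((Finset.set_encard_biUnion_le _ _).trans ?_)
  rw [← nsmul_eq_mul]
  refine Finset.sum_le_card_nsmul _ _ _ fun b _ => encard_le_encard_of_dist_smul_le ?_ ?_ <;>
    rintro a ⟨ha, ha₁, ha₂⟩ a' ⟨ha', ha₁', ha₂'⟩
  · exact hnear (hsL a ha) (hsL a' ha') (hsd a ha) (hsd a' ha') (ha₁.trans ha₁'.symm)
  · exact hnear (htL a ha) (htL a' ha') (htd a ha) (htd a' ha') (ha₂.trans ha₂'.symm)

lemma IsContracting.exists_encard_le (hc : IsContracting K (orbitMap o g))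
    (hgeo : IsGeodesicSpace X) (hI : 2 * C + 2 * K ^ 2 + N < I)
    (hN : {h : G | dist o (h • o) ≤ 2 * fellowDist K + 1 ∧
      dist (g ^ N • o) ((h * g ^ N) • o) ≤ 2 * fellowDist K + 1}.Finite) (P Q : G) :
    ∃ A : ℕ, ∀ w (D : ℝ), {u | ∃ v, u * (P * g ^ I * Q) * v = w ∧
      ProjectsWithin o g C ((u * P)⁻¹ • o) ∧ ProjectsWithin o g C ((Q * v) • o) ∧
        D ≤ displacement o u ∧ displacement o u ≤ D + 1}.encard ≤ A := by
  obtain ⟨B, hB⟩ := exists_nat_ge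
    (fellowDist K + displacement o (P * g ^ C) + displacement o (P * g ^ (C + N)) + 1)
  obtain ⟨m, hm⟩ := ENat.ne_top_iff_exists.1 (Set.encard_ne_top_iff.2 hN)
  refine ⟨(Finset.Icc (-(B : ℤ)) B ×ˢ Finset.Icc (-(B : ℤ)) B).card * m, fun w D => ?_⟩
  obtain ⟨f, hf, hf0, hfL⟩ := exists_isUnitSpeedOn hgeo o (w • o)
  set U := {u | ∃ v, u * (P * g ^ I * Q) * v = w ∧ ProjectsWithin o g C ((u * P)⁻¹ • o) ∧
    ProjectsWithin o g C ((Q * v) • o) ∧ D ≤ displacement o u ∧ displacement o u ≤ D + 1}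
  have hnear {n : ℕ} (hCn : C ≤ n) (hnN : n ≤ C + N)
      (hnB : fellowDist K + displacement o (P * g ^ n) + 1 ≤ B) : ∀ u ∈ U,
      ∃ s ∈ Set.Icc 0 (dist o (w • o)), |s - D| ≤ B ∧
        dist (f s) ((u * P * g ^ n) • o) ≤ fellowDist K := by
    rintro u ⟨v, rfl, hu, hv, hDu, huD⟩
    obtain ⟨s, hs, hsd⟩ := hc.exists_dist_zpow_smul_le hI hu hv hf hf0
      (by rw [hfL]; simp only [mul_assoc]) hCn hnN
    refine ⟨s, hs, ?_, hsd⟩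
    have hs0 := hf.dist_eq 0 ⟨le_rfl, hf.nonneg⟩ s hs
    rw [hf0, zero_sub, abs_neg, abs_of_nonneg hs.1] at hs0
    have h₁ := abs_displacement_mul_sub_left_le (o := o) u (P * g ^ n)
    have h₂ := abs_dist_sub_le (f s) ((u * P * g ^ n) • o) o
    rw [dist_comm _ o, dist_comm _ o, hs0] at h₂
    rw [← mul_assoc] at h₁
    unfold displacement at *
    rw [abs_le] at *
    constructor <;> linarith
  have hinj : Function.Injective fun u : G => u * P * g ^ C := fun _ _ h => by simpa using h
  rw [← hinj.encard_image U]
  refine (encard_le_mul_of_forall_exists_dist_le (R := fellowDist K) (T := D) (B := B) (x := o)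
    (y := g ^ N • o) hf ?_ ?_).trans_eq ?_
  · exact Set.forall_mem_image.2 (hnear le_rfl (Nat.le_add_right C N)
      (by linarith [displacement_nonneg (o := o) (P * g ^ (C + N))]))
  · refine Set.forall_mem_image.2 fun u hu => ?_
    rw [← mul_smul, mul_assoc _ (g ^ C), ← pow_add]
    exact hnear (Nat.le_add_right C N) le_rfl
      (by linarith [displacement_nonneg (o := o) (P * g ^ C)]) u hu
  · simp only [← mul_smul, ← hm, Nat.cast_mul]

end Displacement

/-! ### Random words -/

section RandomWords

variable {α β ι : Type*} {p q : PMF α} {l : Filter ι}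

lemma pmf_map_mul [Monoid α] [Monoid β] (f : α →* β) (p q : PMF α) :
    (p * q).map f = p.map f * q.map f := by
  simp only [mul_def, PMF.map_bind, PMF.bind_map, PMF.map_comp, Function.comp_def, map_mul]

lemma pmf_map_pow [Monoid α] [Monoid β] (f : α →* β) (p : PMF α) (n : ℕ) :
    (p ^ n).map f = p.map f ^ n := by
  induction n with
  | zero => simp [one_def, PMF.pure_map]
  | succ n ih => rw [pow_succ, pow_succ, pmf_map_mul, ih]

/-- The law of a word made of `n` independent letters of law `p`. -/
noncomputable def iidWord (p : PMF α) (n : ℕ) : PMF (FreeMonoid α) := p.map FreeMonoid.of ^ n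

lemma expect_iidWord_succ (p : PMF α) (n : ℕ) (f : FreeMonoid α → ℝ≥0∞) :
    expect (iidWord p (n + 1)) f =
      expect p fun x => expect (iidWord p n) fun s => f (FreeMonoid.of x * s) := by
  rw [iidWord, pow_succ', expect_mul, expect_map, iidWord]

lemma map_lift_iidWord [Monoid β] (f : α → β) (p : PMF α) (n : ℕ) :
    (iidWord p n).map (FreeMonoid.lift f) = p.map f ^ n := by
  rw [iidWord, pmf_map_pow, PMF.map_comp, FreeMonoid.lift_comp_of]

lemma expect_indicator_singleton (p : PMF α) (x : α) :
    expect p (({x} : Set α).indicator 1) = p x := by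
  rw [expect_indicator, PMF.toOuterMeasure_apply_singleton]

lemma iidWord_length_apply (p : PMF α) (w : FreeMonoid α) :
    iidWord p w.length w = FreeMonoid.lift p w := by
  induction w using FreeMonoid.recOn with
  | one => simp [iidWord, one_def]
  | of_mul x w ih =>
    have split (y : α) (s : FreeMonoid α) :
        ({FreeMonoid.of x * w} : Set _).indicator (1 : FreeMonoid α → ℝ≥0∞) (FreeMonoid.of y * s) =
          ({x} : Set α).indicator 1 y * ({w} : Set _).indicator 1 s := by
      have hcons : FreeMonoid.of y * s = FreeMonoid.of x * w ↔ y = x ∧ s = w := List.cons_eq_cons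
      classical simp [Set.indicator_apply, hcons, ← ite_and, and_comm]
    rw [FreeMonoid.length_mul, FreeMonoid.length_of, add_comm, ← expect_indicator_singleton,
      expect_iidWord_succ]
    simp only [split, expect_const_mul, expect_indicator_singleton, ih]
    simp only [mul_comm _ (FreeMonoid.lift p w), expect_const_mul, expect_indicator_singleton]
    rw [map_mul, FreeMonoid.lift_eval_of, mul_comm]

lemma TendstoSimply.iidWord [l.IsCountablyGenerated] {p : ι → PMF α} (h : TendstoSimply p l q)
    (n : ℕ) : TendstoSimply (fun i => iidWord (p i) n) l (iidWord q n) :=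
  (h.map _).pow n

lemma entropy_iidWord_le (p : PMF α) (n : ℕ) : entropy (iidWord p n) ≤ n * entropy p :=
  (entropy_pow_le _ n).trans (by gcongr; exact entropy_map_le _ _)

end RandomWords

section FirstSuccess

variable {α C : Type*} {W : C → α} {p : PMF α}

/-- The first letter of `s` of the form `W c` stands between the words `a` and `d`. -/
def IsFirstSuccess (W : C → α) (s a : FreeMonoid α) (c : C) (d : FreeMonoid α) : Prop :=
  s = a * FreeMonoid.of (W c) * d ∧ ∀ x ∈ a, x ∉ Set.range W

/-- The words whose first letter of the form `W c`, if there is one, satisfies `Q`. -/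
def firstSuccessSet (W : C → α) (Q : FreeMonoid α → C → FreeMonoid α → Prop) :
    Set (FreeMonoid α) :=
  {s | ∀ a c d, IsFirstSuccess W s a c d → Q a c d}

lemma IsFirstSuccess.unique (hW : W.Injective) {s a a' d d' : FreeMonoid α} {c c' : C}
    (h : IsFirstSuccess W s a c d) (h' : IsFirstSuccess W s a' c' d') :
    a' = a ∧ c' = c ∧ d' = d := by
  obtain ⟨hs, ha⟩ := h
  obtain ⟨hs', ha'⟩ := h'
  replace hs' := hs'.symm.trans hs
  clear hs
  induction a using FreeMonoid.recOn generalizing a' with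
  | one =>
    cases a' using FreeMonoid.casesOn with
    | one =>
      obtain ⟨hc, hd⟩ := List.cons.inj hs'
      exact ⟨rfl, hW hc, hd⟩
    | of_mul x a' => exact absurd ⟨c, (List.cons.inj hs').1.symm⟩ (ha' x (by simp))
  | of_mul y a ih =>
    cases a' using FreeMonoid.casesOn with
    | one => exact absurd ⟨c', (List.cons.inj hs').1⟩ (ha y (by simp))
    | of_mul x a' =>
      obtain ⟨rfl, htail⟩ := List.cons.inj hs'
      obtain ⟨rfl, hcd⟩ := ih (fun z hz => ha z (FreeMonoid.mem_mul.2 (.inr hz)))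
        (fun z hz => ha' z (FreeMonoid.mem_mul.2 (.inr hz))) htail
      exact ⟨rfl, hcd⟩

lemma indicator_firstSuccessSet_le (W : C → α) (Q : FreeMonoid α → C → FreeMonoid α → Prop)
    (x : α) (s : FreeMonoid α) :
    (firstSuccessSet W Q).indicator (1 : FreeMonoid α → ℝ≥0∞) (FreeMonoid.of x * s) ≤
      (W '' {c | Q 1 c s}).indicator 1 x + (Set.range W)ᶜ.indicator 1 x *
        (firstSuccessSet W fun a => Q (FreeMonoid.of x * a)).indicator 1 s := by
  refine Set.indicator_apply_le' (fun h => ?_) fun _ => zero_le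
  by_cases hx : x ∈ Set.range W
  · obtain ⟨c, rfl⟩ := hx
    have hc : Q 1 c s := h 1 c s ⟨by rw [one_mul], fun y hy => absurd hy FreeMonoid.notMem_one⟩
    rw [Set.indicator_of_mem (Set.mem_image_of_mem W hc)]
    exact le_self_add
  · have hs : s ∈ firstSuccessSet W fun a => Q (FreeMonoid.of x * a) := by
      rintro a c d ⟨rfl, ha⟩
      refine h _ c d ⟨by simp only [mul_assoc], fun y hy => ?_⟩
      rcases FreeMonoid.mem_mul.1 hy with hy | hy
      · rwa [FreeMonoid.mem_of.1 hy]
      · exact ha y hy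
    rw [Set.indicator_of_mem (Set.mem_compl hx), Set.indicator_of_mem hs]
    simp

lemma toOuterMeasure_add_compl (p : PMF α) (s : Set α) :
    p.toOuterMeasure s + p.toOuterMeasure sᶜ = 1 := by
  rw [← expect_indicator, ← expect_indicator, ← expect_add, ← expect_const p 1]
  congr 1
  ext x
  by_cases hx : x ∈ s <;> simp [hx]

theorem iidWord_firstSuccessSet_le {δ η : ℝ≥0∞}
    (hη : δ + p.toOuterMeasure (Set.range W)ᶜ * η ≤ η) (n : ℕ)
    {Q : FreeMonoid α → C → FreeMonoid α → Prop}
    (hQ : ∀ a d, p.toOuterMeasure (W '' {c | Q a c d}) ≤ δ) :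
    (iidWord p n).toOuterMeasure (firstSuccessSet W Q) ≤
      η + p.toOuterMeasure (Set.range W)ᶜ ^ n := by
  induction n generalizing Q with
  | zero => exact (toOuterMeasure_le_one _ _).trans (by simp)
  | succ n ih =>
    set β := p.toOuterMeasure (Set.range W)ᶜ
    set T : α → Set (FreeMonoid α) := fun x => firstSuccessSet W fun a => Q (FreeMonoid.of x * a)
    calc (iidWord p (n + 1)).toOuterMeasure (firstSuccessSet W Q)
        ≤ expect p fun x => expect (iidWord p n) fun s => (W '' {c | Q 1 c s}).indicator 1 x +
            (Set.range W)ᶜ.indicator 1 x * (T x).indicator 1 s := by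
          rw [← expect_indicator, expect_iidWord_succ]
          exact expect_mono fun x => expect_mono fun s =>
            indicator_firstSuccessSet_le W Q x s
      _ = expect (iidWord p n) (fun s => p.toOuterMeasure (W '' {c | Q 1 c s})) +
            expect p fun x =>
              (Set.range W)ᶜ.indicator 1 x * (iidWord p n).toOuterMeasure (T x) := by
          simp only [expect_add, expect_const_mul]
          rw [expect_comm]
          simp only [expect_indicator]
      _ ≤ δ + expect p fun x => (η + β ^ n) * (Set.range W)ᶜ.indicator 1 x := by
          gcongr
          · exact (expect_mono fun s => hQ 1 s).trans_eq (expect_const _ _)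
          · refine expect_mono fun x => ?_
            rw [mul_comm]
            gcongr
            exact ih fun a d => hQ _ d
      _ = (δ + β * η) + β ^ (n + 1) := by
          rw [expect_const_mul, expect_indicator]
          ring
      _ ≤ η + β ^ (n + 1) := by gcongr

lemma toOuterMeasure_image [Finite C] (hW : W.Injective) {κ : ℝ≥0∞} (hκ : ∀ c, p (W c) = κ)
    (S : Set C) : p.toOuterMeasure (W '' S) = S.ncard * κ := by
  rw [← (S.toFinite.image W).coe_toFinset, PMF.toOuterMeasure_apply_finset,
    Finset.sum_congr rfl (g := fun _ => κ), Finset.sum_const, nsmul_eq_mul,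
    ← Set.ncard_eq_toFinset_card _ _, Set.ncard_image_of_injective S hW]
  simp [hκ]

theorem iidWord_firstSuccessSet_le_inv_add [Finite C] (hW : W.Injective) {κ : ℝ≥0∞}
    (hκ : ∀ c, p (W c) = κ) {m : ℕ} (hC : Nat.card C = m ^ 2) (hm : m ≠ 0) (n : ℕ)
    {Q : FreeMonoid α → C → FreeMonoid α → Prop} (hQ : ∀ a d, {c | Q a c d}.ncard ≤ m) :
    (iidWord p n).toOuterMeasure (firstSuccessSet W Q) ≤
      (m : ℝ≥0∞)⁻¹ + p.toOuterMeasure (Set.range W)ᶜ ^ n := by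
  refine iidWord_firstSuccessSet_le (δ := m * κ) ?_ n fun a d => ?_
  · have hsum := toOuterMeasure_add_compl p (Set.range W)
    rw [← Set.image_univ, toOuterMeasure_image hW hκ, Set.ncard_univ, hC, Set.image_univ] at hsum
    refine le_of_eq ?_
    have hm' : (m : ℝ≥0∞) * (m : ℝ≥0∞)⁻¹ = 1 :=
      ENNReal.mul_inv_cancel (by exact_mod_cast hm) (ENNReal.natCast_ne_top m)
    calc m * κ + p.toOuterMeasure (Set.range W)ᶜ * (m : ℝ≥0∞)⁻¹
        = m * κ * (m * (m : ℝ≥0∞)⁻¹) + p.toOuterMeasure (Set.range W)ᶜ * (m : ℝ≥0∞)⁻¹ := by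
          rw [hm', mul_one]
      _ = ((m ^ 2 : ℕ) * κ + p.toOuterMeasure (Set.range W)ᶜ) * (m : ℝ≥0∞)⁻¹ := by
          push_cast
          ring
      _ = (m : ℝ≥0∞)⁻¹ := by rw [hsum, one_mul]
  · rw [toOuterMeasure_image hW hκ]
    gcongr
    exact hQ a d

end FirstSuccess

section SuccessWord

variable {α : Type*} {t a : α} {J : ℕ}

/-- Two Schottky words in the letters `t` and `a`, with `M` letters `t` inserted between them. -/
def successWord (t a : α) (M : ℕ) (c : Fin (J + 1) × Fin (J + 1)) : FreeMonoid α :=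
  schottkyWord (.of t) (.of a) c.1 * .of t ^ M * schottkyWord (.of t) (.of a) c.2

lemma length_of_pow (t : α) (n : ℕ) : (FreeMonoid.of t ^ n).length = n := by
  induction n with
  | zero => rfl
  | succ n ih => rw [pow_succ, FreeMonoid.length_mul, ih, FreeMonoid.length_of]

lemma length_schottkyWord (t a : α) (l : Fin (J + 1)) :
    (schottkyWord (FreeMonoid.of t) (.of a) l).length = J + 1 := by
  simp only [schottkyWord, FreeMonoid.length_mul, length_of_pow, FreeMonoid.length_of]
  omega

lemma length_successWord (t a : α) (M : ℕ) (c : Fin (J + 1) × Fin (J + 1)) :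
    (successWord t a M c).length = 2 * (J + 1) + M := by
  simp only [successWord, FreeMonoid.length_mul, length_of_pow, length_schottkyWord]
  ring

lemma schottkyWord_of_injective (hne : a ≠ t) :
    (schottkyWord (FreeMonoid.of t) (.of a) : Fin (J + 1) → FreeMonoid α).Injective := by
  classical
  have toList_pow (n : ℕ) : (FreeMonoid.of t ^ n).toList = List.replicate n t := by
    induction n with
    | zero => rfl
    | succ n ih => rw [pow_succ', FreeMonoid.toList_of_mul, ih, List.replicate_succ]
  have idxOf (l : Fin (J + 1)) :
      (schottkyWord (FreeMonoid.of t) (.of a) l).toList.idxOf a = l := by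
    have ha : a ∉ List.replicate (l : ℕ) t := fun h => hne (List.eq_of_mem_replicate h)
    simp [schottkyWord, toList_pow, List.idxOf_append_of_notMem ha]
  exact fun l l' h => Fin.ext (by rw [← idxOf l, h, idxOf l'])

lemma successWord_injective (hne : a ≠ t) (M : ℕ) :
    (successWord t a M : Fin (J + 1) × Fin (J + 1) → FreeMonoid α).Injective := by
  intro c c' h
  obtain ⟨hleft, hright⟩ := List.append_inj (s₁ := (_ * _ : FreeMonoid α).toList) h <| by
    change FreeMonoid.length (_ * _) = FreeMonoid.length (_ * _)
    simp only [FreeMonoid.length_mul, length_schottkyWord]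
  exact Prod.ext (schottkyWord_of_injective hne
    (List.append_inj hleft ((length_schottkyWord t a c.1).trans
      (length_schottkyWord t a c'.1).symm)).1) (schottkyWord_of_injective hne hright)

lemma iidWord_successWord (p : PMF α) (t a : α) (M : ℕ) (c : Fin (J + 1) × Fin (J + 1)) :
    iidWord p (2 * (J + 1) + M) (successWord t a M c) = p t ^ (2 * J + M) * p a ^ 2 := by
  have schottky (l : Fin (J + 1)) : schottkyWord (p t) (p a) l = p t ^ J * p a := by
    rw [schottkyWord, mul_right_comm, ← pow_add, Nat.add_sub_cancel' (Nat.lt_succ_iff.1 l.2)]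
  rw [← length_successWord t a M c, iidWord_length_apply, successWord]
  simp only [map_mul, map_pow, map_schottkyWord, FreeMonoid.lift_eval_of, schottky]
  ring

end SuccessWord

/-! ### Markers aligned with the contracting axis -/

section SchottkyMarkers

variable {G X : Type*} [Group G] [MetricSpace X] [MulAction G X] {o : X} {g a : G} {C J m M : ℕ}

/-- The product of the letters of a word of words. -/
def blockValue : FreeMonoid (FreeMonoid G) →* G := FreeMonoid.lift (FreeMonoid.lift id)

/-- The markers are words of words in `G`. Such a marker is aligned with what surrounds it when
the two Schottky words in its first success word project near the basepoint of the axis of `g`;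
restricting to `Φ`, which will be a large finite set, makes the alignment constants uniform. -/
def schottkyMarkers (o : X) (g a : G) (C J m M : ℕ) (Φ : Set (FreeMonoid (FreeMonoid G))) :
    Markers G (FreeMonoid (FreeMonoid G)) where
  val := blockValue
  badAfter u := Φᶜ ∪ firstSuccessSet (successWord (J := J) (g ^ m) a M) fun b c _ =>
    ¬ ProjectsWithin o g C ((u * (blockValue b * schottkyWord (g ^ m) a c.1))⁻¹ • o)
  badBefore v := firstSuccessSet (successWord (J := J) (g ^ m) a M) fun _ c d =>
    ¬ ProjectsWithin o g C ((schottkyWord (g ^ m) a c.2 * blockValue d * v) • o)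

lemma blockValue_of_isFirstSuccess {s b d : FreeMonoid (FreeMonoid G)}
    {c : Fin (J + 1) × Fin (J + 1)}
    (h : IsFirstSuccess (successWord (g ^ m) a M) s b c d) :
    blockValue s = blockValue b * schottkyWord (g ^ m) a c.1 * g ^ (m * M) *
      (schottkyWord (g ^ m) a c.2 * blockValue d) := by
  simp only [h.1, blockValue, successWord, map_mul, map_pow, map_schottkyWord,
    FreeMonoid.lift_eval_of, id_eq, pow_mul, mul_assoc]

lemma firstSuccessSet_successWord_le (hne : a ≠ g ^ m) (p : PMF G) (n : ℕ)
    {Q : FreeMonoid (FreeMonoid G) → Fin (J + 1) × Fin (J + 1) → FreeMonoid (FreeMonoid G) → Prop}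
    (hQ : ∀ b d, ∃ f : Fin (J + 1) × Fin (J + 1) → Fin (J + 1), {c | Q b c d}.InjOn f) :
    (iidWord (iidWord p (2 * (J + 1) + M)) n).toOuterMeasure
        (firstSuccessSet (successWord (g ^ m) a M) Q) ≤
      ((J + 1 : ℕ) : ℝ≥0∞)⁻¹ + (iidWord p (2 * (J + 1) + M)).toOuterMeasure
        (Set.range (successWord (J := J) (g ^ m) a M))ᶜ ^ n := by
  refine iidWord_firstSuccessSet_le_inv_add (successWord_injective hne M)
    (iidWord_successWord p _ a M) (by simp [sq]) J.succ_ne_zero n fun b d => ?_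
  obtain ⟨f, hf⟩ := hQ b d
  simpa using Set.ncard_le_ncard_of_injOn f (t := Set.univ) (fun _ _ => Set.mem_univ _) hf

lemma toOuterMeasure_badAfter_le {Φ : Set (FreeMonoid (FreeMonoid G))} (hne : a ≠ g ^ m)
    (hS : IsSchottkyFamily o g C fun l : Fin (J + 1) => (schottkyWord (g ^ m) a l)⁻¹)
    (p : PMF G) (n : ℕ) (u : G) :
    (iidWord (iidWord p (2 * (J + 1) + M)) n).toOuterMeasure
        ((schottkyMarkers o g a C J m M Φ).badAfter u) ≤
      (iidWord (iidWord p (2 * (J + 1) + M)) n).toOuterMeasure Φᶜ +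
        (((J + 1 : ℕ) : ℝ≥0∞)⁻¹ + (iidWord p (2 * (J + 1) + M)).toOuterMeasure
          (Set.range (successWord (J := J) (g ^ m) a M))ᶜ ^ n) := by
  refine (MeasureTheory.measure_union_le _ _).trans ?_
  gcongr
  refine firstSuccessSet_successWord_le hne p n fun b _ => ⟨Prod.snd, fun c hc c' hc' h => ?_⟩
  simp only [Set.mem_ofPred_eq, ← mul_assoc, mul_inv_rev (_ * _), mul_smul (_ ⁻¹)] at hc hc'
  exact Prod.ext (hS.eq_of_not_projectsWithin hc hc') h

lemma toOuterMeasure_badBefore_le {Φ : Set (FreeMonoid (FreeMonoid G))} (hne : a ≠ g ^ m)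
    (hS : IsSchottkyFamily o g C fun l : Fin (J + 1) => schottkyWord (g ^ m) a l)
    (p : PMF G) (n : ℕ) (v : G) :
    (iidWord (iidWord p (2 * (J + 1) + M)) n).toOuterMeasure
        ((schottkyMarkers o g a C J m M Φ).badBefore v) ≤
      ((J + 1 : ℕ) : ℝ≥0∞)⁻¹ + (iidWord p (2 * (J + 1) + M)).toOuterMeasure
        (Set.range (successWord (J := J) (g ^ m) a M))ᶜ ^ n := by
  refine firstSuccessSet_successWord_le hne p n fun _ d => ⟨Prod.fst, fun c hc c' hc' h => ?_⟩
  simp only [Set.mem_ofPred_eq, mul_assoc, mul_smul (schottkyWord _ _ _)] at hc hc'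
  exact Prod.ext h (hS.eq_of_not_projectsWithin hc hc')

lemma toOuterMeasure_compl_range_successWord_lt_one {p : PMF G} (ha : p a ≠ 0)
    (hg : p (g ^ m) ≠ 0) (J M : ℕ) :
    (iidWord p (2 * (J + 1) + M)).toOuterMeasure
      (Set.range (successWord (J := J) (g ^ m) a M))ᶜ < 1 := by
  set q := iidWord p (2 * (J + 1) + M)
  set R := Set.range (successWord (J := J) (g ^ m) a M)
  have hR : q.toOuterMeasure R ≠ 0 := fun h0 => by
    have hc := MeasureTheory.measure_mono_null
      (Set.singleton_subset_iff.2 (Set.mem_range_self ((0, 0) : Fin (J + 1) × Fin (J + 1)))) h0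
    rw [PMF.toOuterMeasure_apply_singleton, iidWord_successWord] at hc
    simp [ha, hg] at hc
  rw [← toOuterMeasure_add_compl q R, add_comm]
  exact ENNReal.lt_add_right (ne_top_of_le_ne_top ENNReal.one_ne_top (toOuterMeasure_le_one _ _)) hR

lemma exists_finite_toOuterMeasure_compl_le {α : Type*} (p : PMF α) {ε : ℝ≥0∞} (hε : ε ≠ 0) :
    ∃ F : Set α, F.Finite ∧ p.toOuterMeasure Fᶜ ≤ ε := by
  obtain ⟨F, hF⟩ := ((ENNReal.tendsto_tsum_compl_atTop_zero p.tsum_coe_ne_top).eventually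
    (Iio_mem_nhds (pos_iff_ne_zero.2 hε))).exists
  refine ⟨F, F.finite_toSet, hF.le.trans' (le_of_eq ?_)⟩
  rw [PMF.toOuterMeasure_apply, ← tsum_subtype]
  rfl

/-- Both alignment conditions refer to the same first success word, so the value of a marker
factors through a long power of `g` independently of its surroundings. -/
lemma exists_blockValue_eq_of_aligned (hne : a ≠ g ^ m) (s : FreeMonoid (FreeMonoid G)) :
    ∃ P Q : G, ∀ u v, s ∉ (schottkyMarkers o g a C J m M Φ).badAfter u →
      s ∉ (schottkyMarkers o g a C J m M Φ).badBefore v →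
        blockValue s = P * g ^ (m * M) * Q ∧ ProjectsWithin o g C ((u * P)⁻¹ • o) ∧
          ProjectsWithin o g C ((Q * v) • o) := by
  by_cases hs : ∃ b c d, IsFirstSuccess (successWord (J := J) (g ^ m) a M) s b c d
  · obtain ⟨b, c, d, h⟩ := hs
    refine ⟨_, _, fun u v hu hv => ⟨blockValue_of_isFirstSuccess h, ?_, ?_⟩⟩
    · by_contra hbad
      refine hu (.inr fun b' c' d' h' => ?_)
      obtain ⟨rfl, rfl, rfl⟩ := h.unique (successWord_injective hne M) h'
      exact hbad
    · by_contra hbad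
      refine hv fun b' c' d' h' => ?_
      obtain ⟨rfl, rfl, rfl⟩ := h.unique (successWord_injective hne M) h'
      exact hbad
  · push Not at hs
    exact ⟨1, 1, fun u v _ hv => absurd (fun b c d h => absurd h (hs b c d)) hv⟩

end SchottkyMarkers

section Separation

variable {G X : Type*} [Group G] [MetricSpace X] [MulAction G X] [IsIsometricSMul G X] {o : X}
  {g a : G} {K : ℝ} {C J m M N : ℕ} {Φ : Set (FreeMonoid (FreeMonoid G))}

lemma IsContracting.exists_isSeparating (hc : IsContracting K (orbitMap o g))
    (hgeo : IsGeodesicSpace X) (hne : a ≠ g ^ m) (hI : 2 * C + 2 * K ^ 2 + N < (m * M : ℕ))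
    (hN : {h : G | dist o (h • o) ≤ 2 * fellowDist K + 1 ∧
      dist (g ^ N • o) ((h * g ^ N) • o) ≤ 2 * fellowDist K + 1}.Finite) (hΦ : Φ.Finite) :
    ∃ A A' : ℕ, (schottkyMarkers o g a C J m M Φ).IsSeparating (displacement o) A A' := by
  have hI' : 2 * C + 2 * K ^ 2 < (m * M : ℕ) := by linarith [N.cast_nonneg (α := ℝ)]
  choose P Q hPQ using exists_blockValue_eq_of_aligned (o := o) (C := C) (J := J) (M := M)
    (Φ := Φ) hne
  choose A hA using fun s => exists_nat_ge (2 * fellowDist K + displacement o (P s * g ^ C) +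
    displacement o ((g ^ C)⁻¹ * g ^ (m * M) * Q s))
  choose A' hA' using fun s => hc.exists_encard_le hgeo hI hN (P s) (Q s)
  lift Φ to Finset (FreeMonoid (FreeMonoid G)) using hΦ
  refine ⟨∑ s ∈ Φ, A s, ∑ s ∈ Φ, A' s, fun u v s hu hv => ?_, fun w s D => ?_⟩
  · have hs : s ∈ Φ := by_contra fun hs => hu (.inl hs)
    obtain ⟨hval, hleft, hright⟩ := hPQ s u v hu hv
    rw [show (schottkyMarkers o g a C J m M Φ).val = blockValue from rfl, hval]
    refine (hc.abs_displacement_sub_le hgeo hI' hleft hright).trans ((hA s).trans ?_)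
    exact_mod_cast Finset.single_le_sum (f := A) (fun _ _ => Nat.zero_le _) hs
  · by_cases hs : s ∈ Φ
    · refine (Set.encard_le_encard ?_).trans ((hA' s w D).trans ?_)
      · rintro u ⟨v, hw, hu, hv, hD⟩
        obtain ⟨hval, hleft, hright⟩ := hPQ s u v hu hv
        exact ⟨v, by rw [← hval]; exact hw, hleft, hright, hD⟩
      · exact_mod_cast Finset.single_le_sum (f := A') (fun _ _ => Nat.zero_le _) hs
    · rw [Set.encard_eq_zero.2]
      · exact zero_le
      · exact Set.eq_empty_of_forall_notMem fun u ⟨_, _, hu, _⟩ => hu (.inl hs)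

theorem IsContracting.exists_isSeparating_of_notMem_elementaryClosure
    (hc : IsContracting K (orbitMap o g)) (hgeo : IsGeodesicSpace X) (hwpd : IsWPD o g)
    (ha : a ∉ elementaryClosure g) {p : PMF G} (hpa : p a ≠ 0) (hm : 0 < m) (hpg : p (g ^ m) ≠ 0)
    {δ : ℝ≥0∞} (hδ : δ ≠ 0) :
    ∃ (r n : ℕ) (T : Markers G (FreeMonoid (FreeMonoid G))) (A A' : ℕ), T.val = blockValue ∧
      T.IsSeparating (displacement o) A A' ∧
      (∀ u, (iidWord (iidWord p r) n).toOuterMeasure (T.badAfter u) ≤ δ) ∧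
      ∀ v, (iidWord (iidWord p r) n).toOuterMeasure (T.badBefore v) ≤ δ := by
  have hne : a ≠ g ^ m := by
    rintro rfl
    exact ha (by simpa using zpow_mem_elementaryClosure (g := g) m)
  have hδ3 : δ / 3 ≠ 0 := by simp [hδ]
  obtain ⟨J, hJ⟩ := ENNReal.exists_inv_nat_lt hδ3
  replace hJ : ((J + 1 : ℕ) : ℝ≥0∞)⁻¹ ≤ δ / 3 :=
    hJ.le.trans' (ENNReal.inv_le_inv.2 (by exact_mod_cast J.le_succ))
  obtain ⟨C, hafter, hbefore⟩ := hc.exists_isSchottkyFamily_schottkyWord hgeo hwpd ha hm J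
  obtain ⟨N, -, hN⟩ := hwpd (2 * fellowDist K + 1) (by
    linarith [fellowDist_nonneg (zero_le_one.trans hc.one_lt.le)])
  obtain ⟨M, hM⟩ := exists_nat_gt (2 * C + 2 * K ^ 2 + N)
  have hI : 2 * C + 2 * K ^ 2 + N < (m * M : ℕ) :=
    hM.trans_le (by exact_mod_cast Nat.le_mul_of_pos_left M hm)
  obtain ⟨n, hn⟩ := ((ENNReal.tendsto_pow_atTop_nhds_zero_of_lt_one
    (toOuterMeasure_compl_range_successWord_lt_one hpa hpg J M)).eventually
      (Iio_mem_nhds (pos_iff_ne_zero.2 hδ3))).exists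
  obtain ⟨Φ, hΦ, hΦδ⟩ := exists_finite_toOuterMeasure_compl_le
    (iidWord (iidWord p (2 * (J + 1) + M)) n) hδ3
  obtain ⟨A, A', hsep⟩ := hc.exists_isSeparating (C := C) (J := J) hgeo hne hI hN hΦ
  refine ⟨2 * (J + 1) + M, n, _, A, A', rfl, hsep, fun u => ?_, fun v => ?_⟩
  · refine (toOuterMeasure_badAfter_le hne hafter p n u).trans
      ((add_le_add hΦδ (add_le_add hJ hn.le)).trans_eq ?_)
    rw [← add_assoc, ENNReal.add_thirds]
  · refine (toOuterMeasure_badBefore_le hne hbefore p n v).trans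
      ((add_le_add hJ hn.le).trans (le_self_add.trans_eq (ENNReal.add_thirds δ)))

end Separation

/-! ### Uniformly additive entropy of long random walks -/

section Parameters

lemma exists_pos_one_add_two_pow_mul_le (b c : ℕ) :
    ∃ k : ℕ, 0 < k ∧ 1 + 2 ^ k * (k * b + c) ≤ 4 ^ k := by
  obtain ⟨j, hj⟩ : ∃ j, j = 2 * b + c + 1 := ⟨_, rfl⟩
  have hlt : j < 2 ^ j := Nat.lt_two_pow_self
  have hlin : 2 * j * b + c + 1 ≤ 2 ^ (2 * j) := by
    calc 2 * j * b + c + 1 ≤ j * j := by rw [hj]; nlinarith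
      _ ≤ 2 ^ j * 2 ^ j := Nat.mul_le_mul hlt.le hlt.le
      _ = 2 ^ (2 * j) := by rw [two_mul, pow_add]
  refine ⟨2 * j, by omega, ?_⟩
  calc 1 + 2 ^ (2 * j) * (2 * j * b + c) ≤ 2 ^ (2 * j) * (2 * j * b + c + 1) := by
        linarith [Nat.one_le_two_pow (n := 2 * j)]
    _ ≤ 2 ^ (2 * j) * 2 ^ (2 * j) := Nat.mul_le_mul_left _ hlin
    _ = 4 ^ (2 * j) := (mul_pow 2 2 (2 * j)).symm

lemma surprisal_inv_le_of_le_pow {m b k : ℕ} (hb : b ≠ 0) (h : m ≤ b ^ k) :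
    surprisal (m : ℝ≥0∞)⁻¹ ≤ k * surprisal (b : ℝ≥0∞)⁻¹ := by
  calc surprisal (m : ℝ≥0∞)⁻¹ ≤ surprisal ((b ^ k : ℕ) : ℝ≥0∞)⁻¹ :=
        surprisal_antitone (ENNReal.inv_le_inv.2 (by exact_mod_cast h))
    _ = k * surprisal (b : ℝ≥0∞)⁻¹ := by
        rw [surprisal_inv_natCast (pow_ne_zero k hb), surprisal_inv_natCast hb, Nat.cast_pow,
          Real.log_pow, ENNReal.ofReal_mul k.cast_nonneg, ENNReal.ofReal_natCast]

lemma exists_pos_surprisal_inv_le (A L A' : ℕ) : ∃ k : ℕ, 0 < k ∧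
    surprisal ((1 + 2 ^ k * ((2 * (k * (2 * A + L) + 2 * A) + 1) * A') : ℕ) : ℝ≥0∞)⁻¹ ≤
      k * surprisal 4⁻¹ := by
  obtain ⟨k, hk, hle⟩ := exists_pos_one_add_two_pow_mul_le (2 * (2 * A + L) * A') ((4 * A + 1) * A')
  refine ⟨k, hk, surprisal_inv_le_of_le_pow (b := 4) (by simp) (hle.trans' (le_of_eq ?_))⟩
  ring

lemma exists_two_mul_le_and_mul_le {ε H : ℝ≥0∞} (hε : ε ≠ 0) (hH : H ≠ ⊤) :
    ∃ θ : ℝ≥0∞, θ ≠ 0 ∧ 2 * θ ≤ 2⁻¹ ∧ 24 * θ * H ≤ ε := by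
  have h24 : 24 * H ≠ ⊤ := ENNReal.mul_ne_top (by simp) hH
  refine ⟨min (2⁻¹ / 2) (ε / (24 * H)), ?_, ?_, ?_⟩
  · exact (lt_min (by simp) (ENNReal.div_pos hε h24)).ne'
  · exact (mul_le_mul_right (min_le_left _ _) 2).trans ENNReal.mul_div_le
  · rw [mul_right_comm]
    exact (mul_le_mul_right (min_le_right _ _) _).trans ENNReal.mul_div_le

end Parameters

section Additivity

variable {G S ι : Type*} [Group G] {l : Filter ι} [l.IsCountablyGenerated] {p : ι → PMF G}
  {q : PMF G} {σ : ι → PMF S} {M : Markers G S} {N : G → ℝ} {A A' : ℕ} {θ ε H : ℝ≥0∞}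

/-- Each of the `k` blocks consists of `n` free steps, which carry almost all of the entropy,
followed by a marker of `d` steps. The cost of the markers stays bounded as `n` grows. -/
theorem Markers.IsSeparating.exists_eventually_entropy_pow_add_entropy_le
    (hM : M.IsSeparating N A A') (hN : ∀ x, 0 ≤ N x) (h : TendstoSimply p l q)
    (hE : Tendsto (fun i => entropy (p i)) l (𝓝 (entropy q))) (hfin : entropy q ≠ ⊤)
    {d : ℕ} (hval : ∀ i, (σ i).map M.val = p i ^ d) (hσ : ∀ᶠ i in l, entropy (σ i) ≤ H)
    (hH : H ≠ ⊤) (hafter : ∀ᶠ i in l, ∀ u, (σ i).toOuterMeasure (M.badAfter u) ≤ θ ^ 2)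
    (hbefore : ∀ᶠ i in l, ∀ v, (σ i).toOuterMeasure (M.badBefore v) ≤ θ ^ 2)
    (hθ : θ ≠ 0) (hθ4 : 2 * θ ≤ 2⁻¹) (hθε : 24 * θ * (entropy q + 1) ≤ ε / 2) (hε : ε ≠ 0) :
    ∃ n : ℕ, 0 < n ∧ ∀ᶠ i in l, ∀ r : PMF G,
      entropy (p i ^ n) + entropy r ≤ entropy (p i ^ n * r) + n * ε := by
  set cost := surprisal 4⁻¹ + H + (surprisal 2⁻¹ + 1) with hcost
  have hcost_top : cost ≠ ⊤ := by simp [hcost, surprisal_ne_top, hH]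
  obtain ⟨n, hn⟩ := ENNReal.exists_nat_mul_gt (ENNReal.half_pos hε).ne' hcost_top
  have hn0 : 0 < n := Nat.pos_of_ne_zero (by rintro rfl; simp at hn)
  obtain ⟨F, hF, htail⟩ := (h.pow n).exists_finite_eventually_expect_compl_surprisal_le
    (h.tendsto_entropy_pow hE hfin n) (entropy_pow_ne_top hfin n) one_ne_zero
  obtain ⟨B, hB⟩ := (hF.image N).bddAbove
  obtain ⟨k, hk, hcount⟩ := exists_pos_surprisal_inv_le A ⌈B⌉₊ A'
  have hEq : ∀ᶠ i in l, entropy (p i) ≤ entropy q + 1 :=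
    hE.eventually (Iic_mem_nhds (ENNReal.lt_add_right hfin one_ne_zero))
  refine ⟨(n + d) * k, by positivity, ?_⟩
  filter_upwards [hσ, hafter, hbefore, htail, hEq] with i hσi hafteri hbeforei htaili hEi r
  have key := hM.entropy_pow_add_entropy_le hafteri hbeforei (ζ := p i ^ n)
    (fun x hx => ⟨hN x, (hB (Set.mem_image_of_mem N hx)).trans (Nat.le_ceil B)⟩) hθ hθ4 hk r
  rw [hval, ← pow_add, ← pow_mul] at key
  refine key.trans (add_le_add le_rfl ?_)
  have hfree : 24 * θ * entropy (p i ^ n) ≤ n * (ε / 2) := by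
    calc 24 * θ * entropy (p i ^ n) ≤ 24 * θ * (n * (entropy q + 1)) := by
          gcongr
          exact (entropy_pow_le _ n).trans (by gcongr)
      _ = n * (24 * θ * (entropy q + 1)) := by ring
      _ ≤ n * (ε / 2) := by gcongr
  calc _ ≤ k * surprisal 4⁻¹ + (k * H + k * (surprisal 2⁻¹ + 1 + n * (ε / 2))) := by gcongr
    _ = k * (cost + n * (ε / 2)) := by rw [hcost]; ring
    _ ≤ k * (n * (ε / 2) + n * (ε / 2)) := by gcongr
    _ = (n * k : ℕ) * ε := by rw [← mul_add, ENNReal.add_halves]; push_cast; ring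
    _ ≤ ((n + d) * k : ℕ) * ε := by gcongr; exact Nat.le_add_right n d

lemma TendstoSimply.eventually_forall_toOuterMeasure_le {α T : Type*} {p : ι → PMF α} {q : PMF α}
    (h : TendstoSimply p l q) {E : T → Set α} {δ : ℝ≥0∞} (hδ : δ ≠ 0)
    (hE : ∀ t, q.toOuterMeasure (E t) ≤ δ / 2) :
    ∀ᶠ i in l, ∀ t, (p i).toOuterMeasure (E t) ≤ δ := by
  filter_upwards [h.eventually_expect_le (ENNReal.half_pos hδ).ne'] with i hi t
  have hle := hi ((E t).indicator 1) fun _ => Set.indicator_apply_le' (fun _ => le_rfl)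
    fun _ => zero_le
  rw [expect_indicator, expect_indicator] at hle
  exact hle.trans ((add_le_add_left (hE t) _).trans_eq (ENNReal.add_halves δ))

lemma map_blockValue_iidWord (p : PMF G) (r n : ℕ) :
    (iidWord (iidWord p r) n).map blockValue = p ^ (r * n) := by
  rw [blockValue, map_lift_iidWord, map_lift_iidWord, PMF.map_id, pow_mul]

theorem IsContracting.exists_eventually_entropy_pow_add_entropy_le {X : Type*} [MetricSpace X]
    [MulAction G X] [IsIsometricSMul G X] {o : X} {g a : G} {K : ℝ}
    (hc : IsContracting K (orbitMap o g)) (hgeo : IsGeodesicSpace X) (hwpd : IsWPD o g)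
    (h : TendstoSimply p l q) (hE : Tendsto (fun i => entropy (p i)) l (𝓝 (entropy q)))
    (hfin : entropy q ≠ ⊤) (ha : a ∉ elementaryClosure g) (hqa : q a ≠ 0) {m : ℕ} (hm : 0 < m)
    (hqg : q (g ^ m) ≠ 0) (hε : ε ≠ 0) :
    ∃ n : ℕ, 0 < n ∧ ∀ᶠ i in l, ∀ r : PMF G,
      entropy (p i ^ n) + entropy r ≤ entropy (p i ^ n * r) + n * ε := by
  obtain ⟨θ, hθ, hθ4, hθε⟩ := exists_two_mul_le_and_mul_le (ENNReal.half_pos hε).ne'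
    (ENNReal.add_ne_top.2 ⟨hfin, ENNReal.one_ne_top⟩)
  have hθ2 : θ ^ 2 ≠ 0 := pow_ne_zero 2 hθ
  obtain ⟨d, n, M, A, A', hval, hM, hafter, hbefore⟩ :=
    hc.exists_isSeparating_of_notMem_elementaryClosure hgeo hwpd ha hqa hm hqg
      (ENNReal.half_pos hθ2).ne'
  have hσ := (h.iidWord d).iidWord n
  have hEσ : ∀ᶠ i in l, entropy (iidWord (iidWord (p i) d) n) ≤ n * (d * (entropy q + 1)) := by
    filter_upwards [hE.eventually (Iic_mem_nhds (ENNReal.lt_add_right hfin one_ne_zero))] with i hi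
    exact (entropy_iidWord_le _ n).trans
      (mul_le_mul_right ((entropy_iidWord_le _ d).trans (mul_le_mul_right hi _)) _)
  exact hM.exists_eventually_entropy_pow_add_entropy_le displacement_nonneg h hE hfin
    (fun i => by rw [hval, map_blockValue_iidWord]) hEσ (by finiteness)
    (hσ.eventually_forall_toOuterMeasure_le hθ2 hafter)
    (hσ.eventually_forall_toOuterMeasure_le hθ2 hbefore) hθ hθ4 hθε hε

end Additivity

/-! ### Random walks on virtually cyclic subgroups -/

section Records

open Classical in
/-- The record of a letter: hidden when it lies in `F`. -/
noncomputable def revealOutside {α : Type*} (F : Set α) (z : α) : Option α :=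
  if z ∈ F then none else some z

lemma surprisal_optionLaw_revealOutside_le {α : Type*} (p : PMF α) (F : Set α) (z : α) :
    surprisal (optionLaw p (revealOutside F z)) ≤
      surprisal 2⁻¹ + Fᶜ.indicator (fun x => surprisal (p x)) z := by
  by_cases hz : z ∈ F
  · simpa [revealOutside, hz] using surprisal_optionLaw_none_le p
  · simpa [revealOutside, hz] using surprisal_optionLaw_some_le p z

lemma mul_toOuterMeasure_le {α β γ : Type*} (p : PMF α) (r : PMF β) (f : α → β → γ) {S : Set β}
    {T : Set γ} {c : ℝ≥0∞} (h : ∀ x ∈ S, ∃ m, c ≤ p m ∧ f m x ∈ T) :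
    c * r.toOuterMeasure S ≤ ((prodLaw p r).map fun m => f m.1 m.2).toOuterMeasure T := by
  rw [← expect_indicator, ← expect_indicator, expect_map, expect_prodLaw, expect_comm,
    ← expect_const_mul]
  refine expect_mono fun x => ?_
  by_cases hx : x ∈ S
  · obtain ⟨m, hm, hT⟩ := h x hx
    rw [Set.indicator_of_mem hx, Pi.one_apply, mul_one]
    refine hm.trans ((le_of_eq ?_).trans (ENNReal.le_tsum m))
    simp only [Set.indicator_of_mem hT, Pi.one_apply, mul_one]
  · simp [hx]

end Records

section VirtuallyCyclic

variable {G : Type*} [Group G] {g : G} {Y : Finset G} {F : Set G} {B L : ℕ} {p : PMF G}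

/-- The pairs `(y, i)` with `y ∈ Y` for which `y * g ^ i` agrees with `h` up to a power of `g` of
exponent at most `B`. -/
def approximations (g : G) (Y : Finset G) (B : ℕ) (h : G) : Set (G × ℤ) :=
  {x | x.1 ∈ Y ∧ ∃ j : ℤ, |j| ≤ B ∧ x.1 * g ^ (x.2 + j) = h}

lemma encard_setOf_mem_approximations_le (x : G × ℤ) :
    {h | x ∈ approximations g Y B h}.encard ≤ (2 * B + 1 : ℕ) := by
  have hsub : {h | x ∈ approximations g Y B h} ⊆
      (fun j => x.1 * g ^ (x.2 + j)) '' (Finset.Icc (-B : ℤ) B : Set ℤ) := by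
    rintro h ⟨-, j, hj, rfl⟩
    exact ⟨j, by simpa using abs_le.1 hj, rfl⟩
  refine (Set.encard_le_encard hsub).trans ((Set.encard_image_le _ _).trans ?_)
  rw [Set.encard_coe_eq_coe_finsetCard, Int.card_Icc]
  exact_mod_cast (by omega : ((B : ℤ) + 1 - -B).toNat ≤ 2 * B + 1)

/-- Left multiplication of `y * g ^ i` by a revealed letter, with exponents controlled by `e`. When
the letter is hidden, only the new representative is recorded and the exponent is kept. -/
def advance (g : G) (e : G → ℤ) : Option G × G → G × ℤ → G × ℤ
  | (some u, _), (y, i) => (u * y * g ^ e (u * y), i - e (u * y))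
  | (none, c), (_, i) => (c, i)

lemma advance_mem_approximations {e : G → ℤ} {z h : G} {x : G × ℤ}
    (hx : x ∈ approximations g Y B h) (he : z * x.1 * g ^ e (z * x.1) ∈ Y)
    (hL : z ∈ F → |e (z * x.1)| ≤ L) :
    advance g e (revealOutside F z, z * x.1 * g ^ e (z * x.1)) x ∈
      approximations g Y (B + L) (z * h) := by
  obtain ⟨y, i⟩ := x
  obtain ⟨-, j, hj, rfl⟩ := hx
  by_cases hz : z ∈ F
  · simp only [revealOutside, if_pos hz]
    refine ⟨he, j - e (z * y), (abs_sub _ _).trans (by push_cast; linarith [hL hz]), ?_⟩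
    simp only [advance, mul_assoc, ← zpow_add]
    congr 3
    ring
  · simp only [revealOutside, if_neg hz]
    refine ⟨he, j, hj.trans (by exact_mod_cast B.le_add_right L), ?_⟩
    simp only [advance, mul_assoc, ← zpow_add]
    congr 3
    ring

lemma surprisal_map_advance_le {e : G → ℤ} {z : G} (h1 : 1 ∈ Y)
    (he : ∀ y ∈ Y, z * y * g ^ e (z * y) ∈ Y) (hL : z ∈ F → ∀ y ∈ Y, |e (z * y)| ≤ L)
    (r : PMF (G × ℤ)) (h : G) :
    surprisal (((prodLaw (prodLaw (optionLaw p) (PMF.uniformOfFinset Y ⟨1, h1⟩)) r).map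
        fun m => advance g e m.1 m.2).toOuterMeasure (approximations g Y (B + L) (z * h))) ≤
      surprisal 2⁻¹ + Fᶜ.indicator (fun x => surprisal (p x)) z + surprisal (Y.card : ℝ≥0∞)⁻¹ +
        surprisal (r.toOuterMeasure (approximations g Y B h)) := by
  set q := prodLaw (optionLaw p) (PMF.uniformOfFinset Y ⟨1, h1⟩)
  have hq {y : G} (hy : y ∈ Y) : q (revealOutside F z, y) =
      optionLaw p (revealOutside F z) * (Y.card : ℝ≥0∞)⁻¹ :=
    (prodLaw_apply ..).trans (congrArg _ (PMF.uniformOfFinset_apply_of_mem _ hy))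
  refine (surprisal_antitone (mul_toOuterMeasure_le q r (advance g e)
    (S := approximations g Y B h) (c := q (revealOutside F z, 1)) fun x hx =>
      ⟨_, ((hq h1).trans (hq (he x.1 hx.1)).symm).le,
        advance_mem_approximations hx (he x.1 hx.1) fun hF => hL hF x.1 hx.1⟩)).trans ?_
  rw [surprisal_mul (q.coe_le_one _) (toOuterMeasure_le_one r _), hq h1,
    surprisal_mul ((optionLaw p).coe_le_one _) (by simpa using ⟨1, h1⟩)]
  gcongr
  exact surprisal_optionLaw_revealOutside_le p F z

lemma exists_expect_surprisal_approximations_le {e : G → ℤ} (h1 : 1 ∈ Y)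
    (he : ∀ z ∈ p.support, ∀ y ∈ Y, z * y * g ^ e (z * y) ∈ Y)
    (hL : ∀ z ∈ F, ∀ y ∈ Y, |e (z * y)| ≤ L) (k : ℕ) :
    ∃ r : PMF (G × ℤ),
      (expect (p ^ k) fun h => surprisal (r.toOuterMeasure (approximations g Y (k * L) h))) ≤
        k * (surprisal 2⁻¹ + expect p (Fᶜ.indicator fun x => surprisal (p x)) +
          surprisal (Y.card : ℝ≥0∞)⁻¹) := by
  induction k with
  | zero =>
    refine ⟨PMF.pure (1, 0), ?_⟩
    have hmem : ((1, 0) : G × ℤ) ∈ approximations g Y (0 * L) 1 := ⟨h1, 0, by simp, by simp⟩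
    rw [pow_zero, one_def, expect_pure, PMF.toOuterMeasure_pure_apply, if_pos hmem]
    simp
  | succ k ih =>
    obtain ⟨r, hr⟩ := ih
    refine ⟨(prodLaw (prodLaw (optionLaw p) (PMF.uniformOfFinset Y ⟨1, h1⟩)) r).map
      fun m => advance g e m.1 m.2, ?_⟩
    rw [pow_succ', expect_mul, Nat.succ_mul]
    refine (expect_mono_of_support fun z hz => expect_mono fun h =>
      surprisal_map_advance_le h1 (he z hz) (hL z) r h).trans ?_
    simp only [expect_add, expect_const]
    refine (add_le_add_right hr _).trans_eq ?_
    push_cast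
    ring

lemma entropy_pow_le_of_mul_zpow_mem {e : G → ℤ} (h1 : 1 ∈ Y)
    (he : ∀ z ∈ p.support, ∀ y ∈ Y, z * y * g ^ e (z * y) ∈ Y)
    (hL : ∀ z ∈ F, ∀ y ∈ Y, |e (z * y)| ≤ L) (k : ℕ) :
    entropy (p ^ k) ≤ surprisal ((2 * (k * L) + 1 : ℕ) : ℝ≥0∞)⁻¹ +
      k * (surprisal 2⁻¹ + expect p (Fᶜ.indicator fun x => surprisal (p x)) +
        surprisal (Y.card : ℝ≥0∞)⁻¹) := by
  obtain ⟨r, hr⟩ := exists_expect_surprisal_approximations_le h1 he hL k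
  exact (entropy_le_of_code (p ^ k) r (by omega)
    (encard_setOf_mem_approximations_le (g := g) (Y := Y) (B := k * L))).trans
      (add_le_add_right hr _)

lemma support_pow_subset {E : Subgroup G} (hp : p.support ⊆ E) (n : ℕ) :
    (p ^ n).support ⊆ E := by
  induction n with
  | zero => simp [one_def, E.one_mem]
  | succ n ih =>
    rw [pow_succ, mul_def, PMF.support_bind]
    refine Set.iUnion₂_subset fun x hx => ?_
    rw [PMF.support_map]
    rintro _ ⟨y, hy, rfl⟩
    exact E.mul_mem (ih hx) (hp hy)

/-- Cut the walk into `k` blocks of `n` steps. Each block costs the choice of one of the finitely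
many representatives, whatever `n` is, and the remaining power of `g` has exponent at most linear in
`k`. -/
theorem exists_entropy_pow_le_of_support_subset {E : Subgroup G} (hgE : g ∈ E) {R : Set G}
    (hR : R.Finite) (hER : ∀ a ∈ E, ∃ m : ℤ, a * g ^ m ∈ R) {q : PMF G} (hq : q.support ⊆ E)
    (hfin : entropy q ≠ ⊤) {ε : ℝ≥0∞} (hε : ε ≠ 0) :
    ∃ n : ℕ, 0 < n ∧ entropy (q ^ n) ≤ n * ε := by
  obtain ⟨Y, hY⟩ := ((hR.insert 1).inter_of_left (E : Set G)).exists_finset_coe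
  have hYmem {y : G} : y ∈ Y ↔ (y = 1 ∨ y ∈ R) ∧ y ∈ E := by
    rw [← Finset.mem_coe, hY]
    rfl
  have h1 : (1 : G) ∈ Y := hYmem.2 ⟨.inl rfl, E.one_mem⟩
  have hex (a : G) : ∃ m : ℤ, a ∈ E → a * g ^ m ∈ Y := by
    by_cases ha : a ∈ E
    · obtain ⟨m, hm⟩ := hER a ha
      exact ⟨m, fun _ => hYmem.2 ⟨.inr hm, E.mul_mem ha (E.zpow_mem hgE m)⟩⟩
    · exact ⟨0, fun h => absurd h ha⟩
  choose e he using hex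
  set cost := surprisal 4⁻¹ + (surprisal 2⁻¹ + 1 + surprisal (Y.card : ℝ≥0∞)⁻¹) with hcost
  have hcost_top : cost ≠ ⊤ := by simp [hcost, surprisal_ne_top]
  obtain ⟨n, hn⟩ := ENNReal.exists_nat_mul_gt hε hcost_top
  have hn0 : 0 < n := Nat.pos_of_ne_zero (by rintro rfl; simp at hn)
  obtain ⟨F, hF, htail⟩ := exists_finite_expect_compl_surprisal_lt (entropy_pow_ne_top hfin n)
    one_ne_zero
  obtain ⟨B, hB⟩ := ((hF.prod Y.finite_toSet).image fun x => |e (x.1 * x.2)|).bddAbove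
  have hL (z) (hz : z ∈ F) (y) (hy : y ∈ Y) : |e (z * y)| ≤ B.toNat :=
    (hB ⟨(z, y), ⟨hz, hy⟩, rfl⟩).trans B.self_le_toNat
  obtain ⟨k, hk, hpow⟩ := exists_pos_one_add_two_pow_mul_le (2 * B.toNat) 0
  have hcount : 2 * (k * B.toNat) + 1 ≤ 4 ^ k := by
    nlinarith [Nat.one_le_two_pow (n := k), Nat.zero_le (k * B.toNat)]
  refine ⟨n * k, by positivity, ?_⟩
  rw [pow_mul]
  calc entropy ((q ^ n) ^ k)
      ≤ k * surprisal 4⁻¹ + k * (surprisal 2⁻¹ + 1 + surprisal (Y.card : ℝ≥0∞)⁻¹) := by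
        refine (entropy_pow_le_of_mul_zpow_mem h1 (fun z hz y hy => he _ (E.mul_mem
          (support_pow_subset hq n hz) (hYmem.1 hy).2)) hL k).trans ?_
        gcongr
        exact surprisal_inv_le_of_le_pow (b := 4) (by simp) hcount
    _ = k * cost := by rw [hcost]; ring
    _ ≤ k * (n * ε) := by gcongr
    _ = (n * k : ℕ) * ε := by push_cast; ring

end VirtuallyCyclic

/-! ### Asymptotic entropy -/

section Monoid

/-- The asymptotic entropy `lim H(pⁿ) / n = inf H(pⁿ) / n`, with values in `[0, ∞]`. -/
noncomputable def asymptoticEntropy {G : Type*} [Monoid G] (p : PMF G) : ℝ≥0∞ :=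
  ⨅ n : ℕ, entropy (p ^ (n + 1)) / (n + 1 : ℕ)

variable {G : Type*} [Monoid G] {p q : PMF G} {c δ : ℝ≥0∞} {n : ℕ}

lemma le_asymptoticEntropy_iff :
    c ≤ asymptoticEntropy p ↔ ∀ n : ℕ, n * c ≤ entropy (p ^ n) := by
  have hdiv (n : ℕ) : c ≤ entropy (p ^ (n + 1)) / (n + 1 : ℕ) ↔
      (n + 1 : ℕ) * c ≤ entropy (p ^ (n + 1)) := by
    rw [ENNReal.le_div_iff_mul_le (.inl (by simp)) (.inl (by simp)), mul_comm]
  simp only [asymptoticEntropy, le_iInf_iff, hdiv]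
  exact ⟨fun h n => n.casesOn (by simp) h, fun h n => h (n + 1)⟩

lemma mul_asymptoticEntropy_le (p : PMF G) (n : ℕ) :
    n * asymptoticEntropy p ≤ entropy (p ^ n) :=
  le_asymptoticEntropy_iff.1 le_rfl n

lemma asymptoticEntropy_ne_top (hfin : entropy p ≠ ⊤) : asymptoticEntropy p ≠ ⊤ :=
  ne_top_of_le_ne_top hfin (by simpa using mul_asymptoticEntropy_le p 1)

lemma asymptoticEntropy_pow (p : PMF G) (hn : 0 < n) :
    asymptoticEntropy (p ^ n) = n * asymptoticEntropy p := by
  refine le_antisymm ?_ (le_asymptoticEntropy_iff.2 fun k => ?_)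
  · have h0 : (n : ℝ≥0∞) ≠ 0 := by exact_mod_cast hn.ne'
    rw [mul_comm, ← ENNReal.div_le_iff h0 (ENNReal.natCast_ne_top n), le_asymptoticEntropy_iff]
    intro k
    rw [← mul_div_assoc, ENNReal.div_le_iff h0 (ENNReal.natCast_ne_top n), mul_comm (entropy _)]
    refine (mul_asymptoticEntropy_le (p ^ n) k).trans ?_
    rw [← pow_mul, mul_comm, pow_mul]
    exact entropy_pow_le _ n
  · rw [← mul_assoc, ← Nat.cast_mul, ← pow_mul, mul_comm k]
    exact mul_asymptoticEntropy_le p _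

lemma entropy_le_asymptoticEntropy_add
    (h : ∀ r : PMF G, entropy p + entropy r ≤ entropy (p * r) + δ) :
    entropy p ≤ asymptoticEntropy p + δ := by
  have hmul (k : ℕ) : k * entropy p ≤ entropy (p ^ k) + k * δ := by
    induction k with
    | zero => simp
    | succ k ih =>
      calc (k + 1 : ℕ) * entropy p = entropy p + k * entropy p := by push_cast; ring
        _ ≤ entropy p + (entropy (p ^ k) + k * δ) := by gcongr
        _ = entropy p + entropy (p ^ k) + k * δ := (add_assoc ..).symm
        _ ≤ entropy (p * p ^ k) + δ + k * δ := add_le_add_left (h _) _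
        _ = entropy (p ^ (k + 1)) + (k + 1 : ℕ) * δ := by rw [pow_succ']; push_cast; ring
  rw [← tsub_le_iff_right, le_asymptoticEntropy_iff]
  intro k
  rw [ENNReal.mul_sub fun _ _ => ENNReal.natCast_ne_top k, tsub_le_iff_right]
  exact hmul k

variable {ι : Type*} {l : Filter ι} [l.IsCountablyGenerated] {p : ι → PMF G}

lemma TendstoSimply.eventually_asymptoticEntropy_lt (h : TendstoSimply p l q)
    (hE : Tendsto (fun i => entropy (p i)) l (𝓝 (entropy q))) (hfin : entropy q ≠ ⊤)
    (hc : asymptoticEntropy q < c) : ∀ᶠ i in l, asymptoticEntropy (p i) < c := by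
  obtain ⟨n, hn⟩ := iInf_lt_iff.1 hc
  have hlim := ENNReal.Tendsto.div_const (h.tendsto_entropy_pow hE hfin (n + 1))
    (b := ((n + 1 : ℕ) : ℝ≥0∞)) (.inr (by simp))
  filter_upwards [hlim.eventually (Iio_mem_nhds hn)] with i hi
  exact (iInf_le _ n).trans_lt hi

lemma TendstoSimply.eventually_lt_asymptoticEntropy (h : TendstoSimply p l q)
    (hE : Tendsto (fun i => entropy (p i)) l (𝓝 (entropy q))) (hfin : entropy q ≠ ⊤)
    (hadd : ∀ ε : ℝ≥0∞, ε ≠ 0 → ∃ n : ℕ, 0 < n ∧ ∀ᶠ i in l, ∀ r : PMF G,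
      entropy (p i ^ n) + entropy r ≤ entropy (p i ^ n * r) + n * ε)
    (hc : c < asymptoticEntropy q) : ∀ᶠ i in l, c < asymptoticEntropy (p i) := by
  obtain ⟨ε, hε, hcε⟩ := ENNReal.lt_iff_exists_add_pos_lt.1 hc
  obtain ⟨n, hn, hadd⟩ := hadd ε (by exact_mod_cast hε.ne')
  have hn0 : (n : ℝ≥0∞) ≠ 0 := by exact_mod_cast hn.ne'
  have hlt : n * (c + ε) < entropy (q ^ n) :=
    (ENNReal.mul_lt_mul_right hn0 (ENNReal.natCast_ne_top n) hcε).trans_le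
      (mul_asymptoticEntropy_le q n)
  filter_upwards [hadd, (h.tendsto_entropy_pow hE hfin n).eventually (Ioi_mem_nhds hlt)]
    with i hadd_i hi
  have hle := entropy_le_asymptoticEntropy_add hadd_i
  rw [asymptoticEntropy_pow _ hn, ← mul_add] at hle
  exact lt_of_add_lt_add_right (lt_of_mul_lt_mul_left' (hi.trans_le hle))

end Monoid

section Group

variable {G X : Type*} [Group G] [MetricSpace X] [MulAction G X] [IsIsometricSMul G X] {o : X}
  {g : G} {K : ℝ}

lemma IsContracting.asymptoticEntropy_eq_zero (hc : IsContracting K (orbitMap o g))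
    (hgeo : IsGeodesicSpace X) (hwpd : IsWPD o g) {q : PMF G} (hfin : entropy q ≠ ⊤)
    (hq : q.support ⊆ elementaryClosure g) : asymptoticEntropy q = 0 := by
  obtain ⟨R, hR, hRmem⟩ := hc.exists_finite_forall_mul_zpow_mem hgeo hwpd
  refine le_zero_iff.1 (le_of_forall_gt_imp_ge_of_dense fun ε hε => ?_)
  obtain ⟨n, hn, hle⟩ := exists_entropy_pow_le_of_support_subset
    (by simpa using zpow_mem_elementaryClosure (g := g) 1) hR hRmem hq hfin hε.ne'
  exact (ENNReal.mul_le_mul_iff_right (by exact_mod_cast hn.ne') (ENNReal.natCast_ne_top n)).1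
    ((mul_asymptoticEntropy_le q n).trans hle)

variable {ι : Type*} {l : Filter ι} [l.IsCountablyGenerated] {p : ι → PMF G} {q : PMF G}

/-- If `q` charges an element outside the elementary closure of `g`, its long convolution powers
contain enough markers for entropy to be almost additive; otherwise the limit is zero. -/
theorem IsContracting.tendsto_asymptoticEntropy (hc : IsContracting K (orbitMap o g))
    (hgeo : IsGeodesicSpace X) (hwpd : IsWPD o g) (h : TendstoSimply p l q)
    (hE : Tendsto (fun i => entropy (p i)) l (𝓝 (entropy q))) (hfin : entropy q ≠ ⊤) {m : ℕ}
    (hm : 0 < m) (hqg : q (g ^ m) ≠ 0) :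
    Tendsto (fun i => asymptoticEntropy (p i)) l (𝓝 (asymptoticEntropy q)) := by
  refine tendsto_order.2 ⟨fun c hlt => ?_, fun c => h.eventually_asymptoticEntropy_lt hE hfin⟩
  by_cases hq : q.support ⊆ elementaryClosure g
  · simp [hc.asymptoticEntropy_eq_zero hgeo hwpd hfin hq] at hlt
  · obtain ⟨a, hqa, ha⟩ := Set.not_subset.1 hq
    exact h.eventually_lt_asymptoticEntropy hE hfin (fun ε hε =>
      hc.exists_eventually_entropy_pow_add_entropy_le hgeo hwpd h hE hfin ha hqa hm hqg hε) hlt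

theorem IsContracting.tendsto_asymptoticEntropy_of_pow (hc : IsContracting K (orbitMap o g))
    (hgeo : IsGeodesicSpace X) (hwpd : IsWPD o g) (h : TendstoSimply p l q)
    (hE : Tendsto (fun i => entropy (p i)) l (𝓝 (entropy q))) (hfin : entropy q ≠ ⊤) {n m : ℕ}
    (hn : 0 < n) (hm : 0 < m) (hqg : (q ^ n) (g ^ m) ≠ 0) :
    Tendsto (fun i => asymptoticEntropy (p i)) l (𝓝 (asymptoticEntropy q)) := by
  have hdiv (r : PMF G) : asymptoticEntropy r = asymptoticEntropy (r ^ n) / n := by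
    rw [asymptoticEntropy_pow r hn, mul_comm,
      ENNReal.mul_div_cancel_right (by exact_mod_cast hn.ne') (ENNReal.natCast_ne_top n)]
  rw [hdiv q]
  exact (ENNReal.Tendsto.div_const (hc.tendsto_asymptoticEntropy hgeo hwpd (h.pow n)
    (h.tendsto_entropy_pow hE hfin n) (entropy_pow_ne_top hfin n) hm hqg)
      (.inr (by exact_mod_cast hn.ne'))).congr fun i => (hdiv (p i)).symm

end Group

/-! ### Real-valued probability measures -/

section RealValued

variable {α G : Type*} [Group G] {μ : α → ℝ} {ν : G → ℝ}

/-- The probability mass function of a real-valued probability measure. -/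
noncomputable def toPMF (hμ : IsProbMeasure μ) : PMF α :=
  ⟨fun x => ENNReal.ofReal (μ x), by
    rw [ENNReal.summable.hasSum_iff, ← ENNReal.ofReal_tsum_of_nonneg hμ.1 hμ.2.1, hμ.2.2,
      ENNReal.ofReal_one]⟩

lemma toReal_toPMF_apply (hμ : IsProbMeasure μ) (x : α) : (toPMF hμ x).toReal = μ x :=
  ENNReal.toReal_ofReal (hμ.1 x)

lemma toReal_mul_surprisal (p : PMF α) (x : α) :
    (p x * surprisal (p x)).toReal = -((p x).toReal * Real.log (p x).toReal) := by
  by_cases hx : p x = 0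
  · simp [hx]
  · rw [surprisal_eq_ofReal hx (p.apply_ne_top x), ENNReal.toReal_mul, ENNReal.toReal_ofReal,
      mul_neg]
    exact neg_nonneg.2 (Real.log_nonpos ENNReal.toReal_nonneg
      (ENNReal.toReal_mono ENNReal.one_ne_top (p.coe_le_one x)))

lemma mul_surprisal_ne_top (p : PMF α) (x : α) : p x * surprisal (p x) ≠ ⊤ := by
  by_cases hx : p x = 0
  · simp [hx]
  · exact ENNReal.mul_ne_top (p.apply_ne_top x) (surprisal_ne_top hx)

lemma entropyOf_toReal (p : PMF α) : entropyOf (fun x => (p x).toReal) = (entropy p).toReal := by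
  rw [entropy, expect, ENNReal.tsum_toReal_eq (mul_surprisal_ne_top p)]
  exact tsum_congr fun x => (toReal_mul_surprisal p x).symm

lemma entropyOf_eq_toReal (hμ : IsProbMeasure μ) : entropyOf μ = (entropy (toPMF hμ)).toReal := by
  simp only [← entropyOf_toReal, toReal_toPMF_apply]

lemma entropy_toPMF_ne_top (hμ : IsProbMeasure μ) (hH : HasFiniteEntropy μ) :
    entropy (toPMF hμ) ≠ ⊤ := by
  have hsum : Summable fun x => (toPMF hμ x * surprisal (toPMF hμ x)).toReal := by
    simpa only [toReal_mul_surprisal, toReal_toPMF_apply] using hH.neg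
  simpa only [entropy, expect, ENNReal.ofReal_toReal (mul_surprisal_ne_top _ _)] using
    hsum.tsum_ofReal_ne_top

lemma tendsto_entropy_toPMF {ι : Type*} {l : Filter ι} {μs : ι → α → ℝ}
    (hμs : ∀ i, IsProbMeasure (μs i)) (hμ : IsProbMeasure μ)
    (hfin : ∀ᶠ i in l, HasFiniteEntropy (μs i)) (hH : HasFiniteEntropy μ)
    (h : Tendsto (fun i => entropyOf (μs i)) l (𝓝 (entropyOf μ))) :
    Tendsto (fun i => entropy (toPMF (hμs i))) l (𝓝 (entropy (toPMF hμ))) := by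
  have hlim := ENNReal.tendsto_ofReal h
  rw [entropyOf_eq_toReal hμ, ENNReal.ofReal_toReal (entropy_toPMF_ne_top hμ hH)] at hlim
  refine hlim.congr' (hfin.mono fun i hi => ?_)
  rw [entropyOf_eq_toReal (hμs i), ENNReal.ofReal_toReal (entropy_toPMF_ne_top (hμs i) hi)]

lemma mul_apply (p q : PMF G) (x : G) : (p * q) x = ∑' y, p y * q (y⁻¹ * x) := by
  rw [mul_def, PMF.bind_apply]
  refine tsum_congr fun y => congrArg _ ?_
  rw [PMF.map_apply, tsum_eq_single (y⁻¹ * x) fun z hz => if_neg fun h => hz (by simp [h])]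
  simp

lemma convPow_apply (hν : IsProbMeasure ν) (n : ℕ) (x : G) :
    convPow ν n x = ((toPMF hν ^ n) x).toReal := by
  induction n generalizing x with
  | zero =>
    by_cases hx : x = 1 <;> simp [convPow, one_def, hx]
  | succ n ih =>
    rw [pow_succ', mul_apply, ENNReal.tsum_toReal_eq fun y =>
      ENNReal.mul_ne_top (PMF.apply_ne_top _ _) (PMF.apply_ne_top _ _)]
    simp only [ENNReal.toReal_mul, toReal_toPMF_apply, ← ih]
    rfl

lemma asympEntropy_eq_toReal (hν : IsProbMeasure ν) (hfin : entropy (toPMF hν) ≠ ⊤) :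
    asympEntropy ν = (asymptoticEntropy (toPMF hν)).toReal := by
  rw [asymptoticEntropy, ENNReal.toReal_iInf fun n =>
    ENNReal.div_ne_top (entropy_pow_ne_top hfin _) (by simp)]
  refine iInf_congr fun n => ?_
  rw [funext (convPow_apply hν (n + 1)), entropyOf_toReal, ENNReal.toReal_div,
    ENNReal.toReal_natCast, Nat.cast_succ]

end RealValued

end EntropyContinuity

open EntropyContinuity in
theorem entropy_continuity_general
    {G X ι : Type*} [Group G] [MetricSpace X] [MulAction G X] [IsIsometricSMul G X]
    (o : X) (hgeo : IsGeodesicSpace X)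
    (g : G) (hcon : IsContractingIsom o g) (hwpd : IsWPD o g)
    (μ : G → ℝ) (hμ : IsProbMeasure μ) (hH : HasFiniteEntropy μ)
    (hpow : ∃ n m : ℕ, 0 < n ∧ 0 < m ∧ 0 < convPow μ n (g ^ m))
    (l : Filter ι) [l.IsCountablyGenerated] (μs : ι → G → ℝ) (hμs : ∀ i, IsProbMeasure (μs i))
    (hsimple : ∀ h : G, Tendsto (fun i => μs i h) l (𝓝 (μ h)))
    (hHfin : ∀ᶠ i in l, HasFiniteEntropy (μs i))
    (hHconv : Tendsto (fun i => entropyOf (μs i)) l (𝓝 (entropyOf μ))) :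
    Tendsto (fun i => asympEntropy (μs i)) l (𝓝 (asympEntropy μ)) := by
  obtain ⟨K, hK, haxis⟩ := hcon
  obtain ⟨n, m, hn, hm, hpos⟩ := hpow
  have hc : IsContracting K (orbitMap o g) := ⟨hK, haxis⟩
  have hfin : entropy (toPMF hμ) ≠ ⊤ := entropy_toPMF_ne_top hμ hH
  have hlim := hc.tendsto_asymptoticEntropy_of_pow hgeo hwpd
    (fun x => ENNReal.tendsto_ofReal (hsimple x)) (tendsto_entropy_toPMF hμs hμ hHfin hH hHconv)
    hfin hn hm (q := toPMF hμ) (p := fun i => toPMF (hμs i))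
    (ENNReal.toReal_pos_iff.1 (hpos.trans_eq (convPow_apply hμ n _))).1.ne'
  rw [asympEntropy_eq_toReal hμ hfin]
  exact ((ENNReal.tendsto_toReal (asymptoticEntropy_ne_top hfin)).comp hlim).congr'
    (hHfin.mono fun i hi =>
      (asympEntropy_eq_toReal (hμs i) (entropy_toPMF_ne_top (hμs i) hi)).symm)

/-- Continuity of the asymptotic entropy (Theorem 1.7). -/
theorem entropy_continuity
    {G X : Type*} [Group G] [Countable G] [MetricSpace X] [MulAction G X]
    (o : X) (hgeo : IsGeodesicSpace X)
    (hiso : ∀ g : G, Isometry fun x : X => g • x)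
    (g : G) (hcon : IsContractingIsom o g) (hwpd : IsWPD o g)
    (μ : G → ℝ) (hμ : IsProbMeasure μ) (hH : HasFiniteEntropy μ)
    (hpow : ∃ n m : ℕ, 0 < n ∧ 0 < m ∧ 0 < convPow μ n (g ^ m))
    (μs : ℕ → G → ℝ) (hμs : ∀ i, IsProbMeasure (μs i))
    (hsimple : ∀ h : G, Filter.Tendsto (fun i => μs i h) Filter.atTop (𝓝 (μ h)))
    (hHfin : ∀ᶠ i in Filter.atTop, HasFiniteEntropy (μs i))
    (hHconv : Filter.Tendsto (fun i => entropyOf (μs i)) Filter.atTop (𝓝 (entropyOf μ))) :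
    Filter.Tendsto (fun i => asympEntropy (μs i)) Filter.atTop (𝓝 (asympEntropy μ)) := by
  have : IsIsometricSMul G X := ⟨hiso⟩
  exact entropy_continuity_general o hgeo g hcon hwpd μ hμ hH hpow _ μs hμs hsimple hHfin hHconv
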